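/- Let n ≥ 2 and 1 ≤ k ≤ n−1. Let u : ℝⁿ → ℝ be a smooth entire k-convex function which has quadratic growth and solves σ_k(λ(D²u(x))) = 1 for all x ∈ ℝⁿ. Assume there is a uniform constant A > 0 such that σ_{k+1}(λ(D²u(x))) ≥ −A for all x ∈ ℝⁿ. Then u is a quadratic polynomial, i.e. there exist a symmetric matrix A', a vector b ∈ ℝⁿ and c ∈ ℝ with u(x) = ½ xᵀA'x + b·x + c for all x. -/

import Mathlib

open scoped BigOperators

noncomputable section

/-- The positive orthant `Γₙ = (0,∞)ⁿ` in `ℝⁿ`. -/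
def PosOrthant (n : ℕ) : Set (Fin n → ℝ) := {lam | ∀ i, 0 < lam i}

/-- A convex invariant cone: an open cone `Γ ⊆ ℝⁿ` with vertex at the origin, `Γ ≠ ℝⁿ`,
which is convex, satisfies `Γ + Γₙ ⊆ Γ`, and is invariant under permutations of coordinates. -/
def IsConvexInvariantCone {n : ℕ} (Γ : Set (Fin n → ℝ)) : Prop :=
  IsOpen Γ ∧ Γ ≠ Set.univ ∧ Convex ℝ Γ ∧
    (∀ lam ∈ Γ, ∀ t : ℝ, 0 < t → t • lam ∈ Γ) ∧
    (∀ lam ∈ Γ, ∀ tau ∈ PosOrthant n, lam + tau ∈ Γ) ∧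
    (∀ lam ∈ Γ, ∀ σ : Equiv.Perm (Fin n), lam ∘ σ ∈ Γ)

/-- The partial derivative `∂f/∂λᵢ(λ)`. -/
def fpd {n : ℕ} (f : (Fin n → ℝ) → ℝ) (i : Fin n) (lam : Fin n → ℝ) : ℝ :=
  fderiv ℝ f lam (Pi.single i 1)

/-- A concave elliptic Hessian operator on a convex invariant cone `Γ`:
a `C²`, permutation-invariant, concave function `f` on `Γ` which is elliptic
(`∂f/∂λᵢ > 0`), positive, and positively homogeneous of degree one. -/
def IsConcaveEllipticHessianOp {n : ℕ} (Γ : Set (Fin n → ℝ)) (f : (Fin n → ℝ) → ℝ) : Prop :=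
  ContDiffOn ℝ 2 f Γ ∧ ConcaveOn ℝ Γ f ∧
    (∀ lam ∈ Γ, ∀ σ : Equiv.Perm (Fin n), f (lam ∘ σ) = f lam) ∧
    (∀ lam ∈ Γ, ∀ i, 0 < fpd f i lam) ∧
    (∀ lam ∈ Γ, 0 < f lam) ∧
    (∀ lam ∈ Γ, ∀ t : ℝ, 0 < t → f (t • lam) = t * f lam)

/-- Condition N: whenever `λ ∈ Γ` satisfies `f(λ) = 1` and `Σᵢ ∂f/∂λᵢ(λ) ≤ C` for some `C > 0`,
then `∂f/∂λᵢ(λ) ≥ 1/(N₁ C^{N₂})` for every `i`. -/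
def ConditionN {n : ℕ} (Γ : Set (Fin n → ℝ)) (f : (Fin n → ℝ) → ℝ) (N₁ N₂ : ℝ) : Prop :=
  ∀ lam ∈ Γ, f lam = 1 → ∀ C : ℝ, 0 < C → (∑ i, fpd f i lam) ≤ C →
    ∀ i, 1 / (N₁ * C ^ N₂) ≤ fpd f i lam

/-- The Hessian matrix `D²u(x)`. -/
def hessianMatrix {n : ℕ} (u : EuclideanSpace ℝ (Fin n) → ℝ) (x : EuclideanSpace ℝ (Fin n)) :
    Matrix (Fin n) (Fin n) ℝ :=
  fun i j => iteratedFDeriv ℝ 2 u x ![EuclideanSpace.single i 1, EuclideanSpace.single j 1]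

/-- The vector of eigenvalues `λ(D²u(x))` of the Hessian of `u` at `x`
(junk value `0` if the Hessian matrix fails to be symmetric). -/
def hessEigen {n : ℕ} (u : EuclideanSpace ℝ (Fin n) → ℝ) (x : EuclideanSpace ℝ (Fin n)) :
    Fin n → ℝ :=
  if h : (hessianMatrix u x).IsHermitian then h.eigenvalues else 0

/-- Condition D for a solution `u` of `F(D²u) = 1` on a set `Ω`: at every point, if an
eigenvalue `λᵢ` of `D²u` exceeds `D₁` then `∂f/∂λᵢ(λ) ⬝ λᵢ ≤ D₂`. -/
def ConditionD {n : ℕ} (f : (Fin n → ℝ) → ℝ) (u : EuclideanSpace ℝ (Fin n) → ℝ)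
    (Ω : Set (EuclideanSpace ℝ (Fin n))) (D₁ D₂ : ℝ) : Prop :=
  ∀ x ∈ Ω, ∀ i, D₁ < hessEigen u x i →
    fpd f i (hessEigen u x) * hessEigen u x i ≤ D₂

/-- The `k`-th elementary symmetric polynomial `σ_k` on `ℝⁿ`. -/
def esymmF (n k : ℕ) (lam : Fin n → ℝ) : ℝ :=
  ∑ s ∈ (Finset.univ : Finset (Fin n)).powersetCard k, ∏ i ∈ s, lam i

/-- The Gårding cone `Γ_k = {λ : σ_j(λ) > 0, j = 1,…,k}`. -/
def GammaK (n k : ℕ) : Set (Fin n → ℝ) :=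
  {lam | ∀ j : ℕ, 1 ≤ j → j ≤ k → 0 < esymmF n j lam}

/-- The cone `Γ̂_p` of vectors all of whose sums of `p` distinct coordinates are positive. -/
def GammaHat (n p : ℕ) : Set (Fin n → ℝ) :=
  {lam | ∀ s : Finset (Fin n), s.card = p → 0 < ∑ i ∈ s, lam i}

/-- The `p`-Monge–Ampère operator `M_p(λ) = ∏_{i₁<⋯<i_p} (λ_{i₁} + ⋯ + λ_{i_p})`. -/
def pMA (n p : ℕ) (lam : Fin n → ℝ) : ℝ :=
  ∏ s ∈ (Finset.univ : Finset (Fin n)).powersetCard p, ∑ i ∈ s, lam i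

/-- Quadratic growth: `u(x) ≥ C⁻¹|x|² − C` for some `C > 0`. -/
def QuadraticGrowth {n : ℕ} (u : EuclideanSpace ℝ (Fin n) → ℝ) : Prop :=
  ∃ C : ℝ, 0 < C ∧ ∀ x, C⁻¹ * ‖x‖ ^ 2 - C ≤ u x

/-- `u` is a quadratic polynomial: `u(x) = ½ xᵀAx + b·x + c` with `A` symmetric. -/
def IsQuadraticPolynomial {n : ℕ} (u : EuclideanSpace ℝ (Fin n) → ℝ) : Prop :=
  ∃ (A : Matrix (Fin n) (Fin n) ℝ) (b : Fin n → ℝ) (c : ℝ), A.IsSymm ∧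
    ∀ x, u x = (1 / 2) * (∑ i, ∑ j, A i j * x i * x j) + (∑ i, b i * x i) + c

open scoped BigOperators
noncomputable section

/-! ### Second derivative test -/

lemma second_deriv_nonpos {f f' : ℝ → ℝ} {c : ℝ} (hf : ∀ᶠ t in nhds 0, HasDerivAt f (f' t) t)
    (hf' : HasDerivAt f' c 0) (hmax : IsLocalMax f 0) : f' 0 = 0 ∧ c ≤ 0 := by
  have h0 : f' 0 = 0 := by
    have h1 := hmax.hasDerivAt_eq_zero hf.self_of_nhds
    exact h1
  refine ⟨h0, ?_⟩
  by_contra hc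
  push Not at hc
  have hd : deriv f =ᶠ[nhds 0] f' := by
    filter_upwards [hf] with t ht using ht.deriv
  have hdd : deriv (deriv f) 0 = c := by
    rw [hd.deriv_eq]; exact hf'.deriv
  have hmin : IsLocalMin f 0 := by
    apply isLocalMin_of_deriv_deriv_pos
    · rw [hdd]; exact hc
    · rw [hd.self_of_nhds]; exact h0
    · exact hf.self_of_nhds.continuousAt
  have hconst : f =ᶠ[nhds 0] fun _ => f 0 := by
    filter_upwards [hmin, hmax] with t h1 h2 using le_antisymm h2 h1
  have h3 : deriv f =ᶠ[nhds 0] fun _ => 0 := by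
    have := hconst.deriv
    simpa using this
  have : deriv (deriv f) 0 = 0 := by rw [h3.deriv_eq]; simp
  linarith

/-! ### Newton's inequality -/

open Polynomial in
lemma splits_laguerre {p : ℝ[X]} (hp : p.Splits) (x : ℝ) :
    p.eval x * p.derivative.derivative.eval x ≤ (p.derivative.eval x) ^ 2 := by
  obtain ⟨m, hm⟩ := splits_iff_exists_multiset.1 hp
  have key : ∀ m : Multiset ℝ, ((m.map (X - C ·)).prod).eval x *
      ((m.map (X - C ·)).prod).derivative.derivative.eval x ≤
      (((m.map (X - C ·)).prod).derivative.eval x) ^ 2 := by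
    intro m
    induction m using Multiset.induction with
    | empty => simp
    | cons a m ih =>
      simp only [Multiset.map_cons, Multiset.prod_cons]
      set g := (m.map (X - C ·)).prod
      simp only [derivative_mul, derivative_add, derivative_sub, derivative_X, derivative_C, eval_mul, eval_add, eval_sub,
        eval_X, eval_C, sub_zero, derivative_one, eval_one, one_mul, zero_mul, eval_zero, zero_add]
      nlinarith [mul_nonneg (sq_nonneg (x - a)) (sub_nonneg.2 ih), sq_nonneg (g.eval x)]
  rw [hm]
  simp only [derivative_mul, derivative_C, zero_mul, zero_add, eval_mul, eval_C]
  nlinarith [mul_nonneg (sq_nonneg p.leadingCoeff) (sub_nonneg.2 (key m))]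

open Polynomial in
lemma splits_derivative {p : ℝ[X]} (hp : p.Splits) : p.derivative.Splits := by
  rw [splits_iff_card_roots] at hp ⊢
  have h1 := card_roots_le_derivative p
  have h2 := p.derivative.card_roots'
  have h3 := natDegree_derivative_le p
  rcases Nat.eq_zero_or_pos p.natDegree with h | h
  · omega
  · omega

open Polynomial in
lemma splits_iterate_derivative {p : ℝ[X]} (hp : p.Splits) (k : ℕ) :
    (derivative^[k] p).Splits := by
  induction k with
  | zero => exact hp
  | succ k ih => rw [Function.iterate_succ_apply']; exact splits_derivative ih

open Polynomial in
lemma newton_coeff {p : ℝ[X]} (hp : p.Splits) (k : ℕ) :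
    p.coeff k * p.coeff (k + 2) ≤ p.coeff (k + 1) ^ 2 := by
  have h := splits_laguerre (splits_iterate_derivative hp k) 0
  rw [← Function.iterate_succ_apply' derivative k, ← Function.iterate_succ_apply' derivative (k+1)] at h
  simp only [← coeff_zero_eq_eval_zero, coeff_iterate_derivative, zero_add] at h
  simp only [Nat.descFactorial_self, nsmul_eq_mul, Nat.factorial_succ, Nat.succ_eq_add_one] at h
  push_cast at h
  have hk : (0:ℝ) < (k.factorial : ℝ) := by exact_mod_cast k.factorial_pos
  have hk2 : (0:ℝ) < (k.factorial : ℝ)^2 := by positivity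
  have h' : ((k:ℝ)+2) * (p.coeff k * p.coeff (k + 2)) ≤ ((k:ℝ)+1) * p.coeff (k + 1) ^ 2 := by
    have h5 : (k.factorial:ℝ)^2 * ((k+1) * (((k:ℝ)+2) * (p.coeff k * p.coeff (k + 2)))) ≤
      (k.factorial:ℝ)^2 * ((k+1) * (((k:ℝ)+1) * p.coeff (k + 1) ^ 2)) := by
      have e1 : k + 1 + 1 = k + 2 := rfl
      rw [e1] at h
      ring_nf at h ⊢
      linarith
    have h6 := le_of_mul_le_mul_left h5 hk2
    exact le_of_mul_le_mul_left h6 (by positivity)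
  have hk0 : (0:ℝ) ≤ k := Nat.cast_nonneg k
  by_contra hc
  push Not at hc
  nlinarith [sq_nonneg (p.coeff (k+1)), mul_nonneg hk0 (sub_nonneg.2 hc.le)]

/-! ### Elementary symmetric polynomials over finsets -/

section ES
variable {ι : Type*} [DecidableEq ι]

open Polynomial in
def gp (s : Finset ι) (l : ι → ℝ) : ℝ[X] := ∏ i ∈ s, (1 + C (l i) * X)

def es (s : Finset ι) (k : ℕ) (l : ι → ℝ) : ℝ := (gp s l).coeff k

open Polynomial in
lemma gp_splits (s : Finset ι) (l : ι → ℝ) : (gp s l).Splits := by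
  apply Splits.prod
  intro i _
  apply Splits.of_natDegree_le_one
  compute_degree

lemma es_newton (s : Finset ι) (k : ℕ) (l : ι → ℝ) :
    es s k l * es s (k + 2) l ≤ es s (k + 1) l ^ 2 := newton_coeff (gp_splits s l) k

open Polynomial in
lemma es_insert_succ {a : ι} {s : Finset ι} (h : a ∉ s) (k : ℕ) (l : ι → ℝ) :
    es (insert a s) (k + 1) l = es s (k + 1) l + l a * es s k l := by
  unfold es gp
  rw [Finset.prod_insert h, add_mul, one_mul, coeff_add, mul_assoc, coeff_C_mul, coeff_X_mul]

lemma es_erase {i : ι} {s : Finset ι} (h : i ∈ s) (k : ℕ) (l : ι → ℝ) :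
    es s (k + 1) l = es (s.erase i) (k + 1) l + l i * es (s.erase i) k l := by
  conv_lhs => rw [← Finset.insert_erase h]
  exact es_insert_succ (Finset.notMem_erase i s) k l

open Polynomial in
@[simp] lemma es_zero (s : Finset ι) (l : ι → ℝ) : es s 0 l = 1 := by
  unfold es gp
  rw [coeff_zero_eq_eval_zero, eval_prod]
  simp

@[simp] lemma es_empty (k : ℕ) (l : ι → ℝ) : es (∅ : Finset ι) (k + 1) l = 0 := by
  unfold es gp
  simp [Polynomial.coeff_one]

lemma es_eq_sum (s : Finset ι) (k : ℕ) (l : ι → ℝ) :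
    es s k l = ∑ t ∈ s.powersetCard k, ∏ i ∈ t, l i := by
  induction s using Finset.induction_on generalizing k with
  | empty =>
    cases k with
    | zero => simp
    | succ k => rw [Finset.powersetCard_eq_empty.2 (by simp)]; simp
  | insert a s ha ih =>
    cases k with
    | zero => simp
    | succ k =>
      rw [es_insert_succ ha, Finset.powersetCard_succ_insert ha, Finset.sum_union, ih, ih]
      · congr 1
        rw [Finset.sum_image, Finset.mul_sum]
        · apply Finset.sum_congr rfl
          intro t ht
          rw [Finset.prod_insert]
          intro h
          exact ha ((Finset.mem_powersetCard.1 ht).1 h)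
        · intro t ht t' ht' h
          have h1 : a ∉ t := fun h => ha ((Finset.mem_powersetCard.1 ht).1 h)
          have h2 : a ∉ t' := fun h => ha ((Finset.mem_powersetCard.1 ht').1 h)
          rw [← Finset.erase_insert h1, ← Finset.erase_insert h2, h]
      · rw [Finset.disjoint_left]
        intro t ht h
        obtain ⟨t', _, rfl⟩ := Finset.mem_image.1 h
        exact ha ((Finset.mem_powersetCard.1 ht).1 (Finset.mem_insert_self a t'))

lemma es_sum_mul (s : Finset ι) (k : ℕ) (l : ι → ℝ) :
    ∑ i ∈ s, l i * es (s.erase i) k l = (k + 1) * es s (k + 1) l := by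
  induction s using Finset.induction_on generalizing k with
  | empty => simp
  | insert a s ha ih =>
    rw [Finset.sum_insert ha, Finset.erase_insert ha]
    have h1 : ∀ i ∈ s, (insert a s).erase i = insert a (s.erase i) := by
      intro i hi
      rw [Finset.erase_insert_of_ne]
      rintro rfl
      exact ha hi
    have h2 : ∀ i ∈ s, a ∉ s.erase i := fun i _ h => ha (Finset.mem_of_mem_erase h)
    cases k with
    | zero =>
      have := ih 0
      simp at this
      rw [es_insert_succ ha]
      simp [this]
      ring
    | succ k =>
      have : ∑ i ∈ s, l i * es ((insert a s).erase i) (k + 1) l =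
          ∑ i ∈ s, l i * es (s.erase i) (k + 1) l + l a * ∑ i ∈ s, l i * es (s.erase i) k l := by
        rw [Finset.mul_sum, ← Finset.sum_add_distrib]
        apply Finset.sum_congr rfl
        intro i hi
        rw [h1 i hi, es_insert_succ (h2 i hi)]
        ring
      rw [this, ih, ih, es_insert_succ ha]
      push_cast
      ring

lemma es_sum_erase (s : Finset ι) (k : ℕ) (l : ι → ℝ) :
    ∑ i ∈ s, es (s.erase i) k l = ((s.card : ℝ) - k) * es s k l := by
  cases k with
  | zero => simp
  | succ k =>
    have h1 : ∀ i ∈ s, es (s.erase i) (k+1) l = es s (k+1) l - l i * es (s.erase i) k l := by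
      intro i hi
      rw [es_erase hi]; ring
    rw [Finset.sum_congr rfl h1, Finset.sum_sub_distrib, es_sum_mul]
    simp
    ring

lemma es_smul (s : Finset ι) (k : ℕ) (c : ℝ) (l : ι → ℝ) :
    es s k (fun i => c * l i) = c ^ k * es s k l := by
  rw [es_eq_sum, es_eq_sum, Finset.mul_sum]
  apply Finset.sum_congr rfl
  intro t ht
  rw [Finset.prod_mul_distrib, Finset.prod_const, (Finset.mem_powersetCard.1 ht).2]

lemma es_congr {s : Finset ι} {k : ℕ} {l m : ι → ℝ} (h : ∀ i ∈ s, l i = m i) :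
    es s k l = es s k m := by
  unfold es gp
  rw [Finset.prod_congr rfl]
  intro i hi
  rw [h i hi]

lemma es_one (s : Finset ι) (l : ι → ℝ) : es s 1 l = ∑ i ∈ s, l i := by
  have := es_sum_mul s 0 l
  simp at this
  exact this.symm

lemma es_abs_le (s : Finset ι) (k : ℕ) (l : ι → ℝ) (M : ℝ) (hM : 0 ≤ M) (h : ∀ i, |l i| ≤ M) :
    |es s k l| ≤ (1 + M) ^ s.card := by
  induction s using Finset.induction_on generalizing k with
  | empty =>
    cases k <;> simp
  | insert a s ha ih =>
    cases k with
    | zero => simp; exact one_le_pow₀ (by linarith)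
    | succ k =>
      rw [es_insert_succ ha, Finset.card_insert_of_notMem ha, pow_succ]
      calc |es s (k+1) l + l a * es s k l| ≤ |es s (k+1) l| + |l a| * |es s k l| := by
            rw [← abs_mul]; exact abs_add_le _ _
        _ ≤ (1 + M) ^ s.card + M * (1 + M) ^ s.card := by
            gcongr
            · exact ih _
            · exact h a
            · exact ih _
        _ = _ := by ring

/-! ### Gårding cones -/

def Gam (s : Finset ι) (k : ℕ) (l : ι → ℝ) : Prop := ∀ j ≤ k, 0 < es s j l

lemma Gam.mono {s : Finset ι} {k j : ℕ} {l : ι → ℝ} (h : Gam s k l) (hj : j ≤ k) : Gam s j l :=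
  fun i hi => h i (hi.trans hj)

lemma gam_zero (s : Finset ι) (l : ι → ℝ) : Gam s 0 l := by
  intro j hj
  obtain rfl : j = 0 := by omega
  simp

lemma Gam.succ {s : Finset ι} {k : ℕ} {l : ι → ℝ} (h : Gam s k l) (h2 : 0 < es s (k+1) l) :
    Gam s (k+1) l := by
  intro j hj
  rcases Nat.lt_or_ge j (k+1) with h' | h'
  · exact h j (by omega)
  · obtain rfl : j = k + 1 := by omega
    exact h2

lemma Gam.erase {s : Finset ι} {k : ℕ} {l : ι → ℝ} (h : Gam s (k + 1) l) {i : ι} (hi : i ∈ s) :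
    Gam (s.erase i) k l := by
  induction k with
  | zero => exact gam_zero _ _
  | succ k ih =>
    have ih' := ih (h.mono (by omega))
    refine ih'.succ ?_
    by_contra hc
    push Not at hc
    have h1 := h (k+2) le_rfl
    have h2 := h (k+1) (by omega)
    rw [es_erase hi] at h1 h2
    have h3 := ih' k le_rfl
    have h4 := es_newton (s.erase i) k l
    set a := es (s.erase i) k l
    set b := es (s.erase i) (k+1) l
    set c := es (s.erase i) (k+2) l
    have e1 : k + 1 + 1 = k + 2 := rfl
    have h1' : 0 < c + l i * b := h1
    -- a * c > - l a b ≥ b^2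
    have h5 : a * c > a * (-(l i * b)) := by
      apply mul_lt_mul_of_pos_left _ h3; linarith
    nlinarith [mul_nonneg (neg_nonneg.2 hc) h2.le]

lemma Gam.ratio {s : Finset ι} {k : ℕ} {l : ι → ℝ} (h : Gam s k l) :
    es s (k + 1) l ≤ es s 1 l * es s k l := by
  induction k with
  | zero => simp
  | succ k ih =>
    have h1 := ih (h.mono (by omega))
    have h2 := es_newton s k l
    have h3 := h k (by omega)
    have h4 := h (k+1) le_rfl
    have : es s k l * es s (k+2) l ≤ es s k l * (es s 1 l * es s (k+1) l) := by
      calc _ ≤ _ := h2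
        _ = es s (k+1) l * es s (k+1) l := by ring
        _ ≤ (es s 1 l * es s k l) * es s (k+1) l := by gcongr
        _ = _ := by ring
    exact le_of_mul_le_mul_left this h3

/-- `σ₁ σ_{k+1}^{k-1} ≤ σ_k^k`, written with `k = m + 1`. -/
lemma Gam.maclaurin {s : Finset ι} {m : ℕ} {l : ι → ℝ} (h : Gam s (m + 2) l) :
    es s 1 l * es s (m + 2) l ^ m ≤ es s (m + 1) l ^ (m + 1) := by
  induction m with
  | zero => simp
  | succ m ih =>
    have h1 := ih (h.mono (by omega))
    have h2 := es_newton s (m+1) l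
    have p1 := h (m+1) (by omega)
    have p2 := h (m+2) (by omega)
    have p3 := h (m+3) (by omega)
    have p0 := h 1 (by omega)
    have hp : 0 < es s (m+1) l ^ (m+1) := by positivity
    refine le_of_mul_le_mul_left ?_ hp
    have h5 : (es s (m+1) l * es s (m+1+2) l)^(m+1) ≤ (es s (m+1+1) l ^2)^(m+1) := by
      apply pow_le_pow_left₀ _ h2
      exact mul_nonneg p1.le p3.le
    calc es s (m+1) l ^ (m+1) * (es s 1 l * es s (m+1+2) l ^ (m+1))
        = es s 1 l * (es s (m+1) l * es s (m+1+2) l)^(m+1) := by rw [mul_pow]; ring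
      _ ≤ es s 1 l * (es s (m+1+1) l ^2)^(m+1) := by gcongr
      _ = (es s 1 l * es s (m+2) l ^ m) * es s (m+2) l ^(m+2) := by
          have e1 : m + 1 + 1 = m + 2 := rfl
          rw [e1]; ring
      _ ≤ es s (m+1) l ^ (m+1) * es s (m+2) l ^ (m+2) := by gcongr
      _ = _ := rfl

lemma q_super (k : ℕ) : ∀ (s : Finset ι) (x y : ι → ℝ), Gam s k x → Gam s k y →
    Gam s k (x + y) ∧
    es s (k+1) x / es s k x + es s (k+1) y / es s k y ≤ es s (k+1) (x+y) / es s k (x+y) := by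
  induction k with
  | zero =>
    intro s x y _ _
    refine ⟨gam_zero _ _, ?_⟩
    simp [es_one, Finset.sum_add_distrib]
  | succ k ih =>
    intro s x y hx hy
    have hxy : Gam s (k+1) (x+y) := by
      obtain ⟨h1, h2⟩ := ih s x y (hx.mono (by omega)) (hy.mono (by omega))
      refine h1.succ ?_
      have hx1 := div_pos (hx (k+1) le_rfl) (hx k (by omega))
      have hy1 := div_pos (hy (k+1) le_rfl) (hy k (by omega))
      have : 0 < es s (k+1) (x+y) / es s k (x+y) := by linarith
      have h3 := h1 k le_rfl
      exact (div_pos_iff_of_pos_right h3).1 this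
    refine ⟨hxy, ?_⟩
    -- formula
    have formula : ∀ z : ι → ℝ, Gam s (k+1) z → ((k:ℝ)+2) * (es s (k+2) z / es s (k+1) z) =
        ∑ i ∈ s, (z i - z i ^ 2 / (z i + es (s.erase i) (k+1) z / es (s.erase i) k z)) := by
      intro z hz
      have h1 := es_sum_mul s (k+1) z
      have hp := hz (k+1) le_rfl
      have h2 : ((k:ℝ)+2) * (es s (k+2) z / es s (k+1) z) =
          (∑ i ∈ s, z i * es (s.erase i) (k+1) z) / es s (k+1) z := by
        rw [h1]; push_cast
        have e1 : k + 1 + 1 = k + 2 := rfl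
        rw [e1]
        ring
      rw [h2, Finset.sum_div]
      apply Finset.sum_congr rfl
      intro i hi
      have hq := (hz.erase hi) k le_rfl
      have he := es_erase hi k z
      have h3 : z i + es (s.erase i) (k+1) z / es (s.erase i) k z = es s (k+1) z / es (s.erase i) k z := by
        rw [he]; field_simp; ring
      rw [h3, div_div_eq_mul_div]
      have h4 : es (s.erase i) (k+1) z = es s (k+1) z - z i * es (s.erase i) k z := by rw [he]; ring
      rw [h4]
      field_simp
    have key : ∀ i ∈ s, (x i - x i ^ 2 / (x i + es (s.erase i) (k+1) x / es (s.erase i) k x)) +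
        (y i - y i ^ 2 / (y i + es (s.erase i) (k+1) y / es (s.erase i) k y)) ≤
        ((x+y) i - (x+y) i ^ 2 / ((x+y) i + es (s.erase i) (k+1) (x+y) / es (s.erase i) k (x+y))) := by
      intro i hi
      have pos : ∀ z : ι → ℝ, Gam s (k+1) z →
          0 < z i + es (s.erase i) (k+1) z / es (s.erase i) k z := by
        intro z hz
        have hq := (hz.erase hi) k le_rfl
        have he := es_erase hi k z
        have h3 : z i + es (s.erase i) (k+1) z / es (s.erase i) k z = es s (k+1) z / es (s.erase i) k z := by
          rw [he]; field_simp; ring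
        rw [h3]
        exact div_pos (hz (k+1) le_rfl) hq
      have hX := pos x hx
      have hY := pos y hy
      have hZ := pos (x+y) hxy
      obtain ⟨_, h2⟩ := ih (s.erase i) x y (hx.erase hi) (hy.erase hi)
      set X := x i + es (s.erase i) (k+1) x / es (s.erase i) k x
      set Y := y i + es (s.erase i) (k+1) y / es (s.erase i) k y
      set Z := (x+y) i + es (s.erase i) (k+1) (x+y) / es (s.erase i) k (x+y)
      have hXYZ : X + Y ≤ Z := by
        simp only [X, Y, Z, Pi.add_apply]
        linarith
      have h5 : (x+y) i ^ 2 / Z ≤ (x+y) i ^2 / (X + Y) := by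
        gcongr
      have h6 : (x+y) i ^2 / (X + Y) ≤ x i ^ 2 / X + y i ^ 2 / Y := by
        rw [Pi.add_apply, div_add_div _ _ hX.ne' hY.ne', div_le_div_iff₀ (by positivity) (by positivity)]
        nlinarith [sq_nonneg (x i * Y - y i * X), hX, hY]
      have : (x+y) i = x i + y i := rfl
      linarith
    have hsum := Finset.sum_le_sum key
    rw [Finset.sum_add_distrib, ← formula x hx, ← formula y hy, ← formula (x+y) hxy] at hsum
    have hk : (0:ℝ) < (k:ℝ) + 2 := by positivity
    rw [← mul_add] at hsum
    exact le_of_mul_le_mul_left hsum hk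

lemma es_midpoint (k : ℕ) (s : Finset ι) (x y : ι → ℝ) (hx : Gam s k x) (hy : Gam s k y) :
    4 ^ k * (es s k x * es s k y) ≤ es s k (x + y) ^ 2 := by
  induction k with
  | zero => simp
  | succ k ih =>
    have h1 := ih (hx.mono (by omega)) (hy.mono (by omega))
    obtain ⟨h2, h3⟩ := q_super k s x y (hx.mono (by omega)) (hy.mono (by omega))
    have ax := hx k (by omega)
    have ay := hy k (by omega)
    have az := h2 k le_rfl
    have bx := hx (k+1) le_rfl
    have bY := hy (k+1) le_rfl
    have hqx := div_pos bx ax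
    have hqy := div_pos bY ay
    have ex : es s (k+1) x = es s (k+1) x / es s k x * es s k x := by field_simp
    have ey : es s (k+1) y = es s (k+1) y / es s k y * es s k y := by field_simp
    have ez : es s (k+1) (x+y) = es s (k+1) (x+y) / es s k (x+y) * es s k (x+y) := by field_simp
    rw [ex, ey, ez]
    set p := es s (k+1) x / es s k x
    set q := es s (k+1) y / es s k y
    set r := es s (k+1) (x+y) / es s k (x+y)
    have h4 : 4 * (p * q) ≤ r ^ 2 := by nlinarith [sq_nonneg (p - q)]
    calc (4:ℝ)^(k+1) * (p * es s k x * (q * es s k y)) = (4 * (p * q)) * (4^k * (es s k x * es s k y)) := by ring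
      _ ≤ r^2 * es s k (x+y)^2 := by gcongr
      _ = _ := by ring

lemma es_hasDerivAt (s : Finset ι) (k : ℕ) (l ξ : ι → ℝ) (t : ℝ) :
    HasDerivAt (fun t => es s (k+1) (fun i => l i + t * ξ i))
      (∑ i ∈ s, ξ i * es (s.erase i) k (fun i => l i + t * ξ i)) t := by
  induction s using Finset.induction_on generalizing k with
  | empty => simpa using hasDerivAt_const t (0:ℝ)
  | insert a s ha ih =>
    rw [Finset.sum_insert ha, Finset.erase_insert ha]
    have h1 : ∀ i ∈ s, (insert a s).erase i = insert a (s.erase i) := by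
      intro i hi
      rw [Finset.erase_insert_of_ne]
      rintro rfl
      exact ha hi
    have h2 : ∀ i ∈ s, a ∉ s.erase i := fun i _ h => ha (Finset.mem_of_mem_erase h)
    have ht : HasDerivAt (fun t : ℝ => l a + t * ξ a) (ξ a) t := by
      simpa using ((hasDerivAt_id t).mul_const (ξ a)).const_add (l a)
    simp only [es_insert_succ ha]
    cases k with
    | zero =>
      have := (ih 0).add (ht.mul_const (1:ℝ))
      simp at this ⊢
      refine HasDerivAt.congr_deriv this ?_
      ring
    | succ k =>
      have := (ih (k+1)).add (ht.mul (ih k))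
      refine HasDerivAt.congr_deriv this ?_
      have e : ∑ i ∈ s, ξ i * es ((insert a s).erase i) (k + 1) (fun i => l i + t * ξ i) =
          ∑ i ∈ s, ξ i * es (s.erase i) (k + 1) (fun i => l i + t * ξ i) +
          (l a + t * ξ a) * ∑ i ∈ s, ξ i * es (s.erase i) k (fun i => l i + t * ξ i) := by
        rw [Finset.mul_sum, ← Finset.sum_add_distrib]
        apply Finset.sum_congr rfl
        intro i hi
        rw [h1 i hi, es_insert_succ (h2 i hi)]
        ring
      rw [e]
      ring

/-- Quasi-concavity of `σ_{k+2}`. -/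
lemma es_quasiconcave (s : Finset ι) (k : ℕ) (l ξ : ι → ℝ) (hl : Gam s (k+2) l)
    (htan : ∑ i ∈ s, ξ i * es (s.erase i) (k+1) l = 0) :
    ∑ i ∈ s, ∑ j ∈ s.erase i, ξ i * ξ j * es ((s.erase i).erase j) k l ≤ 0 := by
  set f : ℝ → ℝ := fun t => es s (k+2) (fun i => l i + t * ξ i) with hf
  set f' : ℝ → ℝ := fun t => ∑ i ∈ s, ξ i * es (s.erase i) (k+1) (fun i => l i + t * ξ i) with hf'
  set c := ∑ i ∈ s, ∑ j ∈ s.erase i, ξ i * ξ j * es ((s.erase i).erase j) k l with hc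
  have d1 : ∀ t, HasDerivAt f (f' t) t := fun t => es_hasDerivAt s (k+1) l ξ t
  have l0 : (fun i => l i + 0 * ξ i) = l := by ext i; simp
  have d2 : HasDerivAt f' c 0 := by
    have : ∀ i ∈ s, HasDerivAt (fun t => ξ i * es (s.erase i) (k+1) (fun i => l i + t * ξ i))
        (ξ i * ∑ j ∈ s.erase i, ξ j * es ((s.erase i).erase j) k l) 0 := by
      intro i hi
      have := es_hasDerivAt (s.erase i) k l ξ 0
      rw [l0] at this
      exact this.const_mul (ξ i)
    have h := HasDerivAt.fun_sum this
    refine HasDerivAt.congr_deriv h ?_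
    rw [hc]
    apply Finset.sum_congr rfl
    intro i hi
    rw [Finset.mul_sum]
    apply Finset.sum_congr rfl
    intro j hj
    ring
  have f'0 : f' 0 = 0 := by simp only [hf', l0]; exact htan
  have f0 : f 0 = es s (k+2) l := by simp only [hf, l0]
  have fpos : 0 < f 0 := by rw [f0]; exact hl _ le_rfl
  -- Gam for small t
  have hgam : ∀ᶠ t in nhds (0:ℝ), Gam s (k+2) (fun i => l i + t * ξ i) := by
    have : ∀ j ∈ Finset.range (k+3), ∀ᶠ t in nhds (0:ℝ), 0 < es s j (fun i => l i + t * ξ i) := by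
      intro j hj
      cases j with
      | zero => simp
      | succ j =>
        have hcont := (es_hasDerivAt s j l ξ 0).continuousAt
        refine continuousAt_const.eventually_lt hcont ?_
        simp only [l0]
        exact hl _ (by simp at hj; omega)
    rw [← Filter.eventually_all_finset] at this
    filter_upwards [this] with t ht j hj
    exact ht j (by simp; omega)
  have hneg : Filter.Tendsto (fun t : ℝ => -t) (nhds 0) (nhds 0) := by
    simpa using (continuous_neg (G := ℝ)).tendsto 0
  have hmax : IsLocalMax (fun t => f t * f (-t)) 0 := by
    filter_upwards [hgam, hneg.eventually hgam] with t h1 h2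
    have h3 := es_midpoint (k+2) s _ _ h1 h2
    have h4 : ((fun i => l i + t * ξ i) + fun i => l i + -t * ξ i) = fun i => 2 * l i := by
      ext i; simp; ring
    rw [h4, es_smul] at h3
    simp only [neg_zero]
    rw [f0]
    simp only [hf]
    have e : ((2:ℝ)^(k+2) * es s (k+2) l)^2 = 4^(k+2) * (es s (k+2) l * es s (k+2) l) := by
      rw [mul_pow, ← pow_mul, mul_comm (k+2) 2, pow_mul]; norm_num; ring
    rw [e] at h3
    exact le_of_mul_le_mul_left h3 (by positivity)
  have dn : ∀ t, HasDerivAt (fun t => f (-t)) (-f' (-t)) t := by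
    intro t
    have := (d1 (-t)).scomp t (hasDerivAt_neg t)
    simpa [Function.comp_def] using this
  have dn' : HasDerivAt (fun t => -f' (-t)) c 0 := by
    have h0 : HasDerivAt f' c (-0) := by simpa using d2
    have := (h0.scomp 0 (hasDerivAt_neg (0:ℝ))).fun_neg
    simpa [Function.comp_def] using this
  have := second_deriv_nonpos (f := fun t => f t * f (-t))
    (f' := fun t => f' t * f (-t) + f t * (-f' (-t)))
    (c := c * f (-0) + f' 0 * (-f' (-0)) + (f' 0 * (-f' (-0)) + f 0 * c))
    (Filter.Eventually.of_forall fun t => (d1 t).mul (dn t))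
    ((d2.mul (dn 0)).add ((d1 0).mul dn')) hmax
  have h2 := this.2
  simp only [neg_zero, f'0] at h2
  by_contra hcc
  push Not at hcc
  nlinarith [mul_pos hcc fpos]

end ES
end

open scoped BigOperators
noncomputable section
section ES2
variable {ι : Type*} [DecidableEq ι]

lemma condD {s : Finset ι} {k : ℕ} {l : ι → ℝ} {A : ℝ} {i : ι} (hi : i ∈ s)
    (h1 : es s (k+1) l = 1) (hA : 0 < A) (h2 : -A ≤ es s (k+2) l)
    (hl : 2 * A ≤ l i) : l i * es (s.erase i) k l ≤ 2 := by
  have e1 := es_erase hi k l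
  have e2 := es_erase hi (k+1) l
  have hn := es_newton (s.erase i) k l
  rw [h1] at e1
  rw [show k + 1 + 1 = k + 2 from rfl] at e2
  rw [e2] at h2
  generalize es (s.erase i) k l = g at *
  generalize es (s.erase i) (k+1) l = b at *
  generalize es (s.erase i) (k+2) l = c at *
  generalize l i = L at *
  by_contra hcc
  push Not at hcc
  have hL : 0 < L := by linarith
  have hb : b < -1 := by linarith
  have h3 : (g * c) * L ≤ b^2 * L := mul_le_mul_of_nonneg_right hn hL.le
  have h4 : (L * g) * (-A - L * b) ≤ (L * g) * c := mul_le_mul_of_nonneg_left (by linarith) (by linarith)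
  have h5 : L * g = 1 - b := by linarith
  have h6 : (1 - b) * (-A - L * b) ≤ b^2 * L := by rw [← h5]; nlinarith
  nlinarith

lemma le_es_one {s : Finset ι} {m : ℕ} {l : ι → ℝ} (h : Gam s (m+2) l) {i : ι} (hi : i ∈ s) :
    l i ≤ es s 1 l := by
  have := (h.mono (show 2 ≤ m + 2 by omega)).erase hi 1 le_rfl
  have e := es_erase hi 0 l
  simp at e
  linarith

lemma es_one_le_pow {s : Finset ι} {m : ℕ} {l : ι → ℝ} (h : Gam s (m+2) l)
    (h1 : es s (m+2) l = 1) : es s 1 l ≤ es s (m+1) l ^ (m+1) := by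
  have := h.maclaurin
  simpa [h1] using this

lemma sum_G_ge {s : Finset ι} {m : ℕ} {l : ι → ℝ} (h : Gam s (m+2) l) (hc : m + 2 ≤ s.card) :
    es s (m+1) l ≤ ∑ i ∈ s, es (s.erase i) (m+1) l := by
  rw [es_sum_erase]
  have h1 := h (m+1) (by omega)
  have h2 : ((m+2:ℕ):ℝ) ≤ s.card := by exact_mod_cast hc
  push_cast at h2 ⊢
  nlinarith

lemma le_sum_G_pow {s : Finset ι} {m : ℕ} {l : ι → ℝ} (h : Gam s (m+2) l)
    (h1 : es s (m+2) l = 1) (hc : m + 2 ≤ s.card) {i : ι} (hi : i ∈ s) :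
    l i ≤ (∑ i ∈ s, es (s.erase i) (m+1) l) ^ (m+1) := by
  have a := le_es_one h hi
  have b := es_one_le_pow h h1
  have c := pow_le_pow_left₀ (h (m+1) (by omega)).le (sum_G_ge h hc) (m+1)
  linarith

lemma es_sum_sq {s : Finset ι} (k : ℕ) (l : ι → ℝ) :
    ∑ j ∈ s, l j ^ 2 * es (s.erase j) k l
      = es s 1 l * es s (k+1) l - (k+2) * es s (k+2) l := by
  have h1 : ∀ j ∈ s, l j ^ 2 * es (s.erase j) k l
      = l j * es s (k+1) l - l j * es (s.erase j) (k+1) l := by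
    intro j hj
    rw [es_erase hj k l]; ring
  rw [Finset.sum_congr rfl h1, Finset.sum_sub_distrib, ← Finset.sum_mul, es_sum_mul, es_one]
  push_cast; ring

lemma G_pos {s : Finset ι} {k : ℕ} {l : ι → ℝ} (h : Gam s (k+1) l) {i : ι} (hi : i ∈ s) :
    0 < es (s.erase i) k l := h.erase hi k le_rfl

lemma neg_bound {s : Finset ι} {m : ℕ} {l : ι → ℝ} {A : ℝ} (hA : 0 < A) (h : Gam s (m+2) l)
    (h1 : es s (m+2) l = 1) (h2 : -A ≤ es s (m+3) l) {i i1 : ι} (hi : i ∈ s) (hi1 : i1 ∈ s)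
    (hmax : ∀ j ∈ s, l j ≤ l i1) (hbig : 16 * (s.card + (m+3) * A) ≤ l i1) :
    - (l i1 / 4) ≤ l i := by
  by_contra hcc
  push Not at hcc
  have hcard : (1:ℝ) ≤ s.card := by
    exact_mod_cast Finset.card_pos.2 ⟨i, hi⟩
  have hmA : 0 < (m+3) * A := by positivity
  have hL1 : 1 ≤ l i1 := by linarith
  have hneg : l i < 0 := by linarith
  have e := es_sum_sq (s := s) (m+1) l
  have hle : l i ^ 2 * es (s.erase i) (m+1) l ≤ ∑ j ∈ s, l j ^ 2 * es (s.erase j) (m+1) l :=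
    Finset.single_le_sum (f := fun j => l j ^ 2 * es (s.erase j) (m+1) l)
      (fun j hj => mul_nonneg (sq_nonneg _) (G_pos h hj).le) hi
  have hG : 1 ≤ es (s.erase i) (m+1) l := by
    have e1 := es_erase hi m l
    have p1 := h.erase hi m (by omega)
    have a := le_es_one h hi1
    have b := es_one_le_pow h h1
    have c : 1 ≤ es s (m+1) l := by
      by_contra hh
      push Not at hh
      have := pow_lt_one₀ (h (m+1) (by omega)).le hh (show m+1 ≠ 0 by omega)
      linarith
    nlinarith
  have hs1 : es s 1 l ≤ s.card * l i1 := by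
    rw [es_one]
    have := Finset.sum_le_card_nsmul s l (l i1) hmax
    simpa using this
  rw [h1] at e
  push_cast at e
  have h3 : l i ^ 2 ≤ l i ^ 2 * es (s.erase i) (m+1) l := le_mul_of_one_le_right (sq_nonneg _) hG
  have h4 : l i ^2 ≤ s.card * l i1 + (m+3) * A := by
    have : (m+3) * (-A) ≤ (m+3) * es s (m+3) l := mul_le_mul_of_nonneg_left h2 (by positivity)
    have e' : es s (m+1+2) l = es s (m+3) l := rfl
    rw [e'] at e
    linarith
  have h5 : (l i1 / 4)^2 < l i ^2 := by nlinarith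
  nlinarith

lemma ellip_low {s : Finset ι} {k : ℕ} {l : ι → ℝ} (h : Gam s (k+1) l) (h1 : es s (k+1) l = 1)
    {M : ℝ} (hM : 0 < M) (hl : ∀ i ∈ s, |l i| ≤ M) {i : ι} (hi : i ∈ s) :
    1 / (2 * (s.card + 1) * M) ≤ es (s.erase i) k l := by
  have e := es_erase hi k l
  have hg := G_pos h hi
  have hr := (h.erase hi).ratio
  have hc : (0:ℝ) ≤ s.card := by positivity
  have h0 : es (s.erase i) 1 l ≤ s.card * M := by
    rw [es_one]
    have := Finset.sum_le_card_nsmul (s.erase i) l M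
      (fun j hj => (le_abs_self _).trans (hl j (Finset.mem_of_mem_erase hj)))
    have h2 : ((s.erase i).card : ℝ) ≤ s.card := by exact_mod_cast Finset.card_le_card (Finset.erase_subset _ _)
    simp only [nsmul_eq_mul] at this
    nlinarith
  have hli := (le_abs_self _).trans (hl i hi)
  rw [h1] at e
  rw [div_le_iff₀ (by positivity)]
  have h6 : es (s.erase i) 1 l * es (s.erase i) k l ≤ s.card * M * es (s.erase i) k l :=
    mul_le_mul_of_nonneg_right h0 hg.le
  have h7 : l i * es (s.erase i) k l ≤ M * es (s.erase i) k l :=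
    mul_le_mul_of_nonneg_right hli hg.le
  nlinarith [mul_pos hM hg]
end ES2
end

open scoped BigOperators
noncomputable section
section NT
variable {ι : Type*} [DecidableEq ι] [Fintype ι]

/-- Newton tensors. -/
def NT : ℕ → Matrix ι ι ℝ → Matrix ι ι ℝ
  | 0, _ => 1
  | k+1, H => ((NT k H * H).trace / (k+1)) • (1 : Matrix ι ι ℝ) - NT k H * H

/-- The elementary symmetric functions of a matrix. -/
def NS : ℕ → Matrix ι ι ℝ → ℝ
  | 0, _ => 1
  | k+1, H => (NT k H * H).trace / (k+1)

lemma NT_succ (k : ℕ) (H : Matrix ι ι ℝ) : NT (k+1) H = NS (k+1) H • 1 - NT k H * H := rfl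
lemma NT_zero (H : Matrix ι ι ℝ) : NT 0 H = 1 := rfl
lemma NS_succ (k : ℕ) (H : Matrix ι ι ℝ) : NS (k+1) H = (NT k H * H).trace / (k+1) := rfl
lemma NS_zero (H : Matrix ι ι ℝ) : NS 0 H = 1 := rfl

/-- Formal derivative of Newton tensors. -/
def dNT : ℕ → Matrix ι ι ℝ → Matrix ι ι ℝ → Matrix ι ι ℝ
  | 0, _, _ => 0
  | k+1, H, X => ((dNT k H X * H + NT k H * X).trace / (k+1)) • (1 : Matrix ι ι ℝ)
      - (dNT k H X * H + NT k H * X)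

def dNS : ℕ → Matrix ι ι ℝ → Matrix ι ι ℝ → ℝ
  | 0, _, _ => 0
  | k+1, H, X => (dNT k H X * H + NT k H * X).trace / (k+1)

lemma dNT_succ (k : ℕ) (H X : Matrix ι ι ℝ) :
  dNT (k+1) H X = dNS (k+1) H X • 1 - (dNT k H X * H + NT k H * X) := rfl
lemma dNT_zero (H X : Matrix ι ι ℝ) : dNT 0 H X = 0 := rfl
lemma dNS_succ (k : ℕ) (H X : Matrix ι ι ℝ) :
  dNS (k+1) H X = (dNT k H X * H + NT k H * X).trace / (k+1) := rfl

lemma hasDerivAt_mul_entry {F G : ℝ → Matrix ι ι ℝ} {F' G' : Matrix ι ι ℝ} {t : ℝ}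
    (hF : ∀ i j, HasDerivAt (fun t => F t i j) (F' i j) t)
    (hG : ∀ i j, HasDerivAt (fun t => G t i j) (G' i j) t) (i j : ι) :
    HasDerivAt (fun t => (F t * G t) i j) ((F' * G t + F t * G') i j) t := by
  have : HasDerivAt (fun t => ∑ l, F t i l * G t l j)
      (∑ l, (F' i l * G t l j + F t i l * G' l j)) t :=
    HasDerivAt.fun_sum fun l _ => (hF i l).mul (hG l j)
  simpa [Matrix.mul_apply, Finset.sum_add_distrib] using this

lemma hasDerivAt_trace {F : ℝ → Matrix ι ι ℝ} {F' : Matrix ι ι ℝ} {t : ℝ}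
    (hF : ∀ i j, HasDerivAt (fun t => F t i j) (F' i j) t) :
    HasDerivAt (fun t => (F t).trace) F'.trace t := by
  simp only [Matrix.trace, Matrix.diag]
  exact HasDerivAt.fun_sum fun l _ => hF l l

lemma hasDerivAt_NT (k : ℕ) {H : ℝ → Matrix ι ι ℝ} {X : Matrix ι ι ℝ} {t : ℝ}
    (hH : ∀ i j, HasDerivAt (fun t => H t i j) (X i j) t) (i j : ι) :
    HasDerivAt (fun t => NT k (H t) i j) (dNT k (H t) X i j) t := by
  induction k generalizing i j with
  | zero => simpa [NT_zero, dNT_zero] using hasDerivAt_const t _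
  | succ k ih =>
    have h1 := hasDerivAt_mul_entry ih hH
    have h2 := (hasDerivAt_trace h1).div_const ((k:ℝ)+1)
    have h3 := (h2.mul_const ((1 : Matrix ι ι ℝ) i j)).sub (h1 i j)
    exact h3

lemma hasDerivAt_NS (k : ℕ) {H : ℝ → Matrix ι ι ℝ} {X : Matrix ι ι ℝ} {t : ℝ}
    (hH : ∀ i j, HasDerivAt (fun t => H t i j) (X i j) t) :
    HasDerivAt (fun t => NS k (H t)) (dNS k (H t) X) t := by
  cases k with
  | zero => simpa [NS, dNS] using hasDerivAt_const t _
  | succ k =>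
    exact (hasDerivAt_trace (hasDerivAt_mul_entry (hasDerivAt_NT k hH) hH)).div_const ((k:ℝ)+1)

open Matrix


lemma oconj_mul {R : Matrix ι ι ℝ} (hR : Rᵀ * R = 1) (A B : Matrix ι ι ℝ) : (R * A * Rᵀ) * (R * B * Rᵀ) = R * (A * B) * Rᵀ := by
  calc (R * A * Rᵀ) * (R * B * Rᵀ) = R * A * (Rᵀ * R) * B * Rᵀ := by simp only [Matrix.mul_assoc]
    _ = _ := by rw [hR]; simp [Matrix.mul_assoc]

lemma oconj_trace {R : Matrix ι ι ℝ} (hR : Rᵀ * R = 1) (A : Matrix ι ι ℝ) : (R * A * Rᵀ).trace = A.trace := by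
  rw [Matrix.mul_assoc, Matrix.trace_mul_comm, Matrix.mul_assoc, hR, Matrix.mul_one]

lemma oconj_one {R : Matrix ι ι ℝ} (hR : Rᵀ * R = 1) : R * 1 * Rᵀ = 1 := by
  rw [Matrix.mul_one]; exact mul_eq_one_comm.1 hR

lemma NT_conj {R : Matrix ι ι ℝ} (hR : Rᵀ * R = 1) (k : ℕ) (H : Matrix ι ι ℝ) : NT k (R * H * Rᵀ) = R * NT k H * Rᵀ := by
  induction k with
  | zero => rw [NT_zero, NT_zero, oconj_one hR]
  | succ k ih =>
    rw [NT_succ, NT_succ, NS_succ, NS_succ, ih, oconj_mul hR, oconj_trace hR, Matrix.mul_sub,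
      Matrix.sub_mul, Matrix.mul_smul, Matrix.smul_mul, oconj_one hR]

lemma NS_conj {R : Matrix ι ι ℝ} (hR : Rᵀ * R = 1) (k : ℕ) (H : Matrix ι ι ℝ) : NS k (R * H * Rᵀ) = NS k H := by
  cases k with
  | zero => rfl
  | succ k => rw [NS_succ, NS_succ, NT_conj hR, oconj_mul hR, oconj_trace hR]

lemma dNT_conj {R : Matrix ι ι ℝ} (hR : Rᵀ * R = 1) (k : ℕ) (H X : Matrix ι ι ℝ) :
    dNT k (R * H * Rᵀ) (R * X * Rᵀ) = R * dNT k H X * Rᵀ := by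
  induction k with
  | zero => simp [dNT_zero]
  | succ k ih =>
    rw [dNT_succ, dNT_succ, dNS_succ, dNS_succ, ih, NT_conj hR, oconj_mul hR, oconj_mul hR,
      ← Matrix.add_mul, ← Matrix.mul_add, oconj_trace hR, Matrix.mul_sub,
      Matrix.sub_mul, Matrix.mul_smul, Matrix.smul_mul, oconj_one hR]

lemma dNS_conj {R : Matrix ι ι ℝ} (hR : Rᵀ * R = 1) (k : ℕ) (H X : Matrix ι ι ℝ) :
    dNS k (R * H * Rᵀ) (R * X * Rᵀ) = dNS k H X := by
  cases k with
  | zero => rfl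
  | succ k =>
    rw [dNS_succ, dNS_succ, dNT_conj hR, NT_conj hR, oconj_mul hR, oconj_mul hR,
      ← Matrix.add_mul, ← Matrix.mul_add, oconj_trace hR]

lemma NT_diag (k : ℕ) (l : ι → ℝ) :
    NT k (diagonal l) = diagonal (fun i => es (Finset.univ.erase i) k l) ∧
    NS k (diagonal l) = es Finset.univ k l := by
  induction k with
  | zero => simp [NT_zero, NS_zero]
  | succ k ih =>
    have h2 : NS (k+1) (diagonal l) = es Finset.univ (k+1) l := by
      rw [NS_succ, ih.1, diagonal_mul_diagonal, trace_diagonal]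
      have := es_sum_mul Finset.univ k l
      rw [div_eq_iff (by positivity), mul_comm, ← this]
      exact Finset.sum_congr rfl fun i _ => by ring
    refine ⟨?_, h2⟩
    rw [NT_succ, h2, ih.1, diagonal_mul_diagonal, ← diagonal_one, ← diagonal_smul, diagonal_sub]
    congr 1
    ext i
    rw [es_erase (Finset.mem_univ i) k l]
    simp; ring

lemma dNS_diag_aux (k : ℕ) (l : ι → ℝ) (X : Matrix ι ι ℝ) :
    dNS (k+1) (diagonal l) X = ∑ j, es (Finset.univ.erase j) k l * X j j ∧
    (∀ i j, i ≠ j → dNT (k+1) (diagonal l) X i j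
      = - X i j * es ((Finset.univ.erase i).erase j) k l) ∧
    (∀ i, dNT (k+1) (diagonal l) X i i
      = ∑ j ∈ Finset.univ.erase i, es ((Finset.univ.erase i).erase j) k l * X j j) := by
  induction k with
  | zero =>
    have h1 : dNS 1 (diagonal l) X = ∑ j, X j j := by
      rw [dNS_succ]; simp [dNT_zero, NT_zero, Matrix.trace]
    refine ⟨by simpa using h1, ?_, ?_⟩
    · intro i j hij
      rw [dNT_succ]
      simp [dNT_zero, NT_zero, hij]
    · intro i
      rw [dNT_succ, h1]
      simp [dNT_zero, NT_zero]
  | succ k ih =>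
    obtain ⟨i1, i2, i3⟩ := ih
    have hoff : ∀ i j, (dNT (k+1) (diagonal l) X * diagonal l + NT (k+1) (diagonal l) * X) i j
        = dNT (k+1) (diagonal l) X i j * l j + es (Finset.univ.erase i) (k+1) l * X i j := by
      intro i j
      rw [(NT_diag (k+1) l).1]
      simp [Matrix.mul_diagonal, Matrix.diagonal_mul]
    have comm : ∀ i j : ι, (Finset.univ.erase i).erase j = (Finset.univ.erase j).erase i :=
      fun i j => Finset.erase_right_comm
    have h1 : dNS (k+1+1) (diagonal l) X = ∑ j, es (Finset.univ.erase j) (k+1) l * X j j := by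
      rw [dNS_succ, div_eq_iff (by positivity)]
      simp only [Matrix.trace, Matrix.diag, hoff, i3]
      rw [Finset.sum_add_distrib]
      have e1 : ∑ i, (∑ j ∈ Finset.univ.erase i, es ((Finset.univ.erase i).erase j) k l * X j j) * l i
          = ∑ j, (∑ i ∈ Finset.univ.erase j, l i * es ((Finset.univ.erase j).erase i) k l) * X j j := by
        simp only [Finset.sum_mul]
        rw [Finset.sum_comm' (t' := Finset.univ) (s' := fun j => Finset.univ.erase j)]
        · apply Finset.sum_congr rfl; intro j _
          apply Finset.sum_congr rfl; intro i _
          rw [comm i j]; ring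
        · intro x y; simp [eq_comm]
      rw [e1]
      simp only [es_sum_mul]
      rw [← Finset.sum_add_distrib, Finset.sum_mul]
      apply Finset.sum_congr rfl
      intro j _
      push_cast
      ring
    refine ⟨h1, ?_, ?_⟩
    · intro i j hij
      rw [dNT_succ, Matrix.sub_apply, hoff, i2 i j hij]
      have hj : j ∈ Finset.univ.erase i := by simp [hij.symm]
      rw [es_erase hj k l]
      simp [hij]
      ring
    · intro i
      rw [dNT_succ, Matrix.sub_apply, hoff, i3, h1,
        ← Finset.add_sum_erase _ _ (Finset.mem_univ i)]
      simp only [Matrix.smul_apply, Matrix.one_apply_eq, smul_eq_mul, mul_one]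
      have : ∀ j ∈ Finset.univ.erase i, es (Finset.univ.erase j) (k+1) l * X j j
          = es ((Finset.univ.erase i).erase j) (k+1) l * X j j
            + es ((Finset.univ.erase i).erase j) k l * X j j * l i := by
        intro j hj
        have hi : i ∈ Finset.univ.erase j := by
          simp at hj ⊢; exact fun h => hj h.symm
        rw [es_erase hi k l, comm i j]; ring
      rw [Finset.sum_congr rfl this, Finset.sum_add_distrib, Finset.sum_mul]
      ring

/-- Spectral theorem in a convenient form. -/
lemma spectral (H : Matrix ι ι ℝ) (hH : H.IsHermitian) :
    ∃ R : Matrix ι ι ℝ, Rᵀ * R = 1 ∧ H = R * diagonal hH.eigenvalues * Rᵀ := by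
  refine ⟨hH.eigenvectorUnitary, ?_, ?_⟩
  · have := Unitary.coe_star_mul_self hH.eigenvectorUnitary
    rw [Matrix.star_eq_conjTranspose, Matrix.conjTranspose_eq_transpose_of_trivial] at this
    exact this
  · have := hH.spectral_theorem
    rw [Unitary.conjStarAlgAut_apply, Matrix.star_eq_conjTranspose,
      Matrix.conjTranspose_eq_transpose_of_trivial] at this
    exact this

lemma NS_eq_es (H : Matrix ι ι ℝ) (hH : H.IsHermitian) (k : ℕ) :
    NS k H = es Finset.univ k hH.eigenvalues := by
  obtain ⟨R, h1, h2⟩ := spectral H hH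
  conv_lhs => rw [h2]
  rw [NS_conj h1, (NT_diag k _).2]

lemma dNS_eq (H X : Matrix ι ι ℝ) (hH : H.IsHermitian) (k : ℕ) :
    dNS (k+1) H X = (NT k H * X).trace := by
  obtain ⟨R, h1, h2⟩ := spectral H hH
  set l := hH.eigenvalues
  have h3 : X = R * (Rᵀ * X * R) * Rᵀ := by
    have := mul_eq_one_comm.1 h1
    calc X = (R * Rᵀ) * X * (R * Rᵀ) := by rw [this]; simp
      _ = _ := by simp only [Matrix.mul_assoc]
  rw [h3, h2, dNS_conj h1, NT_conj h1, oconj_mul h1, oconj_trace h1, (dNS_diag_aux k l _).1,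
    (NT_diag k l).1]
  simp [Matrix.trace, Matrix.diagonal_mul]

lemma NT_comm (k : ℕ) (H : Matrix ι ι ℝ) : NT k H * H = H * NT k H := by
  induction k with
  | zero => simp [NT_zero]
  | succ k ih =>
    rw [NT_succ, Matrix.sub_mul, Matrix.mul_sub, ih, Matrix.mul_assoc, ih]
    simp

lemma NT_symm (k : ℕ) (H : Matrix ι ι ℝ) (hH : Hᵀ = H) : (NT k H)ᵀ = NT k H := by
  induction k with
  | zero => simp [NT_zero]
  | succ k ih =>
    rw [NT_succ, Matrix.transpose_sub, Matrix.transpose_mul, hH, ih, NT_comm]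
    simp

/-- Algebraic divergence-freeness. -/
lemma dNT_div (k : ℕ) (H : Matrix ι ι ℝ) (hH : H.IsHermitian) (X : ι → Matrix ι ι ℝ)
    (h1 : ∀ a b c, X a b c = X c b a) (j : ι) : ∑ i, dNT k H (X i) i j = 0 := by
  induction k generalizing j with
  | zero => simp [dNT_zero]
  | succ k ih =>
    have e1 : ∑ i, (dNT k H (X i) * H) i j = 0 := by
      simp only [Matrix.mul_apply]
      rw [Finset.sum_comm]
      simp only [← Finset.sum_mul, ih]
      simp
    have e2 : ∑ i, (NT k H * X i) i j = (NT k H * X j).trace := by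
      simp only [Matrix.trace, Matrix.diag, Matrix.mul_apply]
      apply Finset.sum_congr rfl; intro i _
      apply Finset.sum_congr rfl; intro l _
      rw [h1]
    simp only [dNT_succ, dNS_eq _ _ hH, Matrix.sub_apply, Matrix.add_apply, Matrix.smul_apply,
      Finset.sum_sub_distrib, Finset.sum_add_distrib, e1, e2]
    simp [Matrix.one_apply]

end NT
end

open scoped BigOperators
noncomputable section

abbrev EE (n : ℕ) := EuclideanSpace ℝ (Fin n)

/-- Directional derivative. -/
def dd {n : ℕ} (e : EE n) (f : EE n → ℝ) : EE n → ℝ := fun x => fderiv ℝ f x e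

abbrev Sm {n : ℕ} (f : EE n → ℝ) : Prop := ContDiff ℝ (⊤ : ℕ∞) f

section calc_
variable {n : ℕ}

lemma Sm.diff {f : EE n → ℝ} (hf : Sm f) : Differentiable ℝ f := hf.differentiable (by simp)

lemma Sm.dd {f : EE n → ℝ} (hf : Sm f) (e : EE n) : Sm (dd e f) := by
  have h : ContDiff ℝ (⊤ : ℕ∞) (fderiv ℝ f) := hf.fderiv_right (m := (⊤ : ℕ∞)) (by simp)
  exact h.clm_apply contDiff_const

lemma dd_line {f : EE n → ℝ} (hf : Sm f) (x e : EE n) (t : ℝ) :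
    HasDerivAt (fun t : ℝ => f (x + t • e)) (dd e f (x + t • e)) t := by
  have h1 : HasDerivAt (fun t : ℝ => x + t • e) e t := by
    simpa using ((hasDerivAt_id t).smul_const e).const_add x
  exact (hf.diff (x + t • e)).hasFDerivAt.comp_hasDerivAt t h1

lemma dd_eq_of_line {f : EE n → ℝ} (hf : Sm f) {x e : EE n} {c : ℝ}
    (h : HasDerivAt (fun t : ℝ => f (x + t • e)) c 0) : dd e f x = c := by
  have := dd_line hf x e 0
  simpa using this.unique h

lemma dd_add_dir (f : EE n → ℝ) (a b x : EE n) : dd (a + b) f x = dd a f x + dd b f x := by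
  simp [dd]

lemma dd_smul_dir (f : EE n → ℝ) (c : ℝ) (a x : EE n) : dd (c • a) f x = c * dd a f x := by
  simp [dd]

lemma dd_sum_dir {κ : Type*} (f : EE n → ℝ) (s : Finset κ) (a : κ → EE n) (x : EE n) :
    dd (∑ i ∈ s, a i) f x = ∑ i ∈ s, dd (a i) f x := by
  simp [dd]

lemma dd_add {f g : EE n → ℝ} (hf : Sm f) (hg : Sm g) (e x : EE n) :
    dd e (fun x => f x + g x) x = dd e f x + dd e g x := by
  simp only [dd]
  rw [fderiv_fun_add (hf.diff x) (hg.diff x)]; rfl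

lemma dd_sub {f g : EE n → ℝ} (hf : Sm f) (hg : Sm g) (e x : EE n) :
    dd e (fun x => f x - g x) x = dd e f x - dd e g x := by
  simp only [dd]
  rw [fderiv_fun_sub (hf.diff x) (hg.diff x)]; rfl

lemma dd_const_mul {f : EE n → ℝ} (hf : Sm f) (c : ℝ) (e x : EE n) :
    dd e (fun x => c * f x) x = c * dd e f x := by
  simp only [dd]
  rw [fderiv_const_mul (hf.diff x)]; rfl

lemma dd_mul {f g : EE n → ℝ} (hf : Sm f) (hg : Sm g) (e x : EE n) :
    dd e (fun x => f x * g x) x = dd e f x * g x + f x * dd e g x := by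
  simp only [dd]
  rw [fderiv_fun_mul (hf.diff x) (hg.diff x)]
  simp; ring

lemma dd_sum {κ : Type*} (s : Finset κ) {f : κ → EE n → ℝ} (hf : ∀ i, Sm (f i)) (e x : EE n) :
    dd e (fun x => ∑ i ∈ s, f i x) x = ∑ i ∈ s, dd e (f i) x := by
  simp only [dd]
  rw [fderiv_fun_sum (fun i _ => (hf i).diff x)]
  simp

lemma dd_dd_eq {f : EE n → ℝ} (hf : Sm f) (a b x : EE n) :
    dd a (dd b f) x = fderiv ℝ (fderiv ℝ f) x a b := by
  have h : DifferentiableAt ℝ (fderiv ℝ f) x :=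
    (hf.fderiv_right (m := (⊤ : ℕ∞)) (by simp)).differentiable (by simp) x
  unfold dd
  rw [fderiv_clm_apply h (differentiableAt_const b)]
  simp

lemma dd_comm {f : EE n → ℝ} (hf : Sm f) (a b : EE n) : dd a (dd b f) = dd b (dd a f) := by
  ext x
  rw [dd_dd_eq hf, dd_dd_eq hf]
  have : IsSymmSndFDerivAt ℝ f x := hf.contDiffAt.isSymmSndFDerivAt (by
    simp only [minSmoothness_of_isRCLikeNormedField]; exact WithTop.coe_le_coe.2 le_top)
  exact this.eq a b

/-- Rows of `R` as vectors. -/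
def fr (R : Matrix (Fin n) (Fin n) ℝ) (i : Fin n) : EE n := WithLp.toLp 2 (R i)

@[simp] lemma fr_apply (R : Matrix (Fin n) (Fin n) ℝ) (i j : Fin n) : fr R i j = R i j := rfl

lemma fr_one (i : Fin n) : fr (1 : Matrix (Fin n) (Fin n) ℝ) i = EuclideanSpace.single i 1 := by
  ext j; simp [Matrix.one_apply, eq_comm]

lemma vec_eq_sum (e : EE n) : e = ∑ j, e j • fr (1 : Matrix (Fin n) (Fin n) ℝ) j := by
  ext i
  simp [Matrix.one_apply]

lemma dd_vec (f : EE n → ℝ) (e x : EE n) : dd e f x = ∑ j, e j * dd (fr 1 j) f x := by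
  conv_lhs => rw [vec_eq_sum e]
  rw [dd_sum_dir]
  simp only [dd_smul_dir]

lemma dd_fr (R : Matrix (Fin n) (Fin n) ℝ) (f : EE n → ℝ) (i : Fin n) (x : EE n) :
    dd (fr R i) f x = ∑ j, R i j * dd (fr 1 j) f x := dd_vec f _ x

/-- Hessian matrix in the frame `R`. -/
def hm (R : Matrix (Fin n) (Fin n) ℝ) (f : EE n → ℝ) (x : EE n) : Matrix (Fin n) (Fin n) ℝ :=
  fun i j => dd (fr R i) (dd (fr R j) f) x

open Matrix

lemma hm_symm (R : Matrix (Fin n) (Fin n) ℝ) {f : EE n → ℝ} (hf : Sm f) (x : EE n) :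
    (hm R f x)ᵀ = hm R f x := by
  ext i j
  simp only [Matrix.transpose_apply, hm]
  rw [dd_comm hf]

lemma hm_herm (R : Matrix (Fin n) (Fin n) ℝ) {f : EE n → ℝ} (hf : Sm f) (x : EE n) :
    (hm R f x).IsHermitian := by
  rw [Matrix.IsHermitian, Matrix.conjTranspose_eq_transpose_of_trivial, hm_symm R hf]

lemma dd_dd_vec {f : EE n → ℝ} (hf : Sm f) (a b x : EE n) :
    dd a (dd b f) x = ∑ i, ∑ j, a i * b j * hm 1 f x i j := by
  rw [dd_vec]
  apply Finset.sum_congr rfl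
  intro i _
  have : dd b f = fun x => ∑ j, b j * dd (fr 1 j) f x := by ext x; exact dd_vec f b x
  rw [this, dd_sum _ (fun j => contDiff_const.mul (hf.dd _)), Finset.mul_sum]
  apply Finset.sum_congr rfl
  intro j _
  rw [dd_const_mul (hf.dd _)]
  simp only [hm]; ring

lemma hm_conj (R : Matrix (Fin n) (Fin n) ℝ) {f : EE n → ℝ} (hf : Sm f) (x : EE n) :
    hm R f x = R * hm 1 f x * Rᵀ := by
  ext i j
  have e : hm R f x i j = dd (fr R i) (dd (fr R j) f) x := rfl
  rw [e, dd_dd_vec hf]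
  simp only [Matrix.mul_apply, Matrix.transpose_apply, Finset.sum_mul]
  rw [Finset.sum_comm]
  apply Finset.sum_congr rfl; intro k _
  apply Finset.sum_congr rfl; intro l _
  simp only [fr_apply]
  ring

/-- Derivative of the Hessian matrix along a line. -/
lemma hm_line (R : Matrix (Fin n) (Fin n) ℝ) {f : EE n → ℝ} (hf : Sm f) (x e : EE n) (t : ℝ)
    (i j : Fin n) :
    HasDerivAt (fun t : ℝ => hm R f (x + t • e) i j) (hm R (dd e f) (x + t • e) i j) t := by
  have h := dd_line ((hf.dd (fr R j)).dd (fr R i)) x e t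
  have : dd e (dd (fr R i) (dd (fr R j) f)) = dd (fr R i) (dd (fr R j) (dd e f)) := by
    rw [dd_comm (hf.dd _), dd_comm hf]
  rw [this] at h
  exact h

lemma eigenframe {f : EE n → ℝ} (hf : Sm f) (x : EE n) :
    ∃ (R : Matrix (Fin n) (Fin n) ℝ) (l : Fin n → ℝ), Rᵀ * R = 1 ∧ hm R f x = diagonal l := by
  obtain ⟨R, h1, h2⟩ := spectral (hm 1 f x) (hm_herm 1 hf x)
  refine ⟨Rᵀ, (hm_herm 1 hf x).eigenvalues, ?_, ?_⟩
  · rw [Matrix.transpose_transpose]; exact mul_eq_one_comm.1 h1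
  · rw [hm_conj _ hf]
    conv_lhs => rw [h2]
    rw [Matrix.transpose_transpose]
    calc _ = (Rᵀ * R) * diagonal (hm_herm 1 hf x).eigenvalues * (Rᵀ * R) := by
          simp only [Matrix.mul_assoc]
      _ = _ := by rw [h1]; simp

lemma NS_frame {R : Matrix (Fin n) (Fin n) ℝ} (hR : Rᵀ * R = 1) {f : EE n → ℝ} (hf : Sm f)
    (k : ℕ) (x : EE n) : NS k (hm R f x) = NS k (hm 1 f x) := by
  rw [hm_conj R hf, NS_conj hR]

/-- First and second order differentiated equation. -/
lemma eqn_deriv {R : Matrix (Fin n) (Fin n) ℝ} (hR : Rᵀ * R = 1) {f : EE n → ℝ} (hf : Sm f)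
    (k : ℕ) (heq : ∀ x, NS (k+1) (hm 1 f x) = 1) (x e : EE n) :
    (NT k (hm R f x) * hm R (dd e f) x).trace = 0 ∧
    (dNT k (hm R f x) (hm R (dd e f) x) * hm R (dd e f) x).trace
      + (NT k (hm R f x) * hm R (dd e (dd e f)) x).trace = 0 := by
  have h1 : ∀ t : ℝ, (NT k (hm R f (x + t • e)) * hm R (dd e f) (x + t • e)).trace = 0 := by
    intro t
    have h := hasDerivAt_NS (k+1) (fun i j => hm_line R hf x e t i j)
    rw [dNS_eq _ _ (hm_herm R hf _)] at h
    have hc : (fun t : ℝ => NS (k+1) (hm R f (x + t • e))) = fun _ => 1 := by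
      ext t; rw [NS_frame hR hf, heq]
    rw [hc] at h
    exact h.unique (hasDerivAt_const t 1)
  refine ⟨by simpa using h1 0, ?_⟩
  have h := hasDerivAt_trace (hasDerivAt_mul_entry
    (hasDerivAt_NT k (fun i j => hm_line R hf x e 0 i j))
    (fun i j => hm_line R (hf.dd e) x e 0 i j))
  have hc : (fun t : ℝ => (NT k (hm R f (x + t • e)) * hm R (dd e f) (x + t • e)).trace)
      = fun _ => 0 := by
    ext t; exact h1 t
  rw [hc, Matrix.trace_add] at h
  simpa using h.unique (hasDerivAt_const 0 0)

lemma second_order (m : ℕ) (l : Fin n → ℝ) (hl : Gam Finset.univ (m+2) l)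
    (X Y : Matrix (Fin n) (Fin n) ℝ) (hX : Xᵀ = X)
    (h1 : (NT (m+1) (diagonal l) * X).trace = 0)
    (h2 : (dNT (m+1) (diagonal l) X * X).trace + (NT (m+1) (diagonal l) * Y).trace = 0) :
    ∑ i, ∑ j ∈ Finset.univ.erase i, es ((Finset.univ.erase i).erase j) m l * X i j ^ 2
      ≤ ∑ i, es (Finset.univ.erase i) (m+1) l * Y i i := by
  have hs : ∀ i j, X j i = X i j := fun i j => by
    conv_lhs => rw [← hX]
    rfl
  rw [(NT_diag (m+1) l).1] at h1 h2
  simp only [Matrix.trace, Matrix.diag, Matrix.diagonal_mul] at h1 h2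
  have hq := es_quasiconcave Finset.univ m l (fun i => X i i) hl (by
    rw [← h1]; exact Finset.sum_congr rfl fun i _ => by ring)
  obtain ⟨-, d1, d2⟩ := dNS_diag_aux m l X
  have h3 : ∀ i, (dNT (m+1) (diagonal l) X * X) i i =
      ∑ j ∈ Finset.univ.erase i, X i i * X j j * es ((Finset.univ.erase i).erase j) m l
      - ∑ j ∈ Finset.univ.erase i, es ((Finset.univ.erase i).erase j) m l * X i j ^ 2 := by
    intro i
    rw [Matrix.mul_apply, ← Finset.add_sum_erase _ _ (Finset.mem_univ i), d2, Finset.sum_mul,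
      sub_eq_add_neg, ← Finset.sum_neg_distrib]
    congr 1
    · exact Finset.sum_congr rfl fun j _ => by ring
    · refine Finset.sum_congr rfl fun j hj => ?_
      rw [d1 i j (Finset.ne_of_mem_erase hj).symm, hs i j]; ring
  simp only [h3, Finset.sum_sub_distrib] at h2
  linarith

lemma orth_entry {R : Matrix (Fin n) (Fin n) ℝ} (hR : Rᵀ * R = 1) (i j : Fin n) :
    ∑ k, R k i * R k j = if i = j then 1 else 0 := by
  have := congrFun (congrFun hR i) j
  simpa [Matrix.mul_apply, Matrix.one_apply] using this

lemma orth_entry' {R : Matrix (Fin n) (Fin n) ℝ} (hR : Rᵀ * R = 1) (i j : Fin n) :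
    ∑ k, R i k * R j k = if i = j then 1 else 0 := by
  have h0 : R * Rᵀ = 1 := mul_eq_one_comm.1 hR
  have := congrFun (congrFun h0 i) j
  simpa [Matrix.mul_apply, Matrix.one_apply] using this

lemma orth_sum_sq {R : Matrix (Fin n) (Fin n) ℝ} (hR : Rᵀ * R = 1) (a : Fin n → ℝ) :
    ∑ i, (∑ j, R i j * a j)^2 = ∑ j, a j ^ 2 := by
  have : ∀ i, (∑ j, R i j * a j)^2 = ∑ j, ∑ k, a j * a k * (R i j * R i k) := by
    intro i
    rw [sq, Finset.sum_mul_sum]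
    exact Finset.sum_congr rfl fun j _ => Finset.sum_congr rfl fun k _ => by ring
  simp only [this]
  rw [Finset.sum_comm]
  apply Finset.sum_congr rfl; intro j _
  rw [Finset.sum_comm]
  simp only [← Finset.mul_sum, orth_entry hR]
  simp [sq]

lemma fr_norm {R : Matrix (Fin n) (Fin n) ℝ} (hR : Rᵀ * R = 1) (i : Fin n) : ‖fr R i‖ = 1 := by
  rw [EuclideanSpace.norm_eq, Real.sqrt_eq_one]
  have := orth_entry' hR i i
  simpa [sq] using this

/-- coordinates of a point in the frame -/
def crd (R : Matrix (Fin n) (Fin n) ℝ) (x : EE n) (i : Fin n) : ℝ := ∑ j, R i j * x j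

lemma norm_sq_line {R : Matrix (Fin n) (Fin n) ℝ} (hR : Rᵀ * R = 1) (x : EE n) (i : Fin n) (t : ℝ) :
    ‖x + t • fr R i‖ ^ 2 = ‖x‖ ^ 2 + 2 * crd R x i * t + t ^ 2 := by
  rw [EuclideanSpace.norm_sq_eq, EuclideanSpace.norm_sq_eq]
  have := orth_entry' hR i i
  simp only [if_true] at this
  have e : t^2 = ∑ k, t^2 * (R i k * R i k) := by rw [← Finset.mul_sum, this, mul_one]
  rw [e, crd, Finset.mul_sum, Finset.sum_mul, ← Finset.sum_add_distrib, ← Finset.sum_add_distrib]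
  apply Finset.sum_congr rfl; intro k _
  simp
  ring

lemma crd_sq_le {R : Matrix (Fin n) (Fin n) ℝ} (hR : Rᵀ * R = 1) (x : EE n) (i : Fin n) :
    crd R x i ^ 2 ≤ ‖x‖^2 := by
  rw [EuclideanSpace.norm_sq_eq]
  have := orth_sum_sq hR (fun j => x j)
  simp only [Real.norm_eq_abs, sq_abs]
  rw [← this]
  exact Finset.single_le_sum (f := fun i => (∑ j, R i j * x j)^2) (fun i _ => sq_nonneg _) (Finset.mem_univ i)

/-- squared gradient -/
def gsq (f : EE n → ℝ) (x : EE n) : ℝ := ∑ j, (dd (fr 1 j) f x)^2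

lemma gsq_frame {R : Matrix (Fin n) (Fin n) ℝ} (hR : Rᵀ * R = 1) (f : EE n → ℝ) (x : EE n) :
    gsq f x = ∑ i, (dd (fr R i) f x)^2 := by
  simp only [dd_fr R]
  rw [orth_sum_sq hR]
  rfl

lemma logmax {A Z A' Z' : ℝ → ℝ} {A2 Z2 : ℝ} (N : ℕ) {β r y : ℝ}
    (hA : ∀ t, HasDerivAt A (A' t) t) (hZ : ∀ t, HasDerivAt Z (Z' t) t)
    (hA' : HasDerivAt A' A2 0) (hZ' : HasDerivAt Z' Z2 0) (A0 : 0 < A 0) (Z0 : 0 < Z 0)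
    (hmax : IsLocalMax (fun t => A t * Z t ^ N * Real.exp (β * (r + 2 * y * t + t^2))) 0) :
    A' 0 / A 0 + N * (Z' 0 / Z 0) + 2 * β * y = 0 ∧
    A2 / A 0 - (A' 0 / A 0)^2 + N * (Z2 / Z 0 - (Z' 0 / Z 0)^2) + 2 * β ≤ 0 := by
  have hAp : ∀ᶠ t in nhds 0, 0 < A t := (hA 0).continuousAt.eventually (lt_mem_nhds A0)
  have hZp : ∀ᶠ t in nhds 0, 0 < Z t := (hZ 0).continuousAt.eventually (lt_mem_nhds Z0)
  have hm2 : IsLocalMax (fun t => Real.log (A t) + N * Real.log (Z t) + β * (r + 2 * y * t + t^2)) 0 := by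
    filter_upwards [hmax, hAp, hZp] with t h1 h2 h3
    have e : ∀ t, 0 < A t → 0 < Z t → Real.log (A t * Z t ^ N * Real.exp (β * (r + 2 * y * t + t^2)))
        = Real.log (A t) + N * Real.log (Z t) + β * (r + 2 * y * t + t^2) := by
      intro t h2 h3
      rw [Real.log_mul (by positivity) (by positivity), Real.log_mul (by positivity) (by positivity),
        Real.log_exp, Real.log_pow]
    rw [← e t h2 h3, ← e 0 A0 Z0]
    exact Real.log_le_log (by positivity) h1
  have hq : ∀ t : ℝ, HasDerivAt (fun t : ℝ => β * (r + 2 * y * t + t^2)) (β * (2 * y + 2 * t)) t := by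
    intro t
    have h := ((((hasDerivAt_id t).const_mul (2*y)).const_add r).add ((hasDerivAt_id t).fun_pow 2)).const_mul β
    refine HasDerivAt.congr_deriv h ?_
    simp
  have hq2 : HasDerivAt (fun t : ℝ => β * (2 * y + 2 * t)) (2 * β) 0 := by
    have h := (((hasDerivAt_id (0:ℝ)).const_mul 2).const_add (2*y)).const_mul β
    refine HasDerivAt.congr_deriv h ?_
    ring
  have key := second_deriv_nonpos (f' := fun t => A' t / A t + N * (Z' t / Z t) + β * (2 * y + 2 * t))
    (c := (A2 * A 0 - A' 0 * A' 0) / A 0 ^ 2 + N * ((Z2 * Z 0 - Z' 0 * Z' 0)/ Z 0 ^2) + 2 * β) ?_ ?_ hm2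
  · constructor
    · have := key.1
      simp only [mul_zero, add_zero] at this
      linarith
    · have := key.2
      refine le_trans (le_of_eq ?_) this
      field_simp
  · filter_upwards [hAp, hZp] with t h1 h2
    exact (((hA t).log h1.ne').add (((hZ t).log h2.ne').const_mul (N:ℝ))).add (hq t)
  · exact ((hA'.div (hA 0) A0.ne').add ((hZ'.div (hZ 0) Z0.ne').const_mul (N:ℝ))).add hq2

end calc_
end

open scoped BigOperators
noncomputable section

/-- Admissible solutions. -/
structure Sol (n k : ℕ) (A : ℝ) (v : EE n → ℝ) : Prop where
  sm : Sm v
  pos : ∀ x, ∀ j ≤ k+1, 0 < NS j (hm 1 v x)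
  eq : ∀ x, NS (k+1) (hm 1 v x) = 1
  low : ∀ x, -A ≤ NS (k+2) (hm 1 v x)

lemma Sol.frame {n k : ℕ} {A : ℝ} {v : EE n → ℝ} (h : Sol n k A v) (x : EE n) :
    ∃ (R : Matrix (Fin n) (Fin n) ℝ) (l : Fin n → ℝ), R.transpose * R = 1 ∧
      hm R v x = Matrix.diagonal l ∧ Gam Finset.univ (k+1) l ∧ es Finset.univ (k+1) l = 1 ∧
      -A ≤ es Finset.univ (k+2) l := by
  obtain ⟨R, l, h1, h2⟩ := eigenframe h.sm x
  have e : ∀ j, es Finset.univ j l = NS j (hm 1 v x) := by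
    intro j
    rw [← NS_frame h1 h.sm j x, h2, (NT_diag j l).2]
  exact ⟨R, l, h1, h2, fun j hj => by rw [e]; exact h.pos x j hj, by rw [e]; exact h.eq x,
    by rw [e]; exact h.low x⟩

lemma grad_alg_one {a q ζ β ρ A l p s y G : ℝ} (ha : 1 ≤ a) (hq : 0 < q) (hqA : 8 * A ≤ q)
    (hζ : 0 < ζ) (hζ2 : ζ ≤ 2) (hG : 0 < G) (hs : s = β * y) (hβ : 0 < β) (hβρ : 44 * β * ρ^2 ≤ 1)
    (hy : y^2 ≤ ρ^2) (hD : 2 * A ≤ l → l * G ≤ 2) (hcrit : l * (p * ζ) = q * (a * p - s)) :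
    G * (2 * a * p^2 + 4 * (a * p - s)^2) ≤ 44 * a * p^2 * ζ / q + β * G ∧
    (p ≠ 0 → 2 * |s| ≤ a * |p| → a * q / (2 * ζ) ≤ l) := by
  have hl : p ≠ 0 → 2 * |s| ≤ a * |p| → a * q / (2 * ζ) ≤ l := by
    intro hp0 hJ
    rw [div_le_iff₀ (by positivity)]
    have hp2 : 0 < p^2 := by positivity
    have h1 : s * p ≤ a * p^2 / 2 := by
      have : s * p ≤ |s| * |p| := by rw [← abs_mul]; exact le_abs_self _
      have h3 : |p| * |p| = p^2 := by rw [← sq, sq_abs]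
      nlinarith [abs_nonneg p]
    have h2 : q * (a * p^2/2) ≤ q * ((a * p - s) * p) := by
      apply mul_le_mul_of_nonneg_left _ hq.le
      nlinarith
    have h4 : (l * ζ) * p^2 = q * ((a * p - s) * p) := by
      rw [← mul_assoc, ← hcrit]; ring
    have h5 : (q * a / 2) * p^2 ≤ (l * ζ) * p^2 := by rw [h4]; linarith
    have := le_of_mul_le_mul_right h5 hp2
    linarith
  refine ⟨?_, hl⟩
  by_cases hJ : 2 * |s| ≤ a * |p|
  · have hsq : 4 * s^2 ≤ a^2 * p^2 := by
      have := pow_le_pow_left₀ (by positivity) hJ 2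
      rw [mul_pow, mul_pow, sq_abs, sq_abs] at this
      linarith
    by_cases hp0 : p = 0
    · subst hp0
      have : s = 0 := by nlinarith
      subst this
      simp; positivity
    · have hll := hl hp0 hJ
      rw [div_le_iff₀ (by positivity)] at hll
      have hlA : 2 * A ≤ l := by
        by_contra hc
        push Not at hc
        have hlpos : 0 < l := by
          have : 0 < l * (2 * ζ) := lt_of_lt_of_le (by positivity) hll
          exact pos_of_mul_pos_left this (by positivity)
        nlinarith
      have hGl := hD hlA
      have h6 : G * (a * q) ≤ 4 * ζ := by nlinarith
      have h7 : 2 * a * p^2 + 4 * (a * p - s)^2 ≤ 11 * a^2 * p^2 := by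
        have : (a * p - s)^2 ≤ 9/4 * (a^2 * p^2) := by
          nlinarith [sq_nonneg (a * p + 2 * s)]
        have h8 : a * p^2 ≤ a^2 * p^2 := by
          apply mul_le_mul_of_nonneg_right _ (sq_nonneg p); nlinarith
        nlinarith
      have h9 : G * (2 * a * p^2 + 4 * (a * p - s)^2) ≤ 44 * a * p^2 * ζ / q := by
        rw [le_div_iff₀ hq]
        have h10 := mul_le_mul_of_nonneg_left h7 hG.le
        have h11 : (G * (a * q)) * (11 * a * p^2) ≤ 4 * ζ * (11 * a * p^2) :=
          mul_le_mul_of_nonneg_right h6 (by positivity)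
        nlinarith
      have : 0 < β * G := by positivity
      linarith
  · push Not at hJ
    have hsq : a^2 * p^2 ≤ 4 * s^2 := by
      have := pow_le_pow_left₀ (by positivity) hJ.le 2
      rw [mul_pow, mul_pow, sq_abs, sq_abs] at this
      linarith
    have h8 : a * p^2 ≤ a^2 * p^2 := by
      apply mul_le_mul_of_nonneg_right _ (sq_nonneg p); nlinarith
    have h7 : 2 * a * p^2 + 4 * (a * p - s)^2 ≤ 44 * s^2 := by
      have : (a * p - s)^2 ≤ 9 * s^2 := by nlinarith [sq_nonneg (a * p + 2 * s)]
      nlinarith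
    have h9 : 44 * s^2 ≤ β := by
      rw [hs]
      have : β * (44 * β * y^2) ≤ β * (44 * β * ρ^2) := by gcongr
      nlinarith
    have : 0 ≤ 44 * a * p^2 * ζ / q := by positivity
    nlinarith

lemma grad_alg {n m : ℕ} (hn : m + 2 ≤ n) {a q ζ β ρ A : ℝ} {l p s y : Fin n → ℝ}
    (hA : 0 < A) (hGam : Gam Finset.univ (m+2) l) (h1 : es Finset.univ (m+2) l = 1)
    (hlow : -A ≤ es Finset.univ (m+3) l)
    (ha : 1 ≤ a) (hq1 : 1 < q) (hqA : 8 * A ≤ q)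
    (hζ : 0 < ζ) (hζ2 : ζ ≤ 2) (hs : ∀ i, s i = β * y i) (hβ : 0 < β) (hβρ : 44 * n * β * ρ^2 ≤ 1)
    (hy : ∀ i, y i ^2 ≤ ρ^2) (hρ : 1 ≤ ρ)
    (hcrit : ∀ i, l i * (p i * ζ) = q * (a * p i - s i)) (hqs : q = ∑ i, (p i * ζ)^2)
    (hmain : ∑ i, es (Finset.univ.erase i) (m+1) l *
      (2 * l i ^2 / q - 4 * (a * p i - s i)^2 - 2 * a * (l i / ζ + p i ^2) + 2 * β) ≤ 0) :
    q * ζ ^ m ≤ 2 * ((2 * a * (m+2) + 44 * a)/β) ^ (m+1) := by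
  have hq : 0 < q := by linarith
  have hnn : (1:ℝ) ≤ n := by exact_mod_cast (by omega : 1 ≤ n)
  have hβρ' : 44 * β * ρ^2 ≤ 1 := by
    have : 0 < 44 * β * ρ^2 := by positivity
    nlinarith
  set G : Fin n → ℝ := fun i => es (Finset.univ.erase i) (m+1) l with hGdef
  have hG : ∀ i, 0 < G i := fun i => G_pos hGam (Finset.mem_univ i)
  have hone := fun i => grad_alg_one (G := G i) (A := A) ha hq hqA hζ hζ2 (hG i) (hs i) hβ hβρ' (hy i)
    (fun h => condD (Finset.mem_univ i) h1 hA hlow h) (hcrit i)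
  have hK : ∑ i, l i * G i = (m+2) := by
    have := es_sum_mul Finset.univ (m+1) l
    rw [h1] at this
    rw [hGdef]
    simp only
    rw [this]
    push_cast; ring
  have hsum : β * ∑ i, G i ≤ (2 * a * (m+2) + 44 * a) / ζ := by
    have e1 : ∑ i, G i * (2 * l i ^2 / q - 4 * (a * p i - s i)^2 - 2 * a * (l i / ζ + p i ^2) + 2 * β)
        = ∑ i, (2 * l i^2 / q) * G i - ∑ i, G i * (2 * a * p i^2 + 4 * (a * p i - s i)^2)
          - 2 * a / ζ * ∑ i, l i * G i + 2 * β * ∑ i, G i := by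
      rw [Finset.mul_sum, Finset.mul_sum, ← Finset.sum_sub_distrib, ← Finset.sum_sub_distrib,
        ← Finset.sum_add_distrib]
      exact Finset.sum_congr rfl fun i _ => by ring
    have e2 : 0 ≤ ∑ i, (2 * l i^2 / q) * G i :=
      Finset.sum_nonneg fun i _ => mul_nonneg (by positivity) (hG i).le
    have e3 : ∑ i, G i * (2 * a * p i^2 + 4 * (a * p i - s i)^2) ≤ 44 * a / ζ + β * ∑ i, G i := by
      calc _ ≤ ∑ i, (44 * a * p i^2 * ζ / q + β * G i) := Finset.sum_le_sum fun i _ => (hone i).1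
        _ = 44 * a / (ζ * q) * ∑ i, (p i * ζ)^2 + β * ∑ i, G i := by
          rw [Finset.mul_sum, Finset.mul_sum, ← Finset.sum_add_distrib]
          refine Finset.sum_congr rfl fun i _ => ?_
          field_simp
        _ = _ := by rw [← hqs]; field_simp
    rw [hK] at e1
    rw [e1] at hmain
    have : (2 * a * (m+2) + 44 * a) / ζ = 2 * a / ζ * (m+2) + 44 * a / ζ := by ring
    rw [this]
    linarith
  have hex : ∃ i, a * q / (2 * ζ) ≤ l i := by
    by_contra hc
    push Not at hc
    have hall : ∀ i, (p i * ζ)^2 ≤ 16 * β^2 * ρ^2 := by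
      intro i
      by_cases hp : p i = 0
      · rw [hp]; simp; positivity
      · have h2 : ¬ (2 * |s i| ≤ a * |p i|) := fun h => not_le.2 (hc i) ((hone i).2 hp h)
        push Not at h2
        have h3 : |p i| ≤ 2 * |s i| := by nlinarith [abs_nonneg (p i)]
        have h4 := pow_le_pow_left₀ (abs_nonneg _) h3 2
        rw [mul_pow, sq_abs, sq_abs, hs] at h4
        have h5 : (β * y i)^2 ≤ β^2 * ρ^2 := by rw [mul_pow]; exact mul_le_mul_of_nonneg_left (hy i) (sq_nonneg _)
        have h6 : ζ^2 ≤ 4 := by nlinarith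
        calc (p i * ζ)^2 = p i ^2 * ζ^2 := by ring
          _ ≤ p i^2 * 4 := by gcongr
          _ ≤ _ := by nlinarith
    have : q ≤ n * (16 * β^2 * ρ^2) := by
      rw [hqs]
      calc _ ≤ ∑ _i : Fin n, 16 * β^2 * ρ^2 := Finset.sum_le_sum fun i _ => hall i
        _ = _ := by simp
    have hb1 : β ≤ 1 := by
      have : 1 ≤ ρ^2 := by nlinarith
      have h0 : 44 * β * 1 ≤ 44 * β * ρ^2 := by gcongr
      linarith
    have h9 : n * (16 * β^2 * ρ^2) = (44 * n * β * ρ^2) * (16/44 * β) := by ring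
    rw [h9] at this
    nlinarith
  obtain ⟨i, hi⟩ := hex
  have hpw := le_sum_G_pow hGam h1 (by simpa using hn) (Finset.mem_univ i)
  have hS : 0 ≤ ∑ i, G i := Finset.sum_nonneg fun i _ => (hG i).le
  set D := (2 * a * (m+2) + 44 * a)/β with hDdef
  have hSD : ∑ i, G i ≤ D / ζ := by
    rw [hDdef, div_div, le_div_iff₀ (by positivity)]
    rw [le_div_iff₀ hζ] at hsum
    linarith
  have h10 : a * q / (2 * ζ) ≤ (D/ζ)^(m+1) := hi.trans (hpw.trans (pow_le_pow_left₀ hS hSD _))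
  rw [div_pow, div_le_div_iff₀ (by positivity) (by positivity)] at h10
  have h11 : (a * q * ζ^m) * ζ ≤ (2 * D^(m+1)) * ζ := by
    calc _ = a * q * ζ^(m+1) := by ring
      _ ≤ _ := h10
      _ = _ := by ring
  have h12 := le_of_mul_le_mul_right h11 hζ
  have : q * ζ^m ≤ a * q * ζ^m := by
    have : 0 < q * ζ^m := by positivity
    nlinarith
  linarith
end

open scoped BigOperators
noncomputable section
section
variable {n : ℕ}

lemma line_continuous (x e : EE n) : Continuous (fun t : ℝ => x + t • e) := by fun_prop

lemma localMax_line {W : EE n → ℝ} {x : EE n} (h : IsLocalMax W x) (e : EE n) :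
    IsLocalMax (fun t : ℝ => W (x + t • e)) 0 := by
  have h1 : Filter.Tendsto (fun t : ℝ => x + t • e) (nhds 0) (nhds x) := by
    have := (line_continuous x e).tendsto 0
    simpa using this
  have h2 := h1.eventually h
  filter_upwards [h2] with t ht
  simpa using ht

lemma isCompact_sublevel {v : EE n → ℝ} (hv : Sm v) {ρ c : ℝ} (h : ∀ y, v y ≤ c → ‖y‖ ≤ ρ) :
    IsCompact {y | v y ≤ c} := by
  apply Metric.isCompact_of_isClosed_isBounded
  · exact isClosed_le hv.continuous continuous_const
  · rw [isBounded_iff_forall_norm_le]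
    exact ⟨ρ, fun y hy => h y hy⟩

lemma gsq_continuous {v : EE n → ℝ} (hv : Sm v) : Continuous (gsq v) := by
  unfold gsq
  exact continuous_finsetSum _ fun j _ => ((hv.dd _).continuous).pow 2

lemma gsq_nonneg (v : EE n → ℝ) (x : EE n) : 0 ≤ gsq v x := Finset.sum_nonneg fun _ _ => sq_nonneg _

lemma grad_at_max {m : ℕ} {A : ℝ} {v : EE n → ℝ} (hn : m + 2 ≤ n) (hA : 0 < A)
    (hv : Sol n (m+1) A v) {ρ β : ℝ} (hρ : 1 ≤ ρ) (hβ : 0 < β) (hβρ : 44 * n * β * ρ^2 ≤ 1)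
    {x : EE n} (hx : ‖x‖ ≤ ρ) (hv1 : v x < 1) (hv2 : -1 ≤ v x) (hq1 : 1 < gsq v x)
    (hqA : 8 * A ≤ gsq v x)
    (hmax : IsLocalMax (fun x => gsq v x * (1 - v x)^(2*(m+1)) * Real.exp (β * ‖x‖^2)) x) :
    gsq v x * (1 - v x) ^ m ≤
      2 * ((2 * ((m:ℝ)+1) * (m+2) + 44 * ((m:ℝ)+1))/β) ^ (m+1) := by
  obtain ⟨R, l, hR, hH, hGam, h1, hlow⟩ := hv.frame x
  have hs := hv.sm
  set q := gsq v x with hq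
  set ζ := 1 - v x with hζ
  have hζ0 : 0 < ζ := by rw [hζ]; linarith
  have hq0 : 0 < q := by linarith
  set b := fr R with hb
  set V : Fin n → ℝ := fun i => dd (b i) v x with hV
  have hentry : ∀ i j, dd (b i) (dd (b j) v) x = if i = j then l i else 0 := by
    intro i j
    have : hm R v x i j = Matrix.diagonal l i j := by rw [hH]
    simpa [Matrix.diagonal_apply, hm] using this
  set T : Fin n → Fin n → ℝ := fun i j => dd (b i) (dd (b i) (dd (b j) v)) x with hT
  have key : ∀ i, (2 * l i * V i) / q + (2*(m+1) : ℕ) * (- V i / ζ) + 2 * β * crd R x i = 0 ∧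
      (2 * l i ^2 + 2 * ∑ j, V j * T i j) / q - ((2 * l i * V i) / q)^2
        + (2*(m+1) : ℕ) * (- l i / ζ - (- V i / ζ)^2) + 2 * β ≤ 0 := by
    intro i
    have hL := localMax_line hmax (b i)
    have hfun : ∀ t : ℝ, gsq v (x + t • b i) = ∑ j, (dd (b j) v (x + t • b i))^2 :=
      fun t => gsq_frame hR v _
    have hL2 : IsLocalMax (fun t : ℝ => (∑ j, (dd (b j) v (x + t • b i))^2) *
        (1 - v (x + t • b i))^(2*(m+1)) * Real.exp (β * (‖x‖^2 + 2 * crd R x i * t + t^2))) 0 := by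
      simp only [← hfun, ← norm_sq_line hR x i]
      exact hL
    have dA : ∀ t : ℝ, HasDerivAt (fun t : ℝ => ∑ j, (dd (b j) v (x + t • b i))^2)
        (∑ j, 2 * dd (b j) v (x + t • b i) * dd (b i) (dd (b j) v) (x + t • b i)) t := by
      intro t
      refine HasDerivAt.fun_sum fun j _ => ?_
      refine HasDerivAt.congr_deriv ((dd_line (hs.dd (b j)) x (b i) t).fun_pow 2) ?_
      simp
    have dZ : ∀ t : ℝ, HasDerivAt (fun t : ℝ => 1 - v (x + t • b i)) (- dd (b i) v (x + t • b i)) t :=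
      fun t => (dd_line hs x (b i) t).const_sub 1
    have dA2 : HasDerivAt (fun t : ℝ => ∑ j, 2 * dd (b j) v (x + t • b i) * dd (b i) (dd (b j) v) (x + t • b i))
        (2 * l i ^2 + 2 * ∑ j, V j * T i j) 0 := by
      have : HasDerivAt (fun t : ℝ => ∑ j, 2 * dd (b j) v (x + t • b i) * dd (b i) (dd (b j) v) (x + t • b i))
        (∑ j, (2 * dd (b i) (dd (b j) v) (x + (0:ℝ) • b i) * dd (b i) (dd (b j) v) (x + (0:ℝ) • b i) +
          2 * dd (b j) v (x + (0:ℝ) • b i) * dd (b i) (dd (b i) (dd (b j) v)) (x + (0:ℝ) • b i))) 0 := by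
        refine HasDerivAt.fun_sum fun j _ => ?_
        exact ((dd_line (hs.dd (b j)) x (b i) 0).const_mul 2).mul (dd_line ((hs.dd (b j)).dd (b i)) x (b i) 0)
      refine HasDerivAt.congr_deriv this ?_
      rw [Finset.sum_add_distrib, Finset.mul_sum]
      simp only [zero_smul, add_zero, hentry]
      congr 1
      · simp; ring
      · exact Finset.sum_congr rfl fun j _ => by simp only [hV, hT]; ring
    have dZ2 : HasDerivAt (fun t : ℝ => - dd (b i) v (x + t • b i)) (- l i) 0 := by
      have := (dd_line (hs.dd (b i)) x (b i) 0).fun_neg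
      simpa [hentry] using this
    have hA0 : ∑ j, (dd (b j) v (x + (0:ℝ) • b i))^2 = q := by
      rw [← hfun]; simp [hq]
    have fin := logmax (2*(m+1)) dA dZ dA2 dZ2 (by rw [hA0]; exact hq0) (by simpa using hv1) hL2
    rw [hA0] at fin
    have hA1 : ∑ j, 2 * dd (b j) v (x + (0:ℝ) • b i) * dd (b i) (dd (b j) v) (x + (0:ℝ) • b i)
        = 2 * l i * V i := by
      simp only [zero_smul, add_zero, hentry]
      simp [hV]; ring
    rw [hA1] at fin
    simpa using fin
  have hE1 : ∀ j, ∑ i, es (Finset.univ.erase i) (m+1) l * T i j = 0 := by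
    intro j
    have := (eqn_deriv hR hs (m+1) hv.eq x (b j)).1
    rw [hH, (NT_diag (m+1) l).1] at this
    simpa [Matrix.trace, Matrix.diagonal_mul, hm] using this
  apply grad_alg (p := fun i => V i / ζ) (s := fun i => β * crd R x i) (y := fun i => crd R x i)
    (l := l) hn hA hGam h1 hlow (by linarith [(Nat.cast_nonneg m : (0:ℝ) ≤ m)]) hq1 hqA hζ0
    (by rw [hζ]; linarith) (fun i => rfl) hβ hβρ _ hρ
  · intro i
    have h2 := (key i).1
    push_cast at h2
    field_simp
    field_simp at h2
    linarith
  · rw [hq, gsq_frame hR]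
    refine Finset.sum_congr rfl fun i _ => ?_
    rw [div_mul_cancel₀ _ hζ0.ne']
  · have e0 : ∑ i, es (Finset.univ.erase i) (m+1) l * (2 * ∑ j, V j * T i j) / q = 0 := by
      rw [← Finset.sum_div]
      have : ∑ i, es (Finset.univ.erase i) (m+1) l * (2 * ∑ j, V j * T i j)
          = 2 * ∑ j, V j * ∑ i, es (Finset.univ.erase i) (m+1) l * T i j := by
        simp only [Finset.mul_sum]
        rw [Finset.sum_comm]
        exact Finset.sum_congr rfl fun j _ => Finset.sum_congr rfl fun i _ => by ring
      rw [this]; simp [hE1]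
    have hsum : ∑ i, es (Finset.univ.erase i) (m+1) l *
        ((2 * l i ^2 + 2 * ∑ j, V j * T i j) / q - ((2 * l i * V i) / q)^2
        + (2*(m+1) : ℕ) * (- l i / ζ - (- V i / ζ)^2) + 2 * β) ≤ 0 := by
      apply Finset.sum_nonpos
      intro i _
      exact mul_nonpos_of_nonneg_of_nonpos (G_pos hGam (Finset.mem_univ i)).le (key i).2
    refine le_trans (le_of_eq ?_) hsum
    rw [← sub_eq_zero, ← Finset.sum_sub_distrib, ← neg_eq_zero, ← Finset.sum_neg_distrib]
    rw [← e0]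
    refine Finset.sum_congr rfl fun i _ => ?_
    have h2 : 2 * l i * V i / q = 2 * (((m:ℝ)+1) * (V i / ζ) - β * crd R x i) := by
      have := (key i).1
      push_cast at this
      have e : -V i / ζ = - (V i / ζ) := by ring
      rw [e] at this
      linarith
    rw [h2]
    push_cast
    ring
  · intro i
    exact (crd_sq_le hR x i).trans (pow_le_pow_left₀ (norm_nonneg _) hx 2)

lemma grad_est {n m : ℕ} (hn : m + 2 ≤ n) {A ρ : ℝ} (hA : 0 < A) (hρ : 1 ≤ ρ) :
    ∃ C : ℝ, 0 < C ∧ ∀ v : EE n → ℝ, Sol n (m+1) A v → (∀ y, -1 ≤ v y) → (∀ y, v y ≤ 1 → ‖y‖ ≤ ρ) →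
      ∀ y, v y ≤ 1 → gsq v y * (1 - v y)^(2*(m+1)) ≤ C := by
  have hn0 : (0:ℝ) < n := by exact_mod_cast (by omega : 0 < n)
  set β : ℝ := 1 / (44 * n * ρ^2) with hβdef
  have hβ : 0 < β := by positivity
  have hβρ : 44 * n * β * ρ^2 ≤ 1 := by rw [hβdef]; field_simp; exact le_rfl
  set D := 2 * ((2 * ((m:ℝ)+1) * (m+2) + 44 * ((m:ℝ)+1))/β) ^ (m+1) with hD
  have hD0 : 0 < D := by positivity
  set M := max 1 (8 * A) with hM
  have hM0 : 1 ≤ M := le_max_left _ _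
  set C0 := M * 2^(2*(m+1)) + D * 2^(m+2) with hC0
  have hC00 : 0 < C0 := by positivity
  refine ⟨C0 * Real.exp (β * ρ^2), by positivity, ?_⟩
  intro v hv hlow hbd y hy
  set W : EE n → ℝ := fun x => gsq v x * (1 - v x)^(2*(m+1)) * Real.exp (β * ‖x‖^2) with hW
  have hWc : Continuous W := by
    have := hv.sm.continuous
    have := gsq_continuous hv.sm
    fun_prop
  obtain ⟨x, hxS, hxmax⟩ := (isCompact_sublevel hv.sm hbd).exists_isMaxOn ⟨y, hy⟩ hWc.continuousOn
  have hxS' : v x ≤ 1 := hxS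
  have hxρ := hbd x hxS
  have hpow : ∀ k : ℕ, (1 - v x)^k ≤ 2^k := fun k =>
    pow_le_pow_left₀ (by linarith) (by linarith [hlow x]) k
  have hpow0 : ∀ k : ℕ, 0 ≤ (1 - v x)^k := fun k => pow_nonneg (by linarith) k
  have hexp : Real.exp (β * ‖x‖^2) ≤ Real.exp (β * ρ^2) := by
    apply Real.exp_le_exp.2
    exact mul_le_mul_of_nonneg_left (pow_le_pow_left₀ (norm_nonneg _) hxρ 2) hβ.le
  have hmain : gsq v x * (1 - v x)^(2*(m+1)) ≤ C0 := by
    by_cases hq : gsq v x ≤ M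
    · have h1 : gsq v x * (1 - v x)^(2*(m+1)) ≤ M * 2^(2*(m+1)) :=
        mul_le_mul hq (hpow _) (hpow0 _) (by linarith)
      have : 0 < D * 2^(m+2) := by positivity
      linarith
    · push Not at hq
      rcases hxS'.eq_or_lt with h1 | h1
      · rw [h1]; simp; exact hC00.le
      · have hloc : IsLocalMax W x := by
          have : ∀ᶠ z in nhds x, v z < 1 := hv.sm.continuous.continuousAt.eventually (gt_mem_nhds h1)
          filter_upwards [this] with z hz
          exact hxmax (show v z ≤ 1 from hz.le)
        have h2 := grad_at_max hn hA hv hρ hβ hβρ hxρ h1 (hlow x)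
          (lt_of_le_of_lt (le_max_left _ _) hq) ((le_max_right _ _).trans hq.le) hloc
        have h3 : gsq v x * (1 - v x)^(2*(m+1)) = (gsq v x * (1 - v x)^m) * (1 - v x)^(m+2) := by
          rw [mul_assoc, ← pow_add]; congr 2; ring
        rw [h3]
        have h4 : (gsq v x * (1 - v x)^m) * (1 - v x)^(m+2) ≤ D * 2^(m+2) :=
          mul_le_mul h2 (hpow _) (hpow0 _) hD0.le
        have : 0 < M * 2^(2*(m+1)) := by positivity
        linarith
  have h5 : W y ≤ W x := hxmax hy
  have h6 : W x ≤ C0 * Real.exp (β * ρ^2) :=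
    mul_le_mul hmain hexp (Real.exp_pos _).le hC00.le
  have h7 : gsq v y * (1 - v y)^(2*(m+1)) ≤ W y := by
    apply le_mul_of_one_le_right
    · exact mul_nonneg (gsq_nonneg _ _) (pow_nonneg (by linarith) _)
    · exact Real.one_le_exp (by positivity)
  linarith
end
end

open scoped BigOperators
noncomputable section
section
variable {n : ℕ}

lemma hess_alg_one {a L β ρ G E P w s y : ℝ} (ha : 5 ≤ a) (hL : 0 < L) (hβ : 0 < β)
    (hβρ : 8 * β * ρ^2 ≤ 1) (hG : 0 < G) (hE : 0 ≤ E) (hs : s = β * y) (hy : y^2 ≤ ρ^2)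
    (hP : P = a * w - 2 * s) (hcase : 7/5 * G ≤ 2 * E * L ∨ G * L ≤ 16) :
    G * P^2 + G * (a * w^2) - 2 * E * L * P^2 ≤ 48 * a^2 * w^2 / L + β * G := by
  have hs2 : 8 * s^2 ≤ β := by
    rw [hs]
    have : β * (8 * β * y^2) ≤ β * (8 * β * ρ^2) := by gcongr
    nlinarith
  have h48 : 0 ≤ 48 * a^2 * w^2 / L := by positivity
  rcases hcase with h | h
  · have h1 : a * (a * w^2) ≤ 2 * P^2 + 8 * s^2 := by
      have : a * w = P + 2 * s := by linarith
      have e : a * (a * w^2) = (P + 2*s)^2 := by rw [← this]; ring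
      rw [e]; nlinarith [sq_nonneg (P - 2 * s)]
    have h2 : 5 * (a * w^2) ≤ a * (a * w^2) := by
      apply mul_le_mul_of_nonneg_right ha; positivity
    have h3 : a * w^2 ≤ 2/5 * P^2 + β := by nlinarith [sq_nonneg s]
    have h4 : 7/5 * G * P^2 ≤ 2 * E * L * P^2 := mul_le_mul_of_nonneg_right h (sq_nonneg _)
    have h5 := mul_le_mul_of_nonneg_left h3 hG.le
    nlinarith
  · have h1 : P^2 ≤ 2 * (a^2 * w^2) + 8 * s^2 := by
      rw [hP]; nlinarith [sq_nonneg (a * w + 2 * s)]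
    have h2 : a * w^2 ≤ a^2 * w^2 := by
      apply mul_le_mul_of_nonneg_right _ (sq_nonneg w); nlinarith
    have h3 : P^2 + a * w^2 ≤ 3 * (a^2 * w^2) + β := by linarith
    have h4 := mul_le_mul_of_nonneg_left h3 hG.le
    have h5 : G * (3 * (a^2 * w^2)) ≤ 48 * a^2 * w^2 / L := by
      rw [le_div_iff₀ hL]
      have : (G * L) * (3 * (a^2 * w^2)) ≤ 16 * (3 * (a^2 * w^2)) :=
        mul_le_mul_of_nonneg_right h (by positivity)
      linarith
    have h6 : 0 ≤ 2 * E * L * P^2 := by positivity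
    nlinarith

lemma hess_alg {m : ℕ} (hn : m + 2 ≤ n) {a ζ β ρ A C1 : ℝ} {l V Y X y : Fin n → ℝ} {i1 : Fin n}
    (hA : 0 < A) (hGam : Gam Finset.univ (m+2) l) (h1 : es Finset.univ (m+2) l = 1)
    (hlow : -A ≤ es Finset.univ (m+3) l) (hmax : ∀ j, l j ≤ l i1)
    (hbig : 16 * (n + (m+3) * A) ≤ l i1) (hLζ : 1 ≤ l i1 * ζ)
    (ha : 5 ≤ a) (hζ : 0 < ζ) (hβ : 0 < β) (hβρ : 8 * β * ρ^2 ≤ 1)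
    (hy : ∀ i, y i ^2 ≤ ρ^2) (hV : ∑ i, V i ^2 ≤ C1)
    (hcrit : ∀ i, X i / l i1 = a * (V i / ζ) - 2 * (β * y i))
    (hY : 2 * ∑ i ∈ Finset.univ.erase i1, es ((Finset.univ.erase i1).erase i) m l * X i ^2
        ≤ ∑ i, es (Finset.univ.erase i) (m+1) l * Y i)
    (hmain : ∑ i, es (Finset.univ.erase i) (m+1) l *
      (Y i / l i1 - (X i / l i1)^2 - a * (l i / ζ + (V i / ζ)^2) + 2 * β) ≤ 0) :
    l i1 * ζ^(m+1) ≤ ((a * (m+2) + 48 * a^2 * C1)/β)^(m+1) := by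
  set G : Fin n → ℝ := fun i => es (Finset.univ.erase i) (m+1) l with hGdef
  have hG : ∀ i, 0 < G i := fun i => G_pos hGam (Finset.mem_univ i)
  set L := l i1 with hL
  have hnn : (1:ℝ) ≤ n := by exact_mod_cast (by omega : 1 ≤ n)
  have hmA : 0 < (m+2) * A := by positivity
  have hL0 : 0 < L := by nlinarith
  have hLA : 2 * A ≤ L := by nlinarith
  have hC1 : 0 ≤ C1 := le_trans (Finset.sum_nonneg fun i _ => sq_nonneg _) hV
  have hD := condD (Finset.mem_univ i1) h1 hA hlow hLA
  have hD' : L * G i1 ≤ 2 := hD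
  set E : Fin n → ℝ := fun i => if i = i1 then 0 else es ((Finset.univ.erase i1).erase i) m l with hEdef
  have hEpos : ∀ i, i ≠ i1 → 0 < es ((Finset.univ.erase i1).erase i) m l := by
    intro i hi
    exact ((hGam.erase (Finset.mem_univ i1)).erase (Finset.mem_erase.2 ⟨hi, Finset.mem_univ _⟩)) m le_rfl
  have hE : ∀ i, 0 ≤ E i := by
    intro i
    simp only [hEdef]
    split_ifs with h
    · exact le_rfl
    · exact (hEpos i h).le
  have hcase : ∀ i, 7/5 * G i ≤ 2 * E i * L ∨ G i * L ≤ 16 := by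
    intro i
    by_cases hi : i = i1
    · right; rw [hi]; linarith
    · by_cases h8 : G i ≤ 8 * G i1
      · right; nlinarith
      · left
        push Not at h8
        have hi' : i ∈ Finset.univ.erase i1 := Finset.mem_erase.2 ⟨hi, Finset.mem_univ _⟩
        have hi1' : i1 ∈ Finset.univ.erase i := Finset.mem_erase.2 ⟨fun h => hi h.symm, Finset.mem_univ _⟩
        have e1 := es_erase hi' m l
        have e2 := es_erase hi1' m l
        rw [Finset.erase_right_comm] at e2
        have e3 : G i - G i1 = es ((Finset.univ.erase i1).erase i) m l * (L - l i) := by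
          simp only [hGdef]; rw [e1, e2]; ring
        have hneg := neg_bound hA hGam h1 hlow (Finset.mem_univ i) (Finset.mem_univ i1)
          (fun j _ => hmax j) (by simpa using hbig)
        have hEi : E i = es ((Finset.univ.erase i1).erase i) m l := by simp [hEdef, hi]
        rw [← hEi] at e3
        have h9 : E i * (L - l i) ≤ E i * (5/4 * L) :=
          mul_le_mul_of_nonneg_left (by linarith) (hE i)
        linarith
  have hone : ∀ i, G i * (X i / L)^2 + G i * (a * (V i / ζ)^2) - 2 * E i * L * (X i / L)^2
      ≤ 48 * a^2 * (V i / ζ)^2 / L + β * G i := fun i =>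
    hess_alg_one ha hL0 hβ hβρ (hG i) (hE i) rfl (hy i) (hcrit i) (hcase i)
  have hK : ∑ i, l i * G i = (m+2) := by
    have := es_sum_mul Finset.univ (m+1) l
    rw [h1] at this
    rw [hGdef]
    simp only
    rw [this]
    push_cast; ring
  have hE2 : ∑ i ∈ Finset.univ.erase i1, es ((Finset.univ.erase i1).erase i) m l * X i ^2
      = ∑ i, E i * X i^2 := by
    rw [← Finset.add_sum_erase _ _ (Finset.mem_univ i1)]
    simp only [hEdef, if_true, zero_mul, zero_add]
    refine Finset.sum_congr rfl fun i hi => ?_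
    rw [if_neg (Finset.ne_of_mem_erase hi)]
  rw [hE2] at hY
  have hsum : β * ∑ i, G i ≤ (a * (m+2) + 48 * a^2 * C1) / ζ := by
    have e1 : ∑ i, G i * (Y i / L - (X i / L)^2 - a * (l i / ζ + (V i / ζ)^2) + 2 * β)
        = (∑ i, G i * Y i) / L - ∑ i, G i * (X i / L)^2 - ∑ i, G i * (a * (V i / ζ)^2)
          - a / ζ * ∑ i, l i * G i + 2 * β * ∑ i, G i := by
      rw [Finset.mul_sum, Finset.mul_sum, Finset.sum_div, ← Finset.sum_sub_distrib,
        ← Finset.sum_sub_distrib, ← Finset.sum_sub_distrib, ← Finset.sum_add_distrib]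
      exact Finset.sum_congr rfl fun i _ => by ring
    have e2 : ∑ i, 2 * E i * L * (X i / L)^2 ≤ (∑ i, G i * Y i) / L := by
      rw [le_div_iff₀ hL0]
      refine le_trans (le_of_eq ?_) hY
      rw [Finset.mul_sum, Finset.sum_mul]
      refine Finset.sum_congr rfl fun i _ => ?_
      field_simp
    have e3 : ∑ i, G i * (X i / L)^2 + ∑ i, G i * (a * (V i / ζ)^2) - ∑ i, 2 * E i * L * (X i / L)^2
        ≤ 48 * a^2 / (L * ζ^2) * ∑ i, V i ^2 + β * ∑ i, G i := by
      rw [← Finset.sum_add_distrib, ← Finset.sum_sub_distrib, Finset.mul_sum, Finset.mul_sum,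
        ← Finset.sum_add_distrib]
      refine Finset.sum_le_sum fun i _ => (hone i).trans (le_of_eq ?_)
      field_simp
    have e4 : 48 * a^2 / (L * ζ^2) * ∑ i, V i ^2 ≤ 48 * a^2 * C1 / ζ := by
      calc _ ≤ 48 * a^2 / ζ * C1 := by
            apply mul_le_mul _ hV (Finset.sum_nonneg fun i _ => sq_nonneg _) (by positivity)
            apply div_le_div_of_nonneg_left (by positivity) hζ
            nlinarith
        _ = _ := by ring
    rw [hK] at e1
    rw [e1] at hmain
    have : (a * (m+2) + 48 * a^2 * C1) / ζ = a / ζ * (m+2) + 48 * a^2 * C1 / ζ := by ring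
    rw [this]
    linarith
  have hpw := le_sum_G_pow hGam h1 (by simpa using hn) (Finset.mem_univ i1)
  have hS : 0 ≤ ∑ i, G i := Finset.sum_nonneg fun i _ => (hG i).le
  set D := (a * (m+2) + 48 * a^2 * C1)/β with hDdef
  have hSD : ∑ i, G i ≤ D / ζ := by
    rw [hDdef, div_div, le_div_iff₀ (by positivity)]
    rw [le_div_iff₀ hζ] at hsum
    linarith
  have h10 : L ≤ (D/ζ)^(m+1) := (hpw.trans (pow_le_pow_left₀ hS hSD _))
  rwa [div_pow, le_div_iff₀ (by positivity)] at h10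

lemma hess_at_max {m : ℕ} {A : ℝ} {v : EE n → ℝ} (hn : m + 2 ≤ n) (hA : 0 < A)
    (hv : Sol n (m+1) A v) {ρ β C1 : ℝ} (hβ : 0 < β) (hβρ : 8 * β * ρ^2 ≤ 1)
    {x : EE n} (hx : ‖x‖ ≤ ρ) (hv1 : v x < 1/2) (hC1 : gsq v x ≤ C1)
    {R : Matrix (Fin n) (Fin n) ℝ} {l : Fin n → ℝ} (hR : R.transpose * R = 1)
    (hH : hm R v x = Matrix.diagonal l) (hGam : Gam Finset.univ (m+2) l)
    (h1 : es Finset.univ (m+2) l = 1) (hlow : -A ≤ es Finset.univ (m+3) l)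
    {i1 : Fin n} (himax : ∀ j, l j ≤ l i1)
    (hbig : 16 * (n + (m+3) * A) ≤ l i1) (hLζ : 1 ≤ l i1 * (1/2 - v x))
    (hmax : IsLocalMax (fun x => dd (fr R i1) (dd (fr R i1) v) x * (1/2 - v x)^(m+6)
      * Real.exp (β * ‖x‖^2)) x) :
    l i1 * (1/2 - v x) ^ (m+1) ≤
      ((((m:ℝ)+6) * (m+2) + 48 * ((m:ℝ)+6)^2 * C1)/β) ^ (m+1) := by
  have hs := hv.sm
  set ζ := 1/2 - v x with hζ
  have hζ0 : 0 < ζ := by rw [hζ]; linarith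
  set b := fr R with hb
  set V : Fin n → ℝ := fun i => dd (b i) v x with hV
  have hentry : ∀ i j, dd (b i) (dd (b j) v) x = if i = j then l i else 0 := by
    intro i j
    have : hm R v x i j = Matrix.diagonal l i j := by rw [hH]
    simpa [Matrix.diagonal_apply, hm] using this
  have hL0 : 0 < l i1 := by
    have : (1:ℝ) ≤ n := by exact_mod_cast (by omega : 1 ≤ n)
    have hmA : 0 < (m+3) * A := by positivity
    nlinarith
  have sw : Sm (dd (b i1) (dd (b i1) v)) := (hs.dd _).dd _
  set w := dd (b i1) (dd (b i1) v) with hw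
  have hw0 : w x = l i1 := by rw [hw, hentry]; simp
  have key : ∀ i, (dd (b i) w x) / l i1 + (m+6 : ℕ) * (- V i / ζ) + 2 * β * crd R x i = 0 ∧
      (dd (b i) (dd (b i) w) x) / l i1 - ((dd (b i) w x) / l i1)^2
        + (m+6 : ℕ) * (- l i / ζ - (- V i / ζ)^2) + 2 * β ≤ 0 := by
    intro i
    have hL := localMax_line hmax (b i)
    simp only [hb, norm_sq_line hR x i] at hL
    have dZ : ∀ t : ℝ, HasDerivAt (fun t : ℝ => 1/2 - v (x + t • b i)) (- dd (b i) v (x + t • b i)) t :=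
      fun t => (dd_line hs x (b i) t).const_sub (1/2)
    have dZ2 : HasDerivAt (fun t : ℝ => - dd (b i) v (x + t • b i)) (- l i) 0 := by
      have := (dd_line (hs.dd (b i)) x (b i) 0).fun_neg
      simpa [hentry] using this
    have dA2 : HasDerivAt (fun t : ℝ => dd (b i) w (x + t • b i)) (dd (b i) (dd (b i) w) x) 0 := by
      simpa using dd_line (sw.dd (b i)) x (b i) 0
    have fin := logmax (m+6) (dd_line sw x (b i)) dZ dA2 dZ2
      (by simpa [hw0] using hL0) (by simpa [hζ] using hζ0) hL
    simp only [zero_smul, add_zero, hw0] at fin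
    exact fin
  have hXX : ∀ i, hm R (dd (b i1) v) x i1 i = dd (b i) w x := by
    intro i
    simp only [hm]
    rw [dd_comm (hs.dd _) (fr R i1) (fr R i)]
  have hYY : ∀ i, hm R (dd (b i1) (dd (b i1) v)) x i i = dd (b i) (dd (b i) w) x := fun i => rfl
  have hE := eqn_deriv hR hs (m+1) hv.eq x (b i1)
  rw [hH] at hE
  have hso := second_order m l hGam (hm R (dd (b i1) v) x) _ (hm_symm R (hs.dd _) x) hE.1 hE.2
  apply hess_alg (V := V) (Y := fun i => dd (b i) (dd (b i) w) x) (X := fun i => dd (b i) w x)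
    (y := crd R x) hn hA hGam h1 hlow himax hbig hLζ (by linarith [(Nat.cast_nonneg m : (0:ℝ) ≤ m)]) hζ0 hβ hβρ
  · intro i
    exact (crd_sq_le hR x i).trans (pow_le_pow_left₀ (norm_nonneg _) hx 2)
  · rw [gsq_frame hR] at hC1; exact hC1
  · intro i
    have := (key i).1
    push_cast at this
    have e : -V i / ζ = - (V i / ζ) := by ring
    rw [e] at this
    linarith
  · refine le_trans ?_ hso
    rw [← Finset.add_sum_erase _ _ (Finset.mem_univ i1), two_mul]
    apply add_le_add
    · refine le_of_eq (Finset.sum_congr rfl fun i _ => ?_)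
      rw [hXX]
    · refine Finset.sum_le_sum fun i hi => ?_
      have hi1 : i1 ∈ Finset.univ.erase i :=
        Finset.mem_erase.2 ⟨(Finset.ne_of_mem_erase hi).symm, Finset.mem_univ _⟩
      have hsy : hm R (dd (b i1) v) x i i1 = hm R (dd (b i1) v) x i1 i := by
        conv_lhs => rw [← hm_symm R (hs.dd _) x]
        rfl
      rw [← hXX, ← hsy, Finset.erase_right_comm]
      refine Finset.single_le_sum (f := fun j => es ((Finset.univ.erase i).erase j) m l
        * hm R (dd (b i1) v) x i j ^2) (fun j hj => ?_) hi1
      apply mul_nonneg _ (sq_nonneg _)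
      exact (((hGam.erase (Finset.mem_univ i)).erase hj) m le_rfl).le
  · apply Finset.sum_nonpos
    intro i _
    refine mul_nonpos_of_nonneg_of_nonpos (G_pos hGam (Finset.mem_univ i)).le ?_
    have := (key i).2
    push_cast at this
    refine le_trans (le_of_eq ?_) this
    ring

end
end

open scoped BigOperators
noncomputable section
section
variable {n : ℕ}
open Matrix

lemma crd_sum_sq {R : Matrix (Fin n) (Fin n) ℝ} (hR : Rᵀ * R = 1) (x : EE n) :
    ∑ i, crd R x i ^ 2 = ‖x‖^2 := by
  rw [EuclideanSpace.norm_sq_eq]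
  simp only [Real.norm_eq_abs, sq_abs]
  exact orth_sum_sq hR (fun j => x j)

lemma quad_crd {R : Matrix (Fin n) (Fin n) ℝ} (hR : Rᵀ * R = 1) {v : EE n → ℝ} (hv : Sm v)
    {x : EE n} {l : Fin n → ℝ} (hH : hm R v x = diagonal l) (e : EE n) :
    dd e (dd e v) x = ∑ i, l i * crd R e i ^2 := by
  have h1 : hm 1 v x = Rᵀ * diagonal l * R := by
    rw [← hH, hm_conj R hv]
    calc _ = (Rᵀ * R) * hm 1 v x * (Rᵀ * R) := by rw [hR]; simp
      _ = _ := by simp only [Matrix.mul_assoc]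
  rw [dd_dd_vec hv, h1]
  have h2 : ∀ i j, (Rᵀ * diagonal l * R) i j = ∑ k, R k i * l k * R k j := by
    intro i j
    rw [Matrix.mul_apply]
    refine Finset.sum_congr rfl fun k _ => ?_
    rw [Matrix.mul_diagonal]; rfl
  simp only [h2, crd]
  have h3 : ∀ k, l k * (∑ j, R k j * e j)^2 = ∑ i, ∑ j, e i * e j * (R k i * l k * R k j) := by
    intro k
    rw [sq, Finset.sum_mul_sum, Finset.mul_sum]
    refine Finset.sum_congr rfl fun i _ => ?_
    rw [Finset.mul_sum]
    exact Finset.sum_congr rfl fun j _ => by ring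
  simp only [h3, Finset.mul_sum]
  rw [Finset.sum_comm' (t' := Finset.univ) (s' := fun _ => Finset.univ) (by simp)]
  symm
  rw [Finset.sum_comm]
  conv_rhs => rw [Finset.sum_comm]
  refine Finset.sum_congr rfl fun i _ => ?_
  rw [Finset.sum_comm]

lemma hess_est {m : ℕ} (hn : m + 2 ≤ n) {A ρ : ℝ} (hA : 0 < A) (hρ : 1 ≤ ρ) :
    ∃ C : ℝ, 0 < C ∧ ∀ v : EE n → ℝ, Sol n (m+1) A v → (∀ y, -1 ≤ v y) → (∀ y, v y ≤ 1 → ‖y‖ ≤ ρ) →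
      ∀ y, v y ≤ 1/4 → ∀ e : EE n, ‖e‖ = 1 → dd e (dd e v) y ≤ C := by
  obtain ⟨Cg, hCg, hgrad⟩ := grad_est hn hA hρ
  have hn0 : 0 < n := by omega
  set β : ℝ := 1 / (8 * ρ^2) with hβdef
  have hβ : 0 < β := by positivity
  have hβρ : 8 * β * ρ^2 ≤ 1 := by rw [hβdef]; field_simp; exact le_rfl
  set C1 := Cg * 2^(2*(m+1)) with hC1
  have hC10 : 0 < C1 := by positivity
  set D := ((((m:ℝ)+6) * (m+2) + 48 * ((m:ℝ)+6)^2 * C1)/β) ^ (m+1) with hD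
  have hD0 : 0 < D := by positivity
  set B0 := 16 * (n + (m+3) * A) with hB0
  have hB00 : 0 < B0 := by positivity
  set C0 := B0 * 2^(m+6) + 2^(m+5) + D * 2^5 with hC0
  have hC00 : 0 < C0 := by positivity
  refine ⟨C0 * Real.exp (β * ρ^2) * 4^(m+6), by positivity, ?_⟩
  intro v hv hlow hbd y hy e he
  have hs := hv.sm
  set W : EE n × EE n → ℝ := fun z => dd z.2 (dd z.2 v) z.1 * (1/2 - v z.1)^(m+6)
    * Real.exp (β * ‖z.1‖^2) with hW
  have hWc : Continuous W := by
    have h1 := hv.sm.continuous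
    have h2 : Continuous (fun z : EE n × EE n => dd z.2 (dd z.2 v) z.1) := by
      simp only [dd_dd_vec hs]
      have : ∀ i j, Continuous (fun x => hm 1 v x i j) := fun i j => ((hs.dd _).dd _).continuous
      refine continuous_finsetSum _ fun i _ => continuous_finsetSum _ fun j _ => ?_
      have h3 := (this i j).comp (continuous_fst (X := EE n) (Y := EE n))
      refine Continuous.mul ?_ h3
      fun_prop
    fun_prop
  have hbd2 : ∀ y, v y ≤ 1/2 → ‖y‖ ≤ ρ := fun y hy => hbd y (by linarith)
  have hcpt := (isCompact_sublevel hs hbd2).prod (isCompact_sphere (0 : EE n) 1)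
  obtain ⟨⟨x, e0⟩, hxS, hxmax⟩ := hcpt.exists_isMaxOn
    ⟨(y, e), ⟨(show v y ≤ 1/2 by linarith), by simpa using he⟩⟩ hWc.continuousOn
  have hvx : v x ≤ 1/2 := hxS.1
  have he0 : ‖e0‖ = 1 := by simpa using hxS.2
  have hxρ := hbd2 x hvx
  obtain ⟨R, l, hR, hH, hGam, h1, hlo⟩ := hv.frame x
  obtain ⟨i1, -, hi1⟩ := Finset.exists_max_image Finset.univ l ⟨⟨0, hn0⟩, Finset.mem_univ _⟩
  have himax : ∀ j, l j ≤ l i1 := fun j => hi1 j (Finset.mem_univ j)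
  have hle : ∀ e : EE n, ‖e‖ = 1 → dd e (dd e v) x ≤ l i1 := by
    intro e he
    rw [quad_crd hR hs hH]
    calc _ ≤ ∑ i, l i1 * crd R e i ^2 := Finset.sum_le_sum fun i _ =>
          mul_le_mul_of_nonneg_right (himax i) (sq_nonneg _)
      _ = l i1 := by rw [← Finset.mul_sum, crd_sum_sq hR, he]; simp
  have hb1 : dd (fr R i1) (dd (fr R i1) v) x = l i1 := by
    have : hm R v x i1 i1 = Matrix.diagonal l i1 i1 := by rw [hH]
    simpa [hm] using this
  set ζ := 1/2 - v x with hζ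
  have hζ0 : 0 ≤ ζ := by rw [hζ]; linarith
  have hζ2 : ζ ≤ 2 := by rw [hζ]; linarith [hlow x]
  have hpow : ∀ k : ℕ, ζ^k ≤ 2^k := fun k => pow_le_pow_left₀ hζ0 hζ2 k
  have hpow0 : ∀ k : ℕ, 0 ≤ ζ^k := fun k => pow_nonneg hζ0 k
  have hfr : ‖fr R i1‖ = 1 := fr_norm hR i1
  have hWx : W (x, e0) ≤ l i1 * ζ^(m+6) * Real.exp (β * ‖x‖^2) := by
    simp only [hW]
    apply mul_le_mul_of_nonneg_right _ (Real.exp_pos _).le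
    exact mul_le_mul_of_nonneg_right (hle e0 he0) (hpow0 _)
  have hmain : l i1 * ζ^(m+6) ≤ C0 := by
    have p1 : 0 < B0 * 2^(m+6) := by positivity
    have p2 : (0:ℝ) < 2^(m+5) := by positivity
    have p3 : 0 < D * 2^5 := by positivity
    by_cases hq : l i1 ≤ B0
    · have : l i1 * ζ^(m+6) ≤ B0 * 2^(m+6) := mul_le_mul hq (hpow _) (hpow0 _) hB00.le
      linarith
    push Not at hq
    by_cases hq2 : l i1 * ζ < 1
    · have : l i1 * ζ^(m+6) = (l i1 * ζ) * ζ^(m+5) := by ring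
      rw [this]
      have : (l i1 * ζ) * ζ^(m+5) ≤ 1 * 2^(m+5) := mul_le_mul hq2.le (hpow _) (hpow0 _) (by norm_num)
      linarith
    push Not at hq2
    have hvx' : v x < 1/2 := by
      rcases hvx.lt_or_eq with h | h
      · exact h
      · exfalso
        have : ζ = 0 := by rw [hζ, h]; ring
        rw [this] at hq2; linarith
    have hC1x : gsq v x ≤ C1 := by
      have h2 := hgrad v hv hlow hbd x (by linarith)
      have h3 : (1/2:ℝ)^(2*(m+1)) ≤ (1 - v x)^(2*(m+1)) := pow_le_pow_left₀ (by norm_num) (by linarith) _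
      have h4 : gsq v x * (1/2)^(2*(m+1)) ≤ Cg :=
        (mul_le_mul_of_nonneg_left h3 (gsq_nonneg v x)).trans h2
      rw [one_div, inv_pow, ← div_eq_mul_inv, div_le_iff₀ (by positivity)] at h4
      exact h4
    have hloc : IsLocalMax (fun x => dd (fr R i1) (dd (fr R i1) v) x * (1/2 - v x)^(m+6)
        * Real.exp (β * ‖x‖^2)) x := by
      have : ∀ᶠ z in nhds x, v z < 1/2 := hv.sm.continuous.continuousAt.eventually (gt_mem_nhds hvx')
      filter_upwards [this] with z hz
      have h5 : W (z, fr R i1) ≤ W (x, e0) :=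
        hxmax (show (z, fr R i1) ∈ _ from ⟨(show v z ≤ 1/2 from hz.le), by simpa using hfr⟩)
      rw [hb1]
      exact h5.trans hWx
    have h6 := hess_at_max hn hA hv hβ hβρ hxρ hvx' hC1x hR hH hGam h1 hlo himax hq.le hq2 hloc
    have : l i1 * ζ^(m+6) = (l i1 * ζ^(m+1)) * ζ^5 := by ring
    rw [this]
    have : (l i1 * ζ^(m+1)) * ζ^5 ≤ D * 2^5 := mul_le_mul h6 (hpow _) (hpow0 _) hD0.le
    linarith
  have hexp : Real.exp (β * ‖x‖^2) ≤ Real.exp (β * ρ^2) := by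
    apply Real.exp_le_exp.2
    exact mul_le_mul_of_nonneg_left (pow_le_pow_left₀ (norm_nonneg _) hxρ 2) hβ.le
  have hfin : W (x, e0) ≤ C0 * Real.exp (β * ρ^2) := by
    refine hWx.trans ?_
    calc _ ≤ C0 * Real.exp (β * ‖x‖^2) := mul_le_mul_of_nonneg_right hmain (Real.exp_pos _).le
      _ ≤ _ := mul_le_mul_of_nonneg_left hexp hC00.le
  have h5 : W (y, e) ≤ W (x, e0) := hxmax (show (y, e) ∈ _ from ⟨(show v y ≤ 1/2 by linarith), by simpa using he⟩)
  by_cases h0 : dd e (dd e v) y ≤ 0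
  · exact h0.trans (by positivity)
  push Not at h0
  have h7 : dd e (dd e v) y * (1/4)^(m+6) ≤ W (y, e) := by
    simp only [hW]
    have h8 : (1/4:ℝ)^(m+6) ≤ (1/2 - v y)^(m+6) := pow_le_pow_left₀ (by norm_num) (by linarith) _
    have h9 := mul_le_mul_of_nonneg_left h8 h0.le
    refine h9.trans ?_
    apply le_mul_of_one_le_right
    · exact mul_nonneg h0.le (pow_nonneg (by linarith) _)
    · exact Real.one_le_exp (by positivity)
  have h8 : dd e (dd e v) y * (1/4)^(m+6) ≤ C0 * Real.exp (β * ρ^2) := by linarith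
  rw [one_div, inv_pow, ← div_eq_mul_inv, div_le_iff₀ (by positivity)] at h8
  exact h8

end
end

open scoped BigOperators
noncomputable section
section
variable {n : ℕ}
open Matrix

lemma dd_affine {f : EE n → ℝ} (hf : Sm f) (x : EE n) (r : ℝ) (e y : EE n) :
    dd e (fun y => f (x + r • y)) y = r * dd e f (x + r • y) := by
  have h0 : Sm (fun y : EE n => f (x + r • y)) :=
    hf.comp (contDiff_const.add (contDiff_id.const_smul r))
  apply dd_eq_of_line h0
  have h := dd_line hf (x + r • y) (r • e) 0
  rw [dd_smul_dir] at h
  simp only [zero_smul, add_zero] at h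
  refine h.congr_of_eventuallyEq (Filter.Eventually.of_forall fun t => ?_)
  simp only [smul_add, add_assoc]
  rw [smul_comm]

def scl (u : EE n → ℝ) (x : EE n) (r : ℝ) : EE n → ℝ := fun y => (1/r^2) * u (x + r • y)

lemma scl_sm {u : EE n → ℝ} (hu : Sm u) (x : EE n) (r : ℝ) : Sm (scl u x r) :=
  contDiff_const.mul (hu.comp (contDiff_const.add (contDiff_id.const_smul r)))

lemma scl_dd {u : EE n → ℝ} (hu : Sm u) (x : EE n) {r : ℝ} (hr : 0 < r) (a b y : EE n) :
    dd a (dd b (scl u x r)) y = dd a (dd b u) (x + r • y) := by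
  have h1 : dd b (scl u x r) = fun y => (1/r) * dd b u (x + r • y) := by
    ext y
    unfold scl
    rw [dd_const_mul (f := fun y => u (x + r • y)) (hu.comp (contDiff_const.add (contDiff_id.const_smul r))), dd_affine hu]
    field_simp
  rw [h1, dd_const_mul (f := fun y => dd b u (x + r • y)) ((hu.dd b).comp (contDiff_const.add (contDiff_id.const_smul r))),
    dd_affine (hu.dd b)]
  field_simp

lemma scl_sol {k : ℕ} {A : ℝ} {u : EE n → ℝ} (hu : Sol n k A u) (x : EE n) {r : ℝ} (hr : 0 < r) :
    Sol n k A (scl u x r) := by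
  have e : ∀ y, hm 1 (scl u x r) y = hm 1 u (x + r • y) := by
    intro y; ext i j; exact scl_dd hu.sm x hr _ _ y
  exact ⟨scl_sm hu.sm x r, fun y => by rw [e]; exact hu.pos _, fun y => by rw [e]; exact hu.eq _,
    fun y => by rw [e]; exact hu.low _⟩

lemma hess_upper {m : ℕ} (hn : m + 2 ≤ n) {A : ℝ} (hA : 0 < A) {u : EE n → ℝ}
    (hu : Sol n (m+1) A u) (hq : QuadraticGrowth u) :
    ∃ C : ℝ, 0 < C ∧ ∀ x, ∀ e : EE n, ‖e‖ = 1 → dd e (dd e u) x ≤ C := by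
  obtain ⟨B, hB, hgrow⟩ := hq
  set ρ : ℝ := max 1 (4 * B + 1) with hρ
  have h1ρ : 1 ≤ ρ := le_max_left _ _
  obtain ⟨C, hC, hest⟩ := hess_est hn hA h1ρ
  refine ⟨C, hC, fun x e he => ?_⟩
  -- choose the radius
  set S : ℝ := B⁻¹ * ‖x‖^2 + B + 4 * |u x| + 1 with hS
  have hS1 : 1 ≤ S := by
    have : 0 ≤ B⁻¹ * ‖x‖^2 := by positivity
    have := abs_nonneg (u x)
    linarith
  have hr : (0:ℝ) < S := by linarith
  have hSS : S ≤ S^2 := by nlinarith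
  have hlow : ∀ y, B⁻¹/2 * ‖y‖^2 - 1 ≤ scl u x S y := by
    intro y
    have h1 := hgrow (x + S • y)
    have h2 : S^2 * ‖y‖^2 / 2 - ‖x‖^2 ≤ ‖x + S • y‖^2 := by
      have h3 : ‖S • y‖ ≤ ‖x + S • y‖ + ‖x‖ := by
        have := norm_sub_le (x + S • y) x
        simpa using this
      rw [norm_smul, Real.norm_eq_abs, abs_of_pos hr] at h3
      have h4 : 0 ≤ S * ‖y‖ := by positivity
      have h5 : (S * ‖y‖)^2 ≤ (‖x + S • y‖ + ‖x‖)^2 := by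
        apply pow_le_pow_left₀ h4 h3
      nlinarith [sq_nonneg (‖x + S • y‖ - ‖x‖)]
    have h6 : B⁻¹ * (S^2 * ‖y‖^2 / 2 - ‖x‖^2) ≤ B⁻¹ * ‖x + S • y‖^2 :=
      mul_le_mul_of_nonneg_left h2 (by positivity)
    unfold scl
    rw [one_div, ← div_eq_inv_mul, le_div_iff₀ (by positivity)]
    have := abs_nonneg (u x)
    nlinarith
  have := hest (scl u x S) (scl_sol hu x hr)
    (fun y => by
      have := hlow y
      have h : 0 ≤ B⁻¹/2 * ‖y‖^2 := by positivity
      linarith)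
    (fun y hy => by
      have h1 := hlow y
      have h2 : B⁻¹ * ‖y‖^2 ≤ 4 := by linarith
      have h3 : ‖y‖^2 ≤ 4 * B := by
        rw [inv_mul_le_iff₀ hB] at h2; linarith
      have h4 : ‖y‖ ≤ 4 * B + 1 := by nlinarith [norm_nonneg y, sq_nonneg (‖y‖ - 1)]
      exact h4.trans (le_max_right _ _))
    0 (by
      unfold scl
      simp only [smul_zero, add_zero]
      rw [one_div, ← div_eq_inv_mul, div_le_iff₀ (by positivity)]
      have h0 : 0 ≤ B⁻¹ * ‖x‖^2 := by positivity
      have := le_abs_self (u x)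
      linarith) e he
  rw [scl_dd hu.sm x hr] at this
  simpa using this

/-- uniform bound of all the eigenvalues. -/
lemma eig_bound {k : ℕ} (hn : k + 1 ≤ n) {A : ℝ} (hA : 0 < A) {u : EE n → ℝ}
    (hu : Sol n k A u) (hq : QuadraticGrowth u) :
    ∃ M : ℝ, 1 ≤ M ∧ ∀ x (R : Matrix (Fin n) (Fin n) ℝ) (l : Fin n → ℝ), Rᵀ * R = 1 →
      hm R u x = diagonal l → ∀ i, |l i| ≤ M := by
  have key : ∀ x (R : Matrix (Fin n) (Fin n) ℝ) (l : Fin n → ℝ), Rᵀ * R = 1 →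
      hm R u x = diagonal l → ∀ j, es Finset.univ j l = NS j (hm 1 u x) := by
    intro x R l h1 h2 j
    rw [← NS_frame h1 hu.sm j x, h2, (NT_diag j l).2]
  rcases k with _ | m
  · refine ⟨1 + 2 * A, by linarith, fun x R l h1 h2 i => ?_⟩
    have k1 := key x R l h1 h2 1
    have k2 := key x R l h1 h2 2
    rw [hu.eq] at k1
    have hl := hu.low x
    simp only [zero_add] at hl
    rw [← k2] at hl
    have e := es_sum_sq (s := Finset.univ) 0 l
    simp only [es_zero, mul_one, zero_add, k1, Nat.cast_zero] at e
    have h3 : l i ^ 2 ≤ ∑ j, l j ^ 2 :=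
      Finset.single_le_sum (f := fun j => l j ^ 2) (fun j _ => sq_nonneg _) (Finset.mem_univ i)
    apply abs_le_of_sq_le_sq
    · nlinarith
    · linarith
  · obtain ⟨C, hC, hup⟩ := hess_upper (by omega) hA hu hq
    refine ⟨n * C + 1, by have : 0 ≤ n * C := by positivity
                          linarith, fun x R l h1 h2 i => ?_⟩
    have hle : ∀ j, l j ≤ C := by
      intro j
      have := hup x (fr R j) (fr_norm h1 j)
      have e : hm R u x j j = l j := by rw [h2]; simp
      rw [← e]; exact this
    have k1 := key x R l h1 h2 1
    have hp := hu.pos x 1 (by omega)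
    rw [← k1, es_one] at hp
    have hC2 : C ≤ n * C := by
      have : (1:ℝ) ≤ n := by exact_mod_cast (by omega : 1 ≤ n)
      nlinarith
    rw [abs_le]
    constructor
    · have h3 : ∑ j, l j = l i + ∑ j ∈ Finset.univ.erase i, l j :=
        (Finset.add_sum_erase _ _ (Finset.mem_univ i)).symm
      have h4 : ∑ j ∈ Finset.univ.erase i, l j ≤ ∑ j : Fin n, C := by
        calc _ ≤ ∑ j ∈ Finset.univ.erase i, C := Finset.sum_le_sum fun j _ => hle j
          _ ≤ _ := Finset.sum_le_sum_of_subset_of_nonneg (Finset.erase_subset _ _) (fun _ _ _ => hC.le)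
      simp at h4
      linarith
    · linarith [hle i]
end
end

open scoped BigOperators
noncomputable section
section
variable {n : ℕ}
open Matrix MeasureTheory

def qf (a : Matrix (Fin n) (Fin n) ℝ) (ξ : Fin n → ℝ) : ℝ := ∑ i, ∑ j, a i j * ξ i * ξ j

structure Op (n : ℕ) (θ Θ : ℝ) (a : EE n → Matrix (Fin n) (Fin n) ℝ) : Prop where
  sm : ∀ i j, Sm (fun x => a x i j)
  symm : ∀ x i j, a x i j = a x j i
  low : ∀ x ξ, θ * ∑ i, ξ i ^ 2 ≤ qf (a x) ξ
  up : ∀ x ξ, qf (a x) ξ ≤ Θ * ∑ i, ξ i ^ 2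
  dv : ∀ x j, ∑ i, dd (fr 1 i) (fun x => a x i j) x = 0

def Lop (a : EE n → Matrix (Fin n) (Fin n) ℝ) (v : EE n → ℝ) (x : EE n) : ℝ :=
  ∑ i, ∑ j, a x i j * hm 1 v x i j

lemma trace_low {a Z : Matrix (Fin n) (Fin n) ℝ} {θ : ℝ} (hZ : Z.IsHermitian)
    (hp : ∀ ξ, 0 ≤ qf Z ξ) (ha : ∀ ξ, θ * ∑ i, ξ i ^ 2 ≤ qf a ξ) :
    θ * ∑ i, Z i i ≤ ∑ i, ∑ j, a i j * Z i j := by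
  obtain ⟨R, hR, hZR⟩ := spectral Z hZ
  set μ := hZ.eigenvalues
  have e1 : ∀ i j, Z i j = ∑ k, μ k * (R i k * R j k) := by
    intro i j
    conv_lhs => rw [hZR]
    rw [Matrix.mul_apply]
    refine Finset.sum_congr rfl fun k _ => ?_
    rw [Matrix.mul_diagonal, Matrix.transpose_apply]; ring
  have e2 : ∀ k, μ k = qf Z (fun i => R i k) := by
    intro k
    have h : Rᵀ * Z * R = diagonal μ := by
      conv_lhs => rw [hZR]
      calc _ = (Rᵀ * R) * diagonal μ * (Rᵀ * R) := by simp only [Matrix.mul_assoc]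
        _ = _ := by rw [hR]; simp
    have h2 := congrFun (congrFun h k) k
    rw [diagonal_apply_eq] at h2
    rw [← h2, Matrix.mul_apply, qf, Finset.sum_comm]
    refine Finset.sum_congr rfl fun j _ => ?_
    rw [Matrix.mul_apply, Finset.sum_mul]
    refine Finset.sum_congr rfl fun i _ => ?_
    rw [Matrix.transpose_apply]; ring
  have e3 : ∑ i, ∑ j, a i j * Z i j = ∑ k, μ k * qf a (fun i => R i k) := by
    simp only [e1, qf, Finset.mul_sum]
    have : ∀ i, ∑ j, ∑ k, a i j * (μ k * (R i k * R j k)) = ∑ k, ∑ j, a i j * (μ k * (R i k * R j k)) :=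
      fun i => Finset.sum_comm
    simp only [this]
    rw [Finset.sum_comm]
    refine Finset.sum_congr rfl fun k _ => Finset.sum_congr rfl fun i _ =>
      Finset.sum_congr rfl fun j _ => by ring
  have e4 : ∑ i, Z i i = ∑ k, μ k * ∑ i, R i k ^ 2 := by
    simp only [e1, Finset.mul_sum]
    rw [Finset.sum_comm]
    exact Finset.sum_congr rfl fun k _ => Finset.sum_congr rfl fun i _ => by ring
  rw [e3, e4, Finset.mul_sum]
  refine Finset.sum_le_sum fun k _ => ?_
  have h1 : 0 ≤ μ k := by rw [e2]; exact hp _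
  nlinarith [mul_le_mul_of_nonneg_left (ha fun i => R i k) h1]

lemma psd_entry {Z : Matrix (Fin n) (Fin n) ℝ} (hZ : ∀ i j, Z i j = Z j i)
    (hp : ∀ ξ, 0 ≤ qf Z ξ) (i j : Fin n) : |Z i j| ≤ ∑ k, Z k k := by
  have hq : ∀ (s : ℝ), qf Z (Pi.single i 1 + s • Pi.single j 1) = Z i i + 2 * s * Z i j + s^2 * Z j j := by
    intro s
    have : ∀ (a b : Fin n → ℝ), qf Z (a + b) = qf Z a + qf Z b + ∑ i, ∑ j, Z i j * (a i * b j + b i * a j) := by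
      intro a b
      simp only [qf, ← Finset.sum_add_distrib, Pi.add_apply]
      exact Finset.sum_congr rfl fun i _ => Finset.sum_congr rfl fun j _ => by ring
    rw [this]
    simp only [qf, Pi.smul_apply, smul_eq_mul, Pi.single_apply, mul_ite, mul_one, mul_zero, ite_mul, zero_mul,
      mul_add, Finset.sum_add_distrib, Finset.sum_ite_eq', Finset.mem_univ, if_true]
    simp [hZ j i]; ring
  have hd : ∀ k, 0 ≤ Z k k := by
    intro k
    have := hp (Pi.single k 1)
    simpa [qf, Pi.single_apply] using this
  have hle : ∀ k, Z k k ≤ ∑ k, Z k k := fun k =>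
    Finset.single_le_sum (f := fun k => Z k k) (fun k _ => hd k) (Finset.mem_univ k)
  have h1 := hp (Pi.single i 1 + (1:ℝ) • Pi.single j 1)
  have h2 := hp (Pi.single i 1 + (-1:ℝ) • Pi.single j 1)
  rw [hq] at h1 h2
  rw [abs_le]
  constructor <;> linarith [hle i, hle j]

/-- the gradient map -/
def Ymap (v : EE n → ℝ) (c : ℝ) (x : EE n) : EE n :=
  WithLp.toLp 2 (fun i => x i + c * dd (fr 1 i) v x)

lemma Ymap_deriv {v : EE n → ℝ} (hv : Sm v) (c : ℝ) (x : EE n) :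
    HasFDerivAt (Ymap v c) (Matrix.toEuclideanCLM (𝕜 := ℝ) (1 + c • hm 1 v x)) x := by
  rw [← hasFDerivWithinAt_univ, hasFDerivWithinAt_euclidean]
  intro i
  have h1 : HasFDerivAt (fun x : EE n => x i) (EuclideanSpace.proj i : EE n →L[ℝ] ℝ) x :=
    (EuclideanSpace.proj i : EE n →L[ℝ] ℝ).hasFDerivAt
  have h2 := ((hv.dd (fr 1 i)).diff x).hasFDerivAt
  have h3 := (h1.add (h2.const_mul c)).hasFDerivWithinAt (s := Set.univ)
  refine h3.congr_fderiv ?_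
  ext e
  have h4 : fderiv ℝ (dd (fr 1 i) v) x e = ∑ j, e j * hm 1 v x i j := by
    have := dd_vec (dd (fr 1 i) v) e x
    rw [show fderiv ℝ (dd (fr 1 i) v) x e = dd e (dd (fr 1 i) v) x from rfl, this]
    refine Finset.sum_congr rfl fun j _ => ?_
    rw [hm, dd_comm hv]
  simp only [ContinuousLinearMap.add_apply, ContinuousLinearMap.smul_apply, h4,
    ContinuousLinearMap.comp_apply, PiLp.proj_apply, smul_eq_mul]
  have h5 : (Matrix.toEuclideanCLM (𝕜 := ℝ) (1 + c • hm 1 v x) e).ofLp = (1 + c • hm 1 v x) *ᵥ e.ofLp :=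
    Matrix.ofLp_toEuclideanCLM _ _
  rw [h5, Matrix.add_mulVec, Matrix.one_mulVec, Matrix.smul_mulVec]
  simp [Matrix.mulVec, dotProduct, mul_comm]

lemma det_CLM (Z : Matrix (Fin n) (Fin n) ℝ) :
    (Matrix.toEuclideanCLM (𝕜 := ℝ) Z).det = Z.det := by
  have : ((Matrix.toEuclideanCLM (𝕜 := ℝ) Z : EE n →L[ℝ] EE n) : EE n →ₗ[ℝ] EE n) =
    Matrix.toLin (EuclideanSpace.basisFun (Fin n) ℝ).toBasis (EuclideanSpace.basisFun (Fin n) ℝ).toBasis Z := by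
    rw [← Matrix.toEuclideanLin_eq_toLin_orthonormal]
    rfl
  rw [ContinuousLinearMap.det, this, LinearMap.det_toLin]

lemma slide_point {v : EE n → ℝ} (hv : Sm v) (hpos : ∀ x, 0 < v x) {p : EE n} {r : ℝ} (hr : 0 < r)
    {y : EE n} (hy : y ∈ Metric.ball p r) :
    ∃ x, x ∈ Metric.closedBall p (3*r) ∧ v x ≤ 2 * v p ∧ Ymap v (r^2 / v p) x = y ∧
      ∀ ξ, 0 ≤ qf (1 + (r^2 / v p) • hm 1 v x) ξ := by
  set a0 := v p / r^2 with ha0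
  have hp := hpos p
  have ha : 0 < a0 := by positivity
  have hinv : r^2 / v p = a0⁻¹ := by rw [ha0, inv_div]
  set g : EE n → ℝ := fun x => v x + a0/2 * ‖x - y‖^2 with hg
  have hgc : Continuous g := by
    have := hv.continuous
    fun_prop
  have hyp : dist p y < r := by rw [dist_comm]; exact hy
  obtain ⟨x, hx, hmin⟩ := (isCompact_closedBall y (2*r)).exists_isMinOn
    ⟨p, by rw [Metric.mem_closedBall]; linarith⟩ hgc.continuousOn
  have hgp : g x ≤ 3/2 * v p := by
    have h1 : g x ≤ g p := hmin (by rw [Metric.mem_closedBall]; linarith : p ∈ Metric.closedBall y (2*r))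
    have h2 : ‖p - y‖^2 ≤ r^2 := by
      rw [← dist_eq_norm]; exact pow_le_pow_left₀ dist_nonneg hyp.le 2
    have h3 : a0/2 * ‖p - y‖^2 ≤ a0/2 * r^2 := by gcongr
    have h4 : a0 * r^2 = v p := by rw [ha0]; field_simp
    have : g p = v p + a0/2 * ‖p - y‖^2 := rfl
    linarith
  have hvx := hpos x
  have hgx : g x = v x + a0/2 * ‖x - y‖^2 := rfl
  have h4 : a0 * r^2 = v p := by rw [ha0]; field_simp
  have hd : ‖x - y‖^2 < 3 * r^2 := by
    by_contra h
    push Not at h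
    have : a0 * (3 * r^2) ≤ a0 * ‖x-y‖^2 := by gcongr
    nlinarith
  have hd2 : ‖x - y‖ < 2 * r := by
    by_contra h
    push Not at h
    nlinarith [norm_nonneg (x-y)]
  have hloc : IsLocalMax (fun x => - g x) x := by
    have hb : Metric.closedBall y (2*r) ∈ nhds x := by
      apply Filter.mem_of_superset (Metric.isOpen_ball.mem_nhds (_ : x ∈ Metric.ball y (2*r))) Metric.ball_subset_closedBall
      rw [Metric.mem_ball, dist_eq_norm]; exact hd2
    exact (hmin.isLocalMin hb).neg
  have hline : ∀ e : EE n, dd e v x + a0 * (∑ i, (x - y) i * e i) = 0 ∧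
      0 ≤ dd e (dd e v) x + a0 * ∑ i, e i ^ 2 := by
    intro e
    have hm' := localMax_line hloc e
    have hnorm : ∀ t : ℝ, ‖x + t • e - y‖^2 = ‖x - y‖^2 + 2 * (∑ i, (x - y) i * e i) * t + (∑ i, e i^2) * t^2 := by
      intro t
      simp only [EuclideanSpace.norm_sq_eq, Real.norm_eq_abs, sq_abs, Finset.sum_mul, Finset.mul_sum,
        ← Finset.sum_add_distrib]
      refine Finset.sum_congr rfl fun i _ => ?_
      simp; ring
    have hmm : IsLocalMax (fun t : ℝ => - (v (x + t • e) + a0/2 * (‖x - y‖^2 + 2 * (∑ i, (x - y) i * e i) * t + (∑ i, e i^2) * t^2))) 0 := by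
      have : (fun t : ℝ => - g (x + t • e)) = (fun t : ℝ => - (v (x + t • e) + a0/2 * (‖x - y‖^2 + 2 * (∑ i, (x - y) i * e i) * t + (∑ i, e i^2) * t^2))) := by
        ext t; rw [hg]; simp only [hnorm]
      rw [← this]; exact hm'
    set S1 := ∑ i, (x - y) i * e i
    set S2 := ∑ i, e i ^ 2
    have d1 : ∀ t : ℝ, HasDerivAt (fun t : ℝ => - (v (x + t • e) + a0/2 * (‖x - y‖^2 + 2 * S1 * t + S2 * t^2)))
        (-(dd e v (x + t • e) + a0 * (S1 + S2 * t))) t := by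
      intro t
      have h := (((((hasDerivAt_id t).const_mul (2 * S1)).const_add (‖x - y‖^2)).add
        (((hasDerivAt_id t).pow 2).const_mul S2)).const_mul (a0/2))
      refine ((dd_line hv x e t).add h).neg.congr_deriv ?_
      simp; ring
    have d2 : HasDerivAt (fun t : ℝ => (-(dd e v (x + t • e) + a0 * (S1 + S2 * t))))
        (-(dd e (dd e v) x + a0 * S2)) 0 := by
      have h := (((hasDerivAt_id (0:ℝ)).const_mul S2).const_add S1).const_mul a0
      refine ((dd_line (hv.dd e) x e 0).add h).neg.congr_deriv ?_
      simp
    have h := second_deriv_nonpos (Filter.Eventually.of_forall d1) d2 hmm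
    simp only [zero_smul, add_zero, mul_zero] at h
    constructor <;> linarith [h.1, h.2]
  refine ⟨x, ?_, ?_, ?_, ?_⟩
  · rw [Metric.mem_closedBall]
    have h1 : dist x y < 2 * r := by rw [dist_eq_norm]; exact hd2
    have h2 : dist y p < r := hy
    linarith [dist_triangle x y p]
  · have : 0 ≤ a0/2 * ‖x-y‖^2 := by positivity
    linarith
  · ext i
    have h := (hline (fr 1 i)).1
    have e : ∑ j, (x - y) j * fr 1 i j = x i - y i := by
      simp [Matrix.one_apply]
    rw [e] at h
    rw [hinv]
    simp only [Ymap]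
    field_simp
    linarith
  · intro ξ
    have h := (hline (WithLp.toLp 2 ξ)).2
    rw [dd_dd_vec hv] at h
    rw [hinv]
    have e : qf (1 + a0⁻¹ • hm 1 v x) ξ = a0⁻¹ * (∑ i, ∑ j, ξ i * ξ j * hm 1 v x i j + a0 * ∑ i, ξ i ^ 2) := by
      have : qf (1 + a0⁻¹ • hm 1 v x) ξ = ∑ i, ∑ j, (1 : Matrix (Fin n) (Fin n) ℝ) i j * ξ i * ξ j + a0⁻¹ * ∑ i, ∑ j, ξ i * ξ j * hm 1 v x i j := by
        simp only [qf, Finset.mul_sum, ← Finset.sum_add_distrib]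
        refine Finset.sum_congr rfl fun i _ => Finset.sum_congr rfl fun j _ => ?_
        simp [add_mul]; ring
      rw [this]
      simp only [Matrix.one_apply, ite_mul, one_mul, zero_mul, Finset.sum_ite_eq, Finset.mem_univ, if_true]
      field_simp
      simp only [sq]; ring
    rw [e]
    exact mul_nonneg (by positivity) h

lemma slide_meas {θ Θ : ℝ} (hθ : 0 < θ) (hΘ : 0 < Θ) :
    ∃ D : ℝ, 0 < D ∧ ∀ a, Op n θ Θ a → ∀ v : EE n → ℝ, Sm v → (∀ x, 0 < v x) → (∀ x, Lop a v x ≤ 0) →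
      ∀ (p : EE n) (r : ℝ), 0 < r → volume (Metric.ball p r) ≤
        ENNReal.ofReal D * volume ({x | v x ≤ 2 * v p} ∩ Metric.closedBall p (3*r)) := by
  refine ⟨n.factorial * (n * Θ / θ)^n + 1, by positivity, fun a ha v hv hpos hL p r hr => ?_⟩
  set c := r^2 / v p with hc
  have hc0 : 0 ≤ c := by have := hpos p; positivity
  set Z : EE n → Matrix (Fin n) (Fin n) ℝ := fun x => 1 + c • hm 1 v x with hZ
  set E : Set (EE n) := {x | v x ≤ 2 * v p} ∩ Metric.closedBall p (3*r) ∩ {x | ∀ ξ, 0 ≤ qf (Z x) ξ} with hE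
  have hEc : IsClosed E := by
    refine ((isClosed_le hv.continuous continuous_const).inter Metric.isClosed_closedBall).inter ?_
    rw [Set.ofPred_forall]
    refine isClosed_iInter fun ξ => isClosed_le continuous_const ?_
    unfold qf
    refine continuous_finsetSum _ fun i _ => continuous_finsetSum _ fun j _ => ?_
    have : Continuous fun x => hm 1 v x i j := ((hv.dd (fr 1 j)).dd (fr 1 i)).continuous
    simp only [hZ, Matrix.add_apply, Matrix.smul_apply]
    fun_prop
  have hsub : Metric.ball p r ⊆ Ymap v c '' E := by
    intro y hy
    obtain ⟨x, h1, h2, h3, h4⟩ := slide_point hv hpos hr hy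
    exact ⟨x, ⟨⟨h2, h1⟩, h4⟩, h3⟩
  have hdet : ∀ x ∈ E, |(Matrix.toEuclideanCLM (𝕜 := ℝ) (Z x)).det| ≤ n.factorial * (n * Θ / θ)^n + 1 := by
    intro x hx
    rw [det_CLM]
    have hpsd := hx.2
    have hherm : (Z x).IsHermitian := by
      apply Matrix.IsHermitian.add Matrix.isHermitian_one
      have := hm_herm 1 hv x
      rw [Matrix.IsHermitian, Matrix.conjTranspose_smul, this.eq]; simp
    have hsym : ∀ i j, Z x i j = Z x j i := fun i j => by
      have := hherm.apply i j; simpa using this.symm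
    have h1 := trace_low hherm hpsd (ha.low x)
    have h2 : ∑ i, ∑ j, a x i j * Z x i j = ∑ i, a x i i + c * Lop a v x := by
      simp only [Lop, Finset.mul_sum, hZ, Matrix.add_apply, Matrix.smul_apply, mul_add, Finset.sum_add_distrib,
        Matrix.one_apply, mul_ite, mul_one, mul_zero, Finset.sum_ite_eq, Finset.mem_univ, if_true, smul_eq_mul]
      congr 1
      exact Finset.sum_congr rfl fun i _ => Finset.sum_congr rfl fun j _ => by ring
    have h3 : ∑ i, a x i i ≤ n * Θ := by
      have : ∀ i, a x i i ≤ Θ := by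
        intro i
        have := ha.up x (Pi.single i 1)
        simpa [qf, Pi.single_apply] using this
      calc _ ≤ ∑ i : Fin n, Θ := Finset.sum_le_sum fun i _ => this i
        _ = _ := by simp
    have h4 : c * Lop a v x ≤ 0 := mul_nonpos_of_nonneg_of_nonpos hc0 (hL x)
    have h5 : ∑ i, Z x i i ≤ n * Θ / θ := by
      rw [le_div_iff₀ hθ]; linarith
    have h6 := Matrix.det_le (A := Z x) (abv := AbsoluteValue.abs) (x := n * Θ / θ)
      (fun i j => (psd_entry hsym hpsd i j).trans h5)
    simp at h6
    linarith
  calc volume (Metric.ball p r) ≤ volume (Ymap v c '' E) := measure_mono hsub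
    _ ≤ ∫⁻ x in E, ENNReal.ofReal |(Matrix.toEuclideanCLM (𝕜 := ℝ) (Z x)).det| :=
        addHaar_image_le_lintegral_abs_det_fderiv volume hEc.measurableSet
          (fun x _ => (Ymap_deriv hv c x).hasFDerivWithinAt)
    _ ≤ ∫⁻ x in E, ENNReal.ofReal (n.factorial * (n * Θ / θ)^n + 1) :=
        setLIntegral_mono' hEc.measurableSet fun x hx => ENNReal.ofReal_le_ofReal (hdet x hx)
    _ = ENNReal.ofReal (n.factorial * (n * Θ / θ)^n + 1) * volume E := by simp
    _ ≤ _ := by gcongr; exact Set.inter_subset_left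
end
end

open scoped BigOperators
noncomputable section
section
variable {n : ℕ}
open Matrix MeasureTheory

lemma Sm.mul' {f g : EE n → ℝ} (hf : Sm f) (hg : Sm g) : Sm (fun x => f x * g x) := ContDiff.mul hf hg

lemma dd_exp {f : EE n → ℝ} (hf : Sm f) (e x : EE n) :
    dd e (fun x => Real.exp (f x)) x = Real.exp (f x) * dd e f x := by
  apply dd_eq_of_line hf.exp
  have := (dd_line hf x e 0).exp
  simpa using this

/-- the logarithm of a positive supersolution. -/
lemma log_super {a : EE n → Matrix (Fin n) (Fin n) ℝ} {v : EE n → ℝ} (hv : Sm v) (hpos : ∀ x, 0 < v x)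
    (hL : ∀ x, Lop a v x ≤ 0) :
    Sm (fun x => Real.log (v x)) ∧ ∀ x, Lop a (fun x => Real.log (v x)) x ≤
      - qf (a x) (fun i => dd (fr 1 i) (fun x => Real.log (v x)) x) := by
  have hs : Sm (fun x => Real.log (v x)) := hv.log (fun x => (hpos x).ne')
  refine ⟨hs, fun x => ?_⟩
  set φ := fun x => Real.log (v x) with hφ
  have ev : v = fun x => Real.exp (φ x) := by
    ext x; simp only [hφ]; rw [Real.exp_log (hpos x)]
  have h1 : ∀ e, dd e v = fun x => v x * dd e φ x := by
    intro e; ext x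
    conv_lhs => rw [ev]
    rw [dd_exp hs, ← congrFun ev x]
  have h2 : ∀ i j, hm 1 v x i j = v x * (hm 1 φ x i j + dd (fr 1 i) φ x * dd (fr 1 j) φ x) := by
    intro i j
    rw [hm, h1 (fr 1 j), dd_mul hv (hs.dd _), h1 (fr 1 i), hm]
    ring
  have h3 : Lop a v x = v x * (Lop a φ x + qf (a x) (fun i => dd (fr 1 i) φ x)) := by
    simp only [Lop, qf, h2, mul_add, Finset.mul_sum, Finset.sum_add_distrib]
    congr 1 <;> exact Finset.sum_congr rfl fun i _ => Finset.sum_congr rfl fun j _ => by ring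
  have h4 := hL x
  rw [h3] at h4
  have := nonpos_of_mul_nonpos_right h4 (hpos x)
  linarith

/-- integral of a derivative of a compactly supported function -/
lemma int_dd_zero {f : EE n → ℝ} (hf : Sm f) (hc : HasCompactSupport f) (e : EE n) :
    Integrable (dd e f) ∧ ∫ x, dd e f x = 0 := by
  have h1 : HasCompactSupport (dd e f) := hc.fderiv_apply ℝ e
  have i1 : Integrable (dd e f) := (hf.dd e).continuous.integrable_of_hasCompactSupport h1
  refine ⟨i1, ?_⟩
  have := integral_mul_fderiv_eq_neg_fderiv_mul_of_integrable (μ := (volume : Measure (EE n)))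
    (f := fun _ => (1:ℝ)) (g := f) (v := e) (by simp) (by simpa [dd] using (show Integrable (fun x => fderiv ℝ f x e) volume from i1))
    (by simpa using hf.continuous.integrable_of_hasCompactSupport hc)
    (fun x _ => by simp) (fun x _ => hf.diff x)
  simpa [dd] using this

lemma young_qf {a : Matrix (Fin n) (Fin n) ℝ} (hs : ∀ i j, a i j = a j i) {θ : ℝ} (hθ : 0 ≤ θ)
    (ha : ∀ ξ, θ * ∑ i, ξ i ^ 2 ≤ qf a ξ) (ζ ξ : Fin n → ℝ) :
    2 * ∑ i, ∑ j, a i j * ζ i * ξ j ≤ 1/2 * qf a ξ + 2 * qf a ζ := by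
  have h1 : 0 ≤ qf a (fun i => ξ i - 2 * ζ i) :=
    le_trans (mul_nonneg hθ (Finset.sum_nonneg fun _ _ => sq_nonneg _)) (ha _)
  have h2 : qf a (fun i => ξ i - 2 * ζ i) = qf a ξ - 2 * (∑ i, ∑ j, a i j * ζ i * ξ j)
      - 2 * (∑ i, ∑ j, a i j * ζ j * ξ i) + 4 * qf a ζ := by
    simp only [qf, Finset.mul_sum, ← Finset.sum_sub_distrib, ← Finset.sum_add_distrib]
    exact Finset.sum_congr rfl fun i _ => Finset.sum_congr rfl fun j _ => by ring
  have h3 : ∑ i, ∑ j, a i j * ζ j * ξ i = ∑ i, ∑ j, a i j * ζ i * ξ j := by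
    rw [Finset.sum_comm]
    exact Finset.sum_congr rfl fun i _ => Finset.sum_congr rfl fun j _ => by rw [hs]
  rw [h3] at h2
  linarith

lemma caccioppoli {θ Θ : ℝ} (hθ : 0 < θ) {a : EE n → Matrix (Fin n) (Fin n) ℝ} (ha : Op n θ Θ a)
    {φ η : EE n → ℝ} (hφ : Sm φ) (hη : Sm η) (hc : HasCompactSupport η)
    (hL : ∀ x, Lop a φ x ≤ - qf (a x) (fun i => dd (fr 1 i) φ x)) :
    Integrable (fun x => η x ^ 2 * gsq φ x) ∧ Integrable (gsq η) ∧
    θ/2 * ∫ x, η x ^ 2 * gsq φ x ≤ 2 * Θ * ∫ x, gsq η x := by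
  set F : Fin n → EE n → ℝ := fun i x => ∑ j, a x i j * dd (fr 1 j) φ x with hF
  have hFs : ∀ i, Sm (F i) := fun i => ContDiff.sum fun j _ => (ha.sm i j).mul' (hφ.dd _)
  set W : Fin n → EE n → ℝ := fun i x => η x * η x * F i x with hW
  have hηη : Sm (fun x => η x * η x) := hη.mul' hη
  have hWs : ∀ i, Sm (W i) := fun i => hηη.mul' (hFs i)
  have hWc : ∀ i, HasCompactSupport (W i) := by
    intro i
    apply HasCompactSupport.mul_right (f := fun x => η x * η x)
    exact hc.mul_right
  have hdiv : ∀ x, ∑ i, dd (fr 1 i) (F i) x = Lop a φ x := by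
    intro x
    have h1 : ∀ i, dd (fr 1 i) (F i) x = ∑ j, (dd (fr 1 i) (fun x => a x i j) x * dd (fr 1 j) φ x
        + a x i j * hm 1 φ x i j) := by
      intro i
      rw [hF]
      simp only
      rw [dd_sum _ (fun j => (ha.sm i j).mul' (hφ.dd _))]
      refine Finset.sum_congr rfl fun j _ => ?_
      rw [dd_mul (ha.sm i j) (hφ.dd _)]; rfl
    simp only [h1, Finset.sum_add_distrib]
    rw [Finset.sum_comm]
    simp only [← Finset.sum_mul, ha.dv x, zero_mul, Finset.sum_const_zero, zero_add]
    rfl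
  have hG : ∀ x, ∑ i, dd (fr 1 i) (W i) x ≤ -(θ/2 * (η x ^2 * gsq φ x)) + 2 * Θ * gsq η x := by
    intro x
    have h1 : ∀ i, dd (fr 1 i) (W i) x = 2 * ∑ j, a x i j * dd (fr 1 i) η x * (η x * dd (fr 1 j) φ x)
        + η x ^ 2 * dd (fr 1 i) (F i) x := by
      intro i
      rw [hW]
      simp only
      rw [dd_mul hηη (hFs i), dd_mul hη hη]
      simp only [hF, Finset.mul_sum]
      rw [← sq]
      congr 1
      exact Finset.sum_congr rfl fun j _ => by ring
    simp only [h1, Finset.sum_add_distrib, ← Finset.mul_sum, hdiv x]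
    have h2 := young_qf (ha.symm x) hθ.le (ha.low x) (fun i => dd (fr 1 i) η x) (fun i => η x * dd (fr 1 i) φ x)
    have h3 : qf (a x) (fun i => η x * dd (fr 1 i) φ x) = η x ^ 2 * qf (a x) (fun i => dd (fr 1 i) φ x) := by
      simp only [qf, Finset.mul_sum]
      exact Finset.sum_congr rfl fun i _ => Finset.sum_congr rfl fun j _ => by ring
    have h4 := mul_le_mul_of_nonneg_left (hL x) (sq_nonneg (η x))
    have h5 := mul_le_mul_of_nonneg_left (ha.low x (fun i => dd (fr 1 i) φ x)) (sq_nonneg (η x))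
    have h6 := ha.up x (fun i => dd (fr 1 i) η x)
    rw [h3] at h2
    simp only [gsq]
    nlinarith
  have hηs : HasCompactSupport (gsq η) := by
    apply HasCompactSupport.intro hc
    intro x hx
    have : ∀ e, dd e η x = 0 := by
      intro e
      have : fderiv ℝ η x = 0 := by
        by_contra h
        exact hx (support_fderiv_subset ℝ h)
      simp [dd, this]
    simp [gsq, this]
  have i1 : Integrable (fun x => η x ^ 2 * gsq φ x) := by
    apply Continuous.integrable_of_hasCompactSupport
    · exact (hη.continuous.pow 2).mul (gsq_continuous hφ)
    · apply HasCompactSupport.mul_right (f := fun x => η x ^ 2)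
      have : (fun x => η x ^ 2) = fun x => η x * η x := by ext x; ring
      rw [this]; exact hc.mul_right
  have i2 : Integrable (gsq η) := (gsq_continuous hη).integrable_of_hasCompactSupport hηs
  refine ⟨i1, i2, ?_⟩
  have hz : ∫ x, ∑ i, dd (fr 1 i) (W i) x = 0 := by
    rw [integral_finsetSum _ fun i _ => (int_dd_zero (hWs i) (hWc i) _).1]
    exact Finset.sum_eq_zero fun i _ => (int_dd_zero (hWs i) (hWc i) _).2
  have := integral_mono (μ := volume) (integrable_finsetSum _ fun i _ => (int_dd_zero (hWs i) (hWc i) (fr 1 i)).1)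
    ((i1.const_mul (θ/2)).neg.add (i2.const_mul (2*Θ))) hG
  rw [hz] at this
  have e1 : ∫ x, (-(θ/2 * (η x ^2 * gsq φ x)) + 2 * Θ * gsq η x) =
      -(θ/2 * ∫ x, η x ^ 2 * gsq φ x) + 2 * Θ * ∫ x, gsq η x := by
    rw [integral_add (f := fun x => -(θ/2 * (η x ^2 * gsq φ x))) (i1.const_mul (θ/2)).neg (i2.const_mul (2*Θ)),
      integral_neg, integral_const_mul, integral_const_mul]
  have this2 : 0 ≤ ∫ x, (-(θ/2 * (η x ^2 * gsq φ x)) + 2 * Θ * gsq η x) := this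
  rw [e1] at this2
  linarith

lemma exists_cutoff (n : ℕ) : ∃ B : ℝ, 0 < B ∧ ∀ (p : EE n) (r : ℝ), 0 < r → ∃ η : EE n → ℝ, Sm η ∧
    HasCompactSupport η ∧ (∀ x ∈ Metric.closedBall p (3*r), η x = 1) ∧ (∀ x, gsq η x ≤ B / r^2) ∧
    (∀ x, x ∉ Metric.closedBall p (4*r) → gsq η x = 0) := by
  let b : ContDiffBump (0 : EE n) := ⟨3, 4, by norm_num, by norm_num⟩
  have hb : Sm (b : EE n → ℝ) := b.contDiff
  have hbc : HasCompactSupport (b : EE n → ℝ) := b.hasCompactSupport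
  have hz : ∀ x, x ∉ Metric.closedBall (0 : EE n) 4 → ∀ e, dd e b x = 0 := by
    intro x hx e
    have : fderiv ℝ b x = 0 := by
      by_contra h
      have := support_fderiv_subset ℝ (f := (b : EE n → ℝ)) h
      rw [b.tsupport_eq] at this
      exact hx this
    simp [dd, this]
  obtain ⟨B0, hB0⟩ := (isCompact_closedBall (0 : EE n) 4).exists_bound_of_continuousOn (gsq_continuous hb).continuousOn
  have hB : ∀ x, gsq b x ≤ |B0| + 1 := by
    intro x
    by_cases hx : x ∈ Metric.closedBall (0 : EE n) 4
    · have := (le_abs_self _).trans (hB0 x hx)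
      linarith [le_abs_self B0]
    · have : gsq b x = 0 := by simp [gsq, hz x hx]
      rw [this]; positivity
  refine ⟨|B0| + 1, by positivity, fun p r hr => ?_⟩
  set x0 : EE n := -((1/r) • p) with hx0
  have hpt : ∀ y, x0 + (1/r) • y = (1/r) • (y - p) := by
    intro y; rw [hx0, smul_sub]; abel
  have hmem : ∀ y s, y ∈ Metric.closedBall p (s*r) ↔ x0 + (1/r) • y ∈ Metric.closedBall (0 : EE n) s := by
    intro y s
    rw [hpt, mem_closedBall_zero_iff, Metric.mem_closedBall, dist_eq_norm, norm_smul, Real.norm_eq_abs,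
      abs_of_pos (by positivity), one_div, inv_mul_le_iff₀ hr, mul_comm]
  set η : EE n → ℝ := fun y => b (x0 + (1/r) • y) with hη
  have hηs : Sm η := hb.comp (contDiff_const.add (contDiff_id.const_smul (1/r)))
  have hdd : ∀ e y, dd e η y = (1/r) * dd e b (x0 + (1/r) • y) := fun e y => dd_affine hb x0 (1/r) e y
  have hg : ∀ y, gsq η y = gsq b (x0 + (1/r) • y) / r^2 := by
    intro y
    simp only [gsq, hdd, Finset.sum_div]
    exact Finset.sum_congr rfl fun i _ => by field_simp
  refine ⟨η, hηs, ?_, ?_, ?_, ?_⟩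
  · apply HasCompactSupport.intro (isCompact_closedBall p (4*r))
    intro x hx
    rw [hmem] at hx
    apply b.zero_of_le_dist
    rw [Metric.mem_closedBall] at hx
    push Not at hx
    exact hx.le
  · intro x hx
    rw [hmem] at hx
    exact b.one_of_mem_closedBall hx
  · intro x
    rw [hg]
    exact div_le_div_of_nonneg_right (hB _) (by positivity)
  · intro x hx
    rw [hmem] at hx
    have h0 : gsq b (x0 + (1/r) • x) = 0 := by
      unfold gsq
      exact Finset.sum_eq_zero fun i _ => by rw [hz _ hx]; simp
    rw [hg, h0, zero_div]

lemma log_grad_bound {θ Θ : ℝ} (hθ : 0 < θ) (hΘ : 0 < Θ) :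
    ∃ C : ℝ, 0 < C ∧ ∀ a, Op n θ Θ a → ∀ φ : EE n → ℝ, Sm φ →
      (∀ x, Lop a φ x ≤ - qf (a x) (fun i => dd (fr 1 i) φ x)) → ∀ (p : EE n) (r : ℝ), 0 < r →
      ∫⁻ x in Metric.closedBall p (3*r), ENNReal.ofReal (gsq φ x) ≤
        ENNReal.ofReal (C / r^2) * volume (Metric.closedBall p (4*r)) := by
  obtain ⟨B, hB, hcut⟩ := exists_cutoff n
  refine ⟨4 * Θ / θ * B, by positivity, fun a ha φ hφ hL p r hr => ?_⟩
  obtain ⟨η, hη, hc, h1, h2, h3⟩ := hcut p r hr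
  obtain ⟨i1, i2, hle⟩ := caccioppoli hθ ha hφ hη hc hL
  have hmeas : MeasurableSet (Metric.closedBall p (3*r)) := Metric.isClosed_closedBall.measurableSet
  calc ∫⁻ x in Metric.closedBall p (3*r), ENNReal.ofReal (gsq φ x)
      = ∫⁻ x in Metric.closedBall p (3*r), ENNReal.ofReal (η x ^ 2 * gsq φ x) := by
        apply setLIntegral_congr_fun hmeas
        intro x hx
        simp only [h1 x hx, one_pow, one_mul]
    _ ≤ ∫⁻ x, ENNReal.ofReal (η x ^ 2 * gsq φ x) := setLIntegral_le_lintegral _ _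
    _ = ENNReal.ofReal (∫ x, η x ^ 2 * gsq φ x) :=
        (ofReal_integral_eq_lintegral_ofReal i1 (Filter.Eventually.of_forall fun x =>
          mul_nonneg (sq_nonneg _) (gsq_nonneg _ _))).symm
    _ ≤ ENNReal.ofReal (4 * Θ / θ * ∫ x, gsq η x) := by
        apply ENNReal.ofReal_le_ofReal
        rw [div_mul_eq_mul_div, le_div_iff₀ hθ]
        linarith
    _ = ENNReal.ofReal (4 * Θ / θ) * ∫⁻ x, ENNReal.ofReal (gsq η x) := by
        rw [ENNReal.ofReal_mul (by positivity), ofReal_integral_eq_lintegral_ofReal i2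
          (Filter.Eventually.of_forall fun x => gsq_nonneg _ _)]
    _ ≤ ENNReal.ofReal (4 * Θ / θ) * ∫⁻ x, (Metric.closedBall p (4*r)).indicator (fun _ => ENNReal.ofReal (B / r^2)) x := by
        gcongr with x
        by_cases hx : x ∈ Metric.closedBall p (4*r)
        · rw [Set.indicator_of_mem hx]; exact ENNReal.ofReal_le_ofReal (h2 x)
        · rw [h3 x hx]; simp
    _ = _ := by
        rw [lintegral_indicator Metric.isClosed_closedBall.measurableSet, setLIntegral_const, ← mul_assoc,
          ← ENNReal.ofReal_mul (by positivity)]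
        congr 2
        ring
end
end

open scoped BigOperators
noncomputable section
section
variable {n : ℕ}
open Matrix MeasureTheory

lemma dd_sq_le (φ : EE n → ℝ) (h x : EE n) : dd h φ x ^ 2 ≤ ‖h‖^2 * gsq φ x := by
  rw [dd_vec, EuclideanSpace.norm_sq_eq]
  simp only [Real.norm_eq_abs, sq_abs, gsq]
  exact Finset.sum_mul_sq_le_sq_mul_sq _ _ _

lemma seg_bound {φ : EE n → ℝ} (hφ : Sm φ) (x h : EE n) :
    ENNReal.ofReal ((φ (x + h) - φ x)^2) ≤
      ∫⁻ t in Set.Ioc (0:ℝ) 1, ENNReal.ofReal (‖h‖^2 * gsq φ (x + t • h)) := by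
  set g' : ℝ → ℝ := fun t => dd h φ (x + t • h) with hg'
  have hc : Continuous g' := (hφ.dd h).continuous.comp (line_continuous x h)
  have h1 : ∫ t in (0:ℝ)..1, g' t = φ (x + h) - φ x := by
    rw [intervalIntegral.integral_eq_sub_of_hasDerivAt (fun t _ => dd_line hφ x h t) (hc.intervalIntegrable _ _)]
    simp
  set c := φ (x + h) - φ x with hcdef
  have h2 : c^2 ≤ ∫ t in (0:ℝ)..1, g' t ^ 2 := by
    have h3 : 0 ≤ ∫ t in (0:ℝ)..1, (g' t - c)^2 :=
      intervalIntegral.integral_nonneg (by norm_num) fun t _ => sq_nonneg _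
    have h4 : ∫ t in (0:ℝ)..1, (g' t - c)^2 = (∫ t in (0:ℝ)..1, g' t ^ 2) - 2 * c * (∫ t in (0:ℝ)..1, g' t) + c^2 := by
      have : (fun t => (g' t - c)^2) = fun t => (g' t ^ 2 - 2 * c * g' t) + c^2 := by ext t; ring
      rw [this, intervalIntegral.integral_add, intervalIntegral.integral_sub, intervalIntegral.integral_const_mul]
      · simp
      all_goals apply Continuous.intervalIntegrable; fun_prop
    rw [h1] at h4
    nlinarith
  have hgc : Continuous fun t : ℝ => ‖h‖^2 * gsq φ (x + t • h) :=
    continuous_const.mul ((gsq_continuous hφ).comp (line_continuous x h))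
  have h5 : c^2 ≤ ∫ t in (0:ℝ)..1, ‖h‖^2 * gsq φ (x + t • h) := by
    refine h2.trans (intervalIntegral.integral_mono_on (by norm_num) ((hc.pow 2).intervalIntegrable _ _)
      (hgc.intervalIntegrable _ _) fun t _ => dd_sq_le φ h _)
  rw [intervalIntegral.integral_of_le (by norm_num)] at h5
  rw [← ofReal_integral_eq_lintegral_ofReal]
  · exact ENNReal.ofReal_le_ofReal h5
  · exact (hgc.intervalIntegrable 0 1).1
  · exact Filter.Eventually.of_forall fun t => mul_nonneg (sq_nonneg _) (gsq_nonneg _ _)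

lemma poincare {φ : EE n → ℝ} (hφ : Sm φ) (p : EE n) (ρ : ℝ) :
    ∫⁻ x in Metric.closedBall p ρ, ∫⁻ y in Metric.closedBall p ρ, ENNReal.ofReal ((φ y - φ x)^2) ≤
      ENNReal.ofReal (4 * ρ^2) * volume (Metric.closedBall (0 : EE n) (2*ρ)) *
        ∫⁻ x in Metric.closedBall p ρ, ENNReal.ofReal (gsq φ x) := by
  set B := Metric.closedBall p ρ with hB
  have hBm : MeasurableSet B := Metric.isClosed_closedBall.measurableSet
  set F : EE n → ENNReal := B.indicator (fun x => ENNReal.ofReal (gsq φ x)) with hF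
  have hFm : Measurable F := (gsq_continuous hφ).measurable.ennreal_ofReal.indicator hBm
  set D := Metric.closedBall (0 : EE n) (2*ρ) with hD
  have hDm : MeasurableSet D := Metric.isClosed_closedBall.measurableSet
  set K : EE n → EE n → ENNReal := fun x y => B.indicator (fun x => B.indicator (fun y => ENNReal.ofReal ((φ y - φ x)^2)) y) x with hK
  set J : EE n → EE n → ENNReal := fun x h => D.indicator (fun _ => ENNReal.ofReal (4 * ρ^2)) h * ∫⁻ t in Set.Ioc (0:ℝ) 1, F (x + t • h) with hJ
  have hKJ : ∀ x h, K x (x + h) ≤ J x h := by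
    intro x h
    by_cases hx : x ∈ B
    · by_cases hy : x + h ∈ B
      · have hh : ‖h‖ ≤ 2 * ρ := by
          have h1 : dist (x+h) p ≤ ρ := hy
          have h2 : dist x p ≤ ρ := hx
          have h3 : ‖h‖ = dist (x + h) x := by simp [dist_eq_norm]
          rw [h3]
          linarith [dist_triangle_right (x+h) x p]
        have hhD : h ∈ D := by rw [hD, mem_closedBall_zero_iff]; exact hh
        simp only [hK, hJ, Set.indicator_of_mem hx, Set.indicator_of_mem hy, Set.indicator_of_mem hhD]
        refine (seg_bound hφ x h).trans ?_
        rw [← lintegral_const_mul _ (by fun_prop)]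
        apply setLIntegral_mono' measurableSet_Ioc
        intro t ht
        have hseg : x + t • h ∈ B := by
          have := (convex_closedBall p ρ).add_smul_mem hx hy ⟨ht.1.le, ht.2⟩
          exact this
        simp only [hF, Set.indicator_of_mem hseg]
        rw [← ENNReal.ofReal_mul (by positivity)]
        apply ENNReal.ofReal_le_ofReal
        have h4 : ‖h‖^2 ≤ (2*ρ)^2 := pow_le_pow_left₀ (norm_nonneg _) hh 2
        have := gsq_nonneg φ (x + t • h)
        nlinarith
      · simp [hK, Set.indicator_of_mem hx, Set.indicator_of_notMem hy]
    · simp [hK, Set.indicator_of_notMem hx]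
  have hG : Measurable (fun q : (EE n × EE n) × ℝ => F (q.1.1 + q.2 • q.1.2)) := by
    apply hFm.comp
    exact Continuous.measurable (by fun_prop)
  have hJm : Measurable (Function.uncurry J) := by
    apply Measurable.mul
    · exact (measurable_const.indicator hDm).comp measurable_snd
    · exact hG.lintegral_prod_right'
  calc ∫⁻ x in B, ∫⁻ y in B, ENNReal.ofReal ((φ y - φ x)^2)
      = ∫⁻ x, ∫⁻ y, K x y := by
        rw [← lintegral_indicator hBm]
        congr 1; ext x
        by_cases hx : x ∈ B
        · rw [Set.indicator_of_mem hx, ← lintegral_indicator hBm]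
          simp only [hK, Set.indicator_of_mem hx]
        · rw [Set.indicator_of_notMem hx]
          simp [hK, Set.indicator_of_notMem hx]
    _ = ∫⁻ x, ∫⁻ h, K x (x + h) := by
        congr 1; ext x
        exact (lintegral_add_left_eq_self (fun y => K x y) x).symm
    _ ≤ ∫⁻ x, ∫⁻ h, J x h := lintegral_mono fun x => lintegral_mono fun h => hKJ x h
    _ = ∫⁻ h, ∫⁻ x, J x h := lintegral_lintegral_swap hJm.aemeasurable
    _ = ∫⁻ h, D.indicator (fun _ => ENNReal.ofReal (4 * ρ^2)) h * ∫⁻ x, F x := by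
        congr 1; ext h
        have hm1 : Measurable (fun x => ∫⁻ t in Set.Ioc (0:ℝ) 1, F (x + t • h)) := by
          have : Measurable (fun q : EE n × ℝ => F (q.1 + q.2 • h)) := by
            apply hFm.comp
            exact Continuous.measurable (by fun_prop)
          exact this.lintegral_prod_right'
        simp only [hJ]
        rw [lintegral_const_mul _ hm1]
        congr 1
        rw [lintegral_lintegral_swap]
        · have : ∀ t : ℝ, ∫⁻ x, F (x + t • h) = ∫⁻ x, F x := fun t => lintegral_add_right_eq_self F (t • h)
          simp [this]
        · have : Measurable (fun q : EE n × ℝ => F (q.1 + q.2 • h)) := by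
            apply hFm.comp
            exact Continuous.measurable (by fun_prop)
          exact this.aemeasurable
    _ = _ := by
        rw [lintegral_mul_const _ (measurable_const.indicator hDm), lintegral_indicator hDm, setLIntegral_const,
          hF, lintegral_indicator hBm]
end
end

open scoped BigOperators
noncomputable section
section
variable {n : ℕ}
open Matrix MeasureTheory

lemma vol_cb (p q : EE n) {r s : ℝ} (hr : 0 < r) (hs : 0 < s) :
    volume (Metric.closedBall p (s * r)) = ENNReal.ofReal (s^n) * volume (Metric.ball q r) := by
  rw [Measure.addHaar_closedBall _ _ (by positivity), Measure.addHaar_ball_of_pos _ _ hr, ← mul_assoc,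
    ← ENNReal.ofReal_mul (by positivity), finrank_euclideanSpace_fin, mul_pow]

lemma dd_add_const {v : EE n → ℝ} (hv : Sm v) (ε : ℝ) (e : EE n) : dd e (fun x => v x + ε) = dd e v := by
  ext x
  rw [dd_add hv contDiff_const]
  simp [dd]

lemma Lop_add_const (a : EE n → Matrix (Fin n) (Fin n) ℝ) {v : EE n → ℝ} (hv : Sm v) (ε : ℝ) (x : EE n) :
    Lop a (fun x => v x + ε) x = Lop a v x := by
  simp only [Lop, hm, dd_add_const hv]

lemma small_density {θ Θ : ℝ} (hθ : 0 < θ) (hΘ : 0 < Θ) {a : EE n → Matrix (Fin n) (Fin n) ℝ} (ha : Op n θ Θ a)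
    {v : EE n → ℝ} (hv : Sm v) (hpos : ∀ x, 0 ≤ v x) (hL : ∀ x, Lop a v x ≤ 0)
    (hinf : ∀ ε > 0, ∃ p, v p ≤ ε) {m δ : ℝ} (hm : 0 < m) (hδ : 0 < δ) :
    ∃ p : EE n, ∀ r : ℝ, 0 < r → volume ({x | m ≤ v x} ∩ Metric.closedBall p (3*r)) ≤
      ENNReal.ofReal δ * volume (Metric.ball p r) := by
  obtain ⟨D, hD, hslide⟩ := slide_meas (n := n) hθ hΘ
  obtain ⟨C, hC, hgrad⟩ := log_grad_bound (n := n) hθ hΘ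
  set K : ℝ := D * (36 * C * 6^n * 4^n) with hK
  have hKp : 0 < K := by positivity
  set Λ : ℝ := Real.sqrt (K/δ) with hΛ
  have hΛ2 : Λ^2 = K/δ := Real.sq_sqrt (by positivity)
  have hΛ0 : 0 ≤ Λ := Real.sqrt_nonneg _
  set ε : ℝ := m/4 * Real.exp (-Λ) with hε
  have hεp : 0 < ε := by positivity
  obtain ⟨p, hp⟩ := hinf ε hεp
  refine ⟨p, fun r hr => ?_⟩
  set w : EE n → ℝ := fun x => v x + ε with hw
  have hws : Sm w := ContDiff.add hv contDiff_const
  have hwp : ∀ x, 0 < w x := fun x => by have := hpos x; simp only [hw]; linarith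
  have hwL : ∀ x, Lop a w x ≤ 0 := fun x => by rw [hw, Lop_add_const a hv]; exact hL x
  obtain ⟨hφ, hφL⟩ := log_super hws hwp hwL
  set φ := fun x => Real.log (w x) with hφdef
  set B := Metric.closedBall p (3*r) with hB
  have hBm : MeasurableSet B := Metric.isClosed_closedBall.measurableSet
  set S1 := {x | w x ≤ 2 * w p} ∩ B with hS1
  set S2 := {x | m ≤ v x} ∩ B with hS2
  have hS1m : MeasurableSet S1 := ((isClosed_le hws.continuous continuous_const).measurableSet).inter hBm
  have hS2m : MeasurableSet S2 := ((isClosed_le continuous_const hv.continuous).measurableSet).inter hBm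
  set b := volume (Metric.ball p r) with hb
  have hb0 : b ≠ 0 := (Metric.measure_ball_pos volume p hr).ne'
  have hbt : b ≠ ⊤ := measure_ball_lt_top.ne
  have h1 : b ≤ ENNReal.ofReal D * volume S1 := hslide a ha w hws hwp hwL p r hr
  have hdiff : ∀ x ∈ S1, ∀ y ∈ S2, K/δ ≤ (φ y - φ x)^2 := by
    intro x hx y hy
    have hx1 : w x ≤ 4 * ε := by
      have : w x ≤ 2 * w p := hx.1
      have h2 : w p = v p + ε := rfl
      linarith
    have hy1 : m ≤ w y := by
      have : m ≤ v y := hy.1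
      have h2 : w y = v y + ε := rfl
      linarith
    have l1 : φ x ≤ Real.log m - Λ := by
      have : φ x ≤ Real.log (4 * ε) := Real.log_le_log (hwp x) hx1
      have e : 4 * ε = m * Real.exp (-Λ) := by rw [hε]; ring
      rw [e, Real.log_mul hm.ne' (Real.exp_pos _).ne', Real.log_exp] at this
      linarith
    have l2 : Real.log m ≤ φ y := Real.log_le_log hm hy1
    rw [← hΛ2]
    exact pow_le_pow_left₀ hΛ0 (by linarith) 2
  have h2 : ENNReal.ofReal (K/δ) * volume S2 * volume S1 ≤
      ∫⁻ x in B, ∫⁻ y in B, ENNReal.ofReal ((φ y - φ x)^2) := by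
    calc ENNReal.ofReal (K/δ) * volume S2 * volume S1
        = ∫⁻ x in S1, ∫⁻ y in S2, ENNReal.ofReal (K/δ) := by simp
      _ ≤ ∫⁻ x in S1, ∫⁻ y in S2, ENNReal.ofReal ((φ y - φ x)^2) :=
          setLIntegral_mono' hS1m fun x hx => setLIntegral_mono' hS2m fun y hy =>
            ENNReal.ofReal_le_ofReal (hdiff x hx y hy)
      _ ≤ ∫⁻ x in S1, ∫⁻ y in B, ENNReal.ofReal ((φ y - φ x)^2) :=
          lintegral_mono fun x => lintegral_mono_set Set.inter_subset_right
      _ ≤ _ := lintegral_mono_set Set.inter_subset_right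
  have h3 := poincare hφ p (3*r)
  have h4 := hgrad a ha φ hφ hφL p r hr
  have e6 : volume (Metric.closedBall (0 : EE n) (2*(3*r))) = ENNReal.ofReal (6^n) * b := by
    rw [show 2*(3*r) = 6 * r by ring]; exact vol_cb 0 p hr (by norm_num)
  have e4 : volume (Metric.closedBall p (4*r)) = ENNReal.ofReal (4^n) * b := vol_cb p p hr (by norm_num)
  rw [e6] at h3
  rw [e4] at h4
  have h5 : ENNReal.ofReal (K/δ) * volume S2 * volume S1 ≤ ENNReal.ofReal (36 * C * 6^n * 4^n) * (b * b) := by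
    calc _ ≤ _ := h2
      _ ≤ _ := h3
      _ ≤ ENNReal.ofReal (4 * (3*r)^2) * (ENNReal.ofReal (6^n) * b) * (ENNReal.ofReal (C / r^2) * (ENNReal.ofReal (4^n) * b)) := by
        gcongr
      _ = (ENNReal.ofReal (4 * (3*r)^2) * ENNReal.ofReal (6^n) * ENNReal.ofReal (C / r^2) * ENNReal.ofReal (4^n)) * (b * b) := by ring
      _ = _ := by
        rw [← ENNReal.ofReal_mul (by positivity), ← ENNReal.ofReal_mul (by positivity), ← ENNReal.ofReal_mul (by positivity)]
        congr 2
        field_simp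
        ring
  have h6 : (ENNReal.ofReal (K/δ) * b) * volume S2 ≤ (ENNReal.ofReal (K/δ) * b) * (ENNReal.ofReal δ * b) := by
    calc (ENNReal.ofReal (K/δ) * b) * volume S2 ≤ (ENNReal.ofReal (K/δ) * (ENNReal.ofReal D * volume S1)) * volume S2 := by
          gcongr
      _ = ENNReal.ofReal D * (ENNReal.ofReal (K/δ) * volume S2 * volume S1) := by ring
      _ ≤ ENNReal.ofReal D * (ENNReal.ofReal (36 * C * 6^n * 4^n) * (b * b)) := by gcongr
      _ = ENNReal.ofReal K * (b * b) := by rw [hK, ENNReal.ofReal_mul hD.le]; ring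
      _ = (ENNReal.ofReal (K/δ) * ENNReal.ofReal δ) * (b * b) := by
          rw [← ENNReal.ofReal_mul (by positivity)]; congr 2; field_simp
      _ = _ := by ring
  have hne : ENNReal.ofReal (K/δ) ≠ 0 := by
    rw [Ne, ENNReal.ofReal_eq_zero]; push Not; positivity
  exact (ENNReal.mul_le_mul_iff_right (mul_ne_zero hne hb0) (ENNReal.mul_ne_top ENNReal.ofReal_ne_top hbt)).1 h6

/-- finitely many supersolutions are simultaneously small somewhere -/
lemma simul_small {θ Θ : ℝ} (hθ : 0 < θ) (hΘ : 0 < Θ) {a : EE n → Matrix (Fin n) (Fin n) ℝ} (ha : Op n θ Θ a)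
    {κ : Type} [Fintype κ] (v : κ → EE n → ℝ) (hv : ∀ k, Sm (v k)) (hpos : ∀ k x, 0 ≤ v k x)
    (hL : ∀ k x, Lop a (v k) x ≤ 0)
    (hinf : ∀ k, ∀ ε > 0, ∃ p, v k p ≤ ε) {m : ℝ} (hm : 0 < m) :
    ∃ x, ∀ k, v k x < m := by
  set δ : ℝ := 1 / (Fintype.card κ + 1) with hδ
  have hδp : 0 < δ := by positivity
  choose p hp using fun k => small_density hθ hΘ ha (hv k) (hpos k) (hL k) (hinf k) hm hδp
  by_contra hcon
  push Not at hcon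
  set r : ℝ := 1 + ∑ k, ‖p k‖ with hr
  have hr0 : 0 < r := by
    have : 0 ≤ ∑ k, ‖p k‖ := Finset.sum_nonneg fun _ _ => norm_nonneg _
    linarith
  have hpk : ∀ k, ‖p k‖ ≤ r := fun k => by
    have := Finset.single_le_sum (f := fun k => ‖p k‖) (fun _ _ => norm_nonneg _) (Finset.mem_univ k)
    linarith
  have hsub : Metric.ball (0 : EE n) r ⊆ ⋃ k, ({x | m ≤ v k x} ∩ Metric.closedBall (p k) (3*r)) := by
    intro x hx
    obtain ⟨k, hk⟩ := hcon x
    refine Set.mem_iUnion.2 ⟨k, hk, ?_⟩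
    rw [Metric.mem_closedBall, dist_eq_norm]
    have h1 : ‖x‖ < r := by simpa using hx
    linarith [norm_sub_le x (p k), hpk k]
  have hvol : ∀ k, volume (Metric.ball (p k) r) = volume (Metric.ball (0 : EE n) r) := fun k => by
    rw [Measure.addHaar_ball_center]
  set b := volume (Metric.ball (0 : EE n) r) with hb
  have hb0 : b ≠ 0 := (Metric.measure_ball_pos volume 0 hr0).ne'
  have hbt : b ≠ ⊤ := measure_ball_lt_top.ne
  have h1 : b ≤ ENNReal.ofReal (Fintype.card κ * δ) * b := by
    calc b ≤ volume (⋃ k, ({x | m ≤ v k x} ∩ Metric.closedBall (p k) (3*r))) := measure_mono hsub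
      _ ≤ ∑ k, volume ({x | m ≤ v k x} ∩ Metric.closedBall (p k) (3*r)) := measure_iUnion_fintype_le _ _
      _ ≤ ∑ k : κ, ENNReal.ofReal δ * b := Finset.sum_le_sum fun k _ => by
          have := hp k r hr0
          rwa [hvol] at this
      _ = _ := by
          rw [Finset.sum_const, nsmul_eq_mul, ENNReal.ofReal_mul (by positivity), Finset.card_univ, mul_assoc]
          simp
  have h2 : ENNReal.ofReal (Fintype.card κ * δ) * b < 1 * b := by
    refine (ENNReal.mul_lt_mul_iff_left hb0 hbt).2 ?_
    rw [← ENNReal.ofReal_one]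
    rw [ENNReal.ofReal_lt_ofReal_iff one_pos, hδ, mul_one_div, div_lt_one (by positivity)]
    linarith
  rw [one_mul] at h2
  exact absurd h1 (not_le.2 h2)
end
end

open scoped BigOperators
noncomputable section
section
variable {n : ℕ}
open Matrix

lemma NT_sm {u : EE n → ℝ} (hu : Sm u) (k : ℕ) : ∀ i j, Sm (fun x => NT k (hm 1 u x) i j) := by
  have hH : ∀ i j, Sm (fun x => hm 1 u x i j) := fun i j => (hu.dd (fr 1 j)).dd (fr 1 i)
  induction k with
  | zero => intro i j; exact contDiff_const
  | succ k ih =>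
    have hmul : ∀ i j, Sm (fun x => (NT k (hm 1 u x) * hm 1 u x) i j) := by
      intro i j
      simp only [Matrix.mul_apply]
      exact ContDiff.sum fun l _ => (ih i l).mul' (hH l j)
    have htr : Sm (fun x => NS (k+1) (hm 1 u x)) := by
      simp only [NS_succ, Matrix.trace, Matrix.diag]
      exact (ContDiff.sum fun l _ => hmul l l).div_const _
    intro i j
    simp only [NT_succ, Matrix.sub_apply, Matrix.smul_apply, smul_eq_mul]
    exact ContDiff.sub (htr.mul' contDiff_const) (hmul i j)

lemma conj_entry (R : Matrix (Fin n) (Fin n) ℝ) (g : Fin n → ℝ) (i j : Fin n) :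
    (Rᵀ * diagonal g * R) i j = ∑ k, R k i * g k * R k j := by
  rw [Matrix.mul_apply]
  refine Finset.sum_congr rfl fun k _ => ?_
  rw [Matrix.mul_diagonal]; rfl

lemma qf_conj (R : Matrix (Fin n) (Fin n) ℝ) (g ξ : Fin n → ℝ) :
    qf (Rᵀ * diagonal g * R) ξ = ∑ k, g k * (∑ j, R k j * ξ j)^2 := by
  simp only [qf, conj_entry]
  have h3 : ∀ k, g k * (∑ j, R k j * ξ j)^2 = ∑ i, ∑ j, (R k i * g k * R k j) * ξ i * ξ j := by
    intro k
    rw [sq, Finset.sum_mul_sum, Finset.mul_sum]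
    refine Finset.sum_congr rfl fun i _ => ?_
    rw [Finset.mul_sum]
    exact Finset.sum_congr rfl fun j _ => by ring
  simp only [h3, Finset.sum_mul]
  rw [Finset.sum_comm]
  conv_rhs => rw [Finset.sum_comm]
  rw [Finset.sum_comm]
  refine Finset.sum_congr rfl fun i _ => ?_
  rw [Finset.sum_comm]

lemma NT_frame {R : Matrix (Fin n) (Fin n) ℝ} (hR : Rᵀ * R = 1) {u : EE n → ℝ} (hu : Sm u) {x : EE n}
    {l : Fin n → ℝ} (hl : hm R u x = diagonal l) (k : ℕ) :
    NT k (hm 1 u x) = Rᵀ * diagonal (fun i => es (Finset.univ.erase i) k l) * R := by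
  rw [← (NT_diag k l).1, ← hl, hm_conj R hu, NT_conj hR]
  calc _ = (Rᵀ * R) * NT k (hm 1 u x) * (Rᵀ * R) := by rw [hR]; simp
    _ = _ := by simp only [Matrix.mul_assoc]

lemma op_of_sol {k : ℕ} {A M : ℝ} {u : EE n → ℝ} (hu : Sol n k A u) (hM : 1 ≤ M)
    (hb : ∀ x (R : Matrix (Fin n) (Fin n) ℝ) (l : Fin n → ℝ), Rᵀ * R = 1 →
      hm R u x = diagonal l → ∀ i, |l i| ≤ M) :
    Op n (1 / (2 * (n+1) * M)) ((1 + M)^n) (fun x => NT k (hm 1 u x)) := by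
  have hM0 : 0 < M := by linarith
  refine ⟨NT_sm hu.sm k, ?_, ?_, ?_, ?_⟩
  · intro x i j
    have := congrFun (congrFun (NT_symm k _ (hm_symm 1 hu.sm x)) i) j
    exact this.symm
  · intro x ξ
    obtain ⟨R, l, h1, h2, h3, h4, _⟩ := hu.frame x
    rw [NT_frame h1 hu.sm h2, qf_conj, ← orth_sum_sq h1 ξ, Finset.mul_sum]
    refine Finset.sum_le_sum fun i _ => mul_le_mul_of_nonneg_right ?_ (sq_nonneg _)
    have := ellip_low h3 h4 hM0 (fun i _ => hb x R l h1 h2 i) (Finset.mem_univ i)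
    simpa using this
  · intro x ξ
    obtain ⟨R, l, h1, h2, h3, h4, _⟩ := hu.frame x
    rw [NT_frame h1 hu.sm h2, qf_conj, ← orth_sum_sq h1 ξ, Finset.mul_sum]
    refine Finset.sum_le_sum fun i _ => mul_le_mul_of_nonneg_right ?_ (sq_nonneg _)
    refine (le_abs_self _).trans ((es_abs_le _ k l M hM0.le (hb x R l h1 h2)).trans ?_)
    apply pow_le_pow_right₀ (by linarith)
    exact (Finset.card_le_univ _).trans (by simp)
  · intro x j
    have h1 : ∀ i, dd (fr 1 i) (fun x => NT k (hm 1 u x) i j) x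
        = dNT k (hm 1 u x) (hm 1 (dd (fr 1 i) u) x) i j := by
      intro i
      apply dd_eq_of_line (NT_sm hu.sm k i j)
      have := hasDerivAt_NT k (H := fun t : ℝ => hm 1 u (x + t • fr 1 i)) (t := 0)
        (fun a b => hm_line 1 hu.sm x (fr 1 i) 0 a b) i j
      simpa using this
    simp only [h1]
    apply dNT_div k _ (hm_herm 1 hu.sm x) (fun i => hm 1 (dd (fr 1 i) u) x)
    intro a b c
    simp only [hm]
    rw [dd_comm hu.sm (fr 1 c) (fr 1 a), dd_comm (hu.sm.dd _) (fr 1 b) (fr 1 a)]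

lemma Lop_sub {k : ℕ} {A : ℝ} {u : EE n → ℝ} (hu : Sol n k A u) (e x : EE n) :
    0 ≤ Lop (fun x => NT k (hm 1 u x)) (dd e (dd e u)) x := by
  obtain ⟨R, l, h1, h2, h3, h4, _⟩ := hu.frame x
  have hw : Sm (dd e (dd e u)) := (hu.sm.dd e).dd e
  have e1 : Lop (fun x => NT k (hm 1 u x)) (dd e (dd e u)) x
      = (NT k (hm R u x) * hm R (dd e (dd e u)) x).trace := by
    rw [hm_conj R hu.sm, hm_conj R hw, NT_conj h1, oconj_mul h1, oconj_trace h1]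
    simp only [Lop, Matrix.trace, Matrix.diag, Matrix.mul_apply]
    refine Finset.sum_congr rfl fun i _ => Finset.sum_congr rfl fun j _ => ?_
    rw [show hm 1 (dd e (dd e u)) x i j = hm 1 (dd e (dd e u)) x j i from
      congrFun (congrFun (hm_symm 1 hw x) j) i]
  rw [e1]
  obtain ⟨d1, d2⟩ := eqn_deriv h1 hu.sm k hu.eq x e
  rcases k with _ | m
  · rw [dNT_zero] at d2
    simp at d2
    rw [d2]
  · rw [h2] at d1 d2
    have h5 := second_order m l h3 _ _ (hm_symm R (hu.sm.dd e) x) d1 d2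
    have h6 : (NT (m+1) (hm R u x) * hm R (dd e (dd e u)) x).trace
        = ∑ i, es (Finset.univ.erase i) (m+1) l * hm R (dd e (dd e u)) x i i := by
      rw [h2, (NT_diag (m+1) l).1]
      simp [Matrix.trace, Matrix.diagonal_mul]
    rw [h6]
    refine le_trans (Finset.sum_nonneg fun i _ => Finset.sum_nonneg fun j hj => mul_nonneg ?_ (sq_nonneg _)) h5
    exact ((h3.erase (Finset.mem_univ i)).erase hj m le_rfl).le
end
end

open scoped BigOperators
noncomputable section
section
variable {n : ℕ}
open Matrix

/-- The matrix `E_ii`. -/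
def Eii (i : Fin n) : Matrix (Fin n) (Fin n) ℝ := diagonal (Pi.single i 1)

lemma mul_Eii (B : Matrix (Fin n) (Fin n) ℝ) (i a b : Fin n) :
    (B * Eii i) a b = if b = i then B a i else 0 := by
  rw [Eii, Matrix.mul_diagonal, Pi.single_apply]
  split_ifs with h
  · subst h; simp
  · simp

lemma trace_mul_Eii (B : Matrix (Fin n) (Fin n) ℝ) (i : Fin n) : (B * Eii i).trace = B i i := by
  simp [Matrix.trace, Matrix.diag, mul_Eii]

lemma Eii_herm (i : Fin n) : (Eii i).IsHermitian := by
  rw [Matrix.IsHermitian, Matrix.conjTranspose_eq_transpose_of_trivial, Eii, Matrix.diagonal_transpose]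

lemma add_Eii_herm {H : Matrix (Fin n) (Fin n) ℝ} (hH : H.IsHermitian) (t : ℝ) (i : Fin n) :
    (H + t • Eii i).IsHermitian := by
  have : (t • Eii i).IsHermitian := by
    rw [Matrix.IsHermitian, Matrix.conjTranspose_smul, (Eii_herm i).eq]; simp
  exact hH.add this

lemma dNT_row {H : Matrix (Fin n) (Fin n) ℝ} (hH : H.IsHermitian) (i : Fin n) (j : ℕ) :
    ∀ b, dNT j H (Eii i) i b = 0 := by
  induction j with
  | zero => intro b; rw [dNT_zero]; rfl
  | succ j ih =>
    intro b
    rw [dNT_succ, dNS_eq H _ hH, trace_mul_Eii]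
    have h0 : (dNT j H (Eii i) * H) i b = 0 := by
      rw [Matrix.mul_apply]
      exact Finset.sum_eq_zero fun l _ => by rw [ih l, zero_mul]
    simp only [Matrix.sub_apply, Matrix.add_apply, Matrix.smul_apply, smul_eq_mul, h0, mul_Eii,
      Matrix.one_apply]
    by_cases h : b = i
    · subst h; simp
    · simp [h, Ne.symm h]

lemma line_entry (H : Matrix (Fin n) (Fin n) ℝ) (i : Fin n) (t : ℝ) (a b : Fin n) :
    HasDerivAt (fun t : ℝ => (H + t • Eii i) a b) (Eii i a b) t := by
  simpa using ((hasDerivAt_id t).mul_const (Eii i a b)).const_add (H a b)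

lemma NT_line {H : Matrix (Fin n) (Fin n) ℝ} (hH : H.IsHermitian) (i : Fin n) (j : ℕ) (t : ℝ) :
    NT j (H + t • Eii i) i i = NT j H i i := by
  have h : ∀ t : ℝ, HasDerivAt (fun t : ℝ => NT j (H + t • Eii i) i i) 0 t := by
    intro t
    have := hasDerivAt_NT j (H := fun t : ℝ => H + t • Eii i) (t := t) (line_entry H i t) i i
    rwa [dNT_row (add_Eii_herm hH t i)] at this
  have := is_const_of_deriv_eq_zero (fun t => (h t).differentiableAt) (fun t => (h t).deriv) t 0
  simpa using this

lemma NS_line {H : Matrix (Fin n) (Fin n) ℝ} (hH : H.IsHermitian) (i : Fin n) (j : ℕ) (t : ℝ) :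
    NS (j+1) (H + t • Eii i) = NS (j+1) H + t * NT j H i i := by
  have h : ∀ t : ℝ, HasDerivAt (fun t : ℝ => NS (j+1) (H + t • Eii i) - t * NT j H i i) 0 t := by
    intro t
    have := hasDerivAt_NS (j+1) (H := fun t : ℝ => H + t • Eii i) (t := t) (line_entry H i t)
    rw [dNS_eq _ _ (add_Eii_herm hH t i), trace_mul_Eii, NT_line hH] at this
    exact (this.sub ((hasDerivAt_id t).mul_const (NT j H i i))).congr_deriv (by simp)
  have := is_const_of_deriv_eq_zero (fun t => (h t).differentiableAt) (fun t => (h t).deriv) t 0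
  simp at this
  linarith

/-- The Gårding cone for matrices. -/
structure Cn (n k : ℕ) (H : Matrix (Fin n) (Fin n) ℝ) : Prop where
  herm : H.IsHermitian
  pos : ∀ j ≤ k+1, 0 < NS j H

lemma Cn.NT_pos {k : ℕ} {H : Matrix (Fin n) (Fin n) ℝ} (h : Cn n k H) {j : ℕ} (hj : j ≤ k) (i : Fin n) :
    0 < NT j H i i := by
  obtain ⟨R, hR, hZR⟩ := spectral H h.herm
  set l := h.herm.eigenvalues
  have hG : Gam Finset.univ (k+1) l := fun j hj => by
    rw [← NS_eq_es H h.herm]; exact h.pos j hj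
  have hR' : R * Rᵀ = 1 := mul_eq_one_comm.1 hR
  have e : NT j H i i = ∑ m, es (Finset.univ.erase m) j l * R i m ^ 2 := by
    conv_lhs => rw [hZR]
    rw [NT_conj hR, (NT_diag j l).1, Matrix.mul_apply]
    refine Finset.sum_congr rfl fun m _ => ?_
    rw [Matrix.mul_diagonal, Matrix.transpose_apply]; ring
  have hp : ∀ m, 0 < es (Finset.univ.erase m) j l := fun m =>
    (hG.erase (Finset.mem_univ m)) j hj
  have h1 : ∑ m, R i m ^ 2 = 1 := by
    have := congrFun (congrFun hR' i) i
    rw [Matrix.mul_apply, Matrix.one_apply_eq] at this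
    rw [← this]
    exact Finset.sum_congr rfl fun m _ => by rw [Matrix.transpose_apply]; ring
  rw [e]
  refine lt_of_le_of_ne (Finset.sum_nonneg fun m _ => mul_nonneg (hp m).le (sq_nonneg _)) fun h0 => ?_
  have h2 := (Finset.sum_eq_zero_iff_of_nonneg (fun m _ => mul_nonneg (hp m).le (sq_nonneg (R i m)))).1 h0.symm
  have h3 : ∑ m, R i m ^ 2 = 0 := Finset.sum_eq_zero fun m hm => by
    have := h2 m hm
    exact (mul_eq_zero.1 this).resolve_left (hp m).ne'
  linarith

lemma Cn.step {k : ℕ} {H : Matrix (Fin n) (Fin n) ℝ} (h : Cn n k H) (i : Fin n) {t : ℝ} (ht : 0 ≤ t) :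
    Cn n k (H + t • Eii i) := by
  refine ⟨add_Eii_herm h.herm t i, fun j hj => ?_⟩
  rcases j with _ | j
  · rw [NS_zero]; norm_num
  · rw [NS_line h.herm]
    have := h.pos (j+1) hj
    have := mul_nonneg ht (h.NT_pos (j := j) (by omega) i).le
    linarith

lemma Cn.sum {k : ℕ} {H : Matrix (Fin n) (Fin n) ℝ} (h : Cn n k H) (p : Fin n → ℝ) (hp : ∀ i, 0 ≤ p i)
    (s : Finset (Fin n)) : Cn n k (H + ∑ i ∈ s, p i • Eii i) ∧
      NS (k+1) H ≤ NS (k+1) (H + ∑ i ∈ s, p i • Eii i) := by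
  induction s using Finset.induction_on with
  | empty => simpa using h
  | insert a s ha ih =>
    rw [Finset.sum_insert ha, add_comm (p a • Eii a), ← add_assoc]
    refine ⟨ih.1.step a (hp a), ?_⟩
    rw [NS_line ih.1.herm]
    have := mul_nonneg (hp a) (ih.1.NT_pos le_rfl a).le
    linarith [ih.2]

lemma sum_Eii (p : Fin n → ℝ) : ∑ i, p i • Eii i = diagonal p := by
  ext a b
  rw [Matrix.sum_apply]
  simp only [Matrix.smul_apply, Eii, Matrix.diagonal_apply, Pi.single_apply, smul_eq_mul]
  by_cases h : a = b
  · subst h; simp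
  · simp [h]

lemma Cn.diag_rigid {k : ℕ} {H : Matrix (Fin n) (Fin n) ℝ} (h : Cn n k H) (p : Fin n → ℝ)
    (hp : ∀ i, 0 ≤ p i) (he : NS (k+1) (H + diagonal p) = NS (k+1) H) : p = 0 := by
  funext i
  by_contra hne
  have hpi : 0 < p i := lt_of_le_of_ne (hp i) (Ne.symm hne)
  have h2 := ((h.step i (hp i)).sum p hp (Finset.univ.erase i)).2
  rw [add_assoc, Finset.add_sum_erase _ (fun i => p i • Eii i) (Finset.mem_univ i), sum_Eii, he,
    NS_line h.herm] at h2
  have := mul_pos hpi (h.NT_pos le_rfl i)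
  linarith

lemma Cn.rigid {k : ℕ} {H Q : Matrix (Fin n) (Fin n) ℝ} (h : Cn n k H) (hQ : Q.IsHermitian)
    (hqf : ∀ ξ, 0 ≤ qf (Q - H) ξ) (he : NS (k+1) Q = NS (k+1) H) : H = Q := by
  have hP : (Q - H).IsHermitian := hQ.sub h.herm
  obtain ⟨R, hR, hZR⟩ := spectral (Q - H) hP
  set p := hP.eigenvalues
  have hR' : R * Rᵀ = 1 := mul_eq_one_comm.1 hR
  have hRt : Rᵀᵀ * Rᵀ = 1 := by rw [Matrix.transpose_transpose]; exact hR'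
  have hd : Rᵀ * (Q - H) * R = diagonal p := by
    conv_lhs => rw [hZR]
    calc _ = (Rᵀ * R) * diagonal p * (Rᵀ * R) := by simp only [Matrix.mul_assoc]
      _ = _ := by rw [hR]; simp
  have hp : ∀ i, 0 ≤ p i := by
    intro i
    have h2 := congrFun (congrFun hd i) i
    rw [diagonal_apply_eq] at h2
    have h3 : qf (Q - H) (fun a => R a i) = p i := by
      rw [← h2, Matrix.mul_apply, qf, Finset.sum_comm]
      refine Finset.sum_congr rfl fun j _ => ?_
      rw [Matrix.mul_apply, Finset.sum_mul]
      refine Finset.sum_congr rfl fun i _ => ?_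
      rw [Matrix.transpose_apply]; ring
    rw [← h3]; exact hqf _
  have hH' : Cn n k (Rᵀ * H * Rᵀᵀ) := by
    refine ⟨?_, fun j hj => ?_⟩
    · have := h.herm.eq
      rw [Matrix.conjTranspose_eq_transpose_of_trivial] at this
      rw [Matrix.IsHermitian, Matrix.conjTranspose_eq_transpose_of_trivial]
      simp only [Matrix.transpose_mul, Matrix.transpose_transpose, this, Matrix.mul_assoc]
    · rw [NS_conj hRt]; exact h.pos j hj
  have hs : Rᵀ * H * Rᵀᵀ + diagonal p = Rᵀ * Q * Rᵀᵀ := by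
    rw [← hd, Matrix.transpose_transpose]
    simp only [Matrix.mul_sub, Matrix.sub_mul]; abel
  have hp0 : p = 0 := hH'.diag_rigid p hp (by rw [hs, NS_conj hRt, NS_conj hRt, he])
  have : Q - H = 0 := by
    rw [hZR, hp0]; simp
  exact (sub_eq_zero.1 this).symm

lemma NTS_cont (k : ℕ) : Continuous (NT k : Matrix (Fin n) (Fin n) ℝ → _) := by
  induction k with
  | zero => exact continuous_const
  | succ k ih =>
    have h1 : Continuous (fun H : Matrix (Fin n) (Fin n) ℝ => NT k H * H) := ih.matrix_mul continuous_id
    have : (NT (k+1) : Matrix (Fin n) (Fin n) ℝ → _) =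
      fun H => ((NT k H * H).trace / (k+1)) • (1 : Matrix (Fin n) (Fin n) ℝ) - NT k H * H := by
      funext H; rw [NT_succ, NS_succ]
    rw [this]
    exact ((h1.matrix_trace.div_const _).smul continuous_const).sub h1

lemma NS_cont (k : ℕ) : Continuous (NS k : Matrix (Fin n) (Fin n) ℝ → ℝ) := by
  rcases k with _ | k
  · exact continuous_const
  · have h1 : Continuous (fun H : Matrix (Fin n) (Fin n) ℝ => NT k H * H) := (NTS_cont k).matrix_mul continuous_id
    exact h1.matrix_trace.div_const _
end
end

open scoped BigOperators
noncomputable section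
section
variable {n : ℕ}
open Matrix Filter Topology

lemma dd_dd_abs_le {M : ℝ} {u : EE n → ℝ} (hu : Sm u)
    (hb : ∀ x (R : Matrix (Fin n) (Fin n) ℝ) (l : Fin n → ℝ), Rᵀ * R = 1 →
      hm R u x = diagonal l → ∀ i, |l i| ≤ M) (e x : EE n) :
    dd e (dd e u) x ≤ M * ‖e‖^2 := by
  obtain ⟨R, l, h1, h2⟩ := eigenframe hu x
  rw [quad_crd h1 hu h2, ← crd_sum_sq h1 e, Finset.mul_sum]
  exact Finset.sum_le_sum fun i _ =>
    mul_le_mul_of_nonneg_right ((le_abs_self _).trans (hb x R l h1 h2 i)) (sq_nonneg _)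

lemma Lop_neg (a : EE n → Matrix (Fin n) (Fin n) ℝ) {w : EE n → ℝ} (hw : Sm w) (c : ℝ) (x : EE n) :
    Lop a (fun x => (-1) * w x + c) x = - Lop a w x := by
  have hw' : Sm (fun x => (-1) * w x) := contDiff_const.mul hw
  rw [Lop_add_const a hw']
  have h1 : ∀ {g : EE n → ℝ}, Sm g → ∀ e, dd e (fun x => (-1) * g x) = fun x => (-1) * dd e g x := by
    intro g hg e; funext x; exact dd_const_mul hg (-1) e x
  simp only [Lop, hm, ← Finset.sum_neg_distrib]
  refine Finset.sum_congr rfl fun i _ => Finset.sum_congr rfl fun j _ => ?_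
  rw [h1 hw, dd_const_mul (hw.dd _)]; ring

/-- Supremum of the pure second derivative. -/
def Mx (u : EE n → ℝ) (e : EE n) : ℝ := sSup (Set.range (dd e (dd e u)))

lemma simul_seq {k : ℕ} {A M : ℝ} {u : EE n → ℝ} (hu : Sol n k A u) (hM : 1 ≤ M)
    (hb : ∀ x (R : Matrix (Fin n) (Fin n) ℝ) (l : Fin n → ℝ), Rᵀ * R = 1 →
      hm R u x = diagonal l → ∀ i, |l i| ≤ M) {κ : Type} [Fintype κ] (d : κ → EE n) :
    ∃ z : ℕ → EE n, ∀ a, Tendsto (fun m => dd (d a) (dd (d a) u) (z m)) atTop (𝓝 (Mx u (d a))) := by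
  have hbd : ∀ e, BddAbove (Set.range (dd e (dd e u))) := fun e =>
    ⟨M * ‖e‖^2, by rintro _ ⟨x, rfl⟩; exact dd_dd_abs_le hu.sm hb e x⟩
  have hle : ∀ e x, dd e (dd e u) x ≤ Mx u e := fun e x => le_csSup (hbd e) ⟨x, rfl⟩
  have hM0 : 0 < M := by linarith
  have key : ∀ m : ℝ, 0 < m → ∃ x, ∀ a, (-1) * dd (d a) (dd (d a) u) x + Mx u (d a) < m := by
    intro m hm
    refine simul_small (by positivity) (by positivity) (op_of_sol hu hM hb)
      (fun a x => (-1) * dd (d a) (dd (d a) u) x + Mx u (d a)) ?_ ?_ ?_ ?_ hm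
    · intro a
      exact (contDiff_const.mul ((hu.sm.dd _).dd _)).add contDiff_const
    · intro a x
      have := hle (d a) x
      linarith
    · intro a x
      rw [Lop_neg _ ((hu.sm.dd _).dd _)]
      have := Lop_sub hu (d a) x
      linarith
    · intro a ε hε
      obtain ⟨_, ⟨p, rfl⟩, hp⟩ := exists_lt_of_lt_csSup (Set.range_nonempty (dd (d a) (dd (d a) u)))
        (show Mx u (d a) - ε < Mx u (d a) by linarith)
      exact ⟨p, by linarith⟩
  choose z hz using fun m : ℕ => key (1 / ((m:ℝ)+1)) (by positivity)
  refine ⟨z, fun a => ?_⟩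
  have h1 : Tendsto (fun m : ℕ => Mx u (d a) - 1 / ((m:ℝ)+1)) atTop (𝓝 (Mx u (d a) - 0)) :=
    tendsto_const_nhds.sub tendsto_one_div_add_atTop_nhds_zero_nat
  rw [sub_zero] at h1
  refine tendsto_of_tendsto_of_tendsto_of_le_of_le h1 tendsto_const_nhds (fun m => ?_) (fun m => hle _ _)
  have := hz m a
  simp only; linarith

lemma qf_hm {u : EE n → ℝ} (hu : Sm u) (e x : EE n) : dd e (dd e u) x = qf (hm 1 u x) (fun i => e i) := by
  rw [dd_dd_vec hu, qf]
  exact Finset.sum_congr rfl fun i _ => Finset.sum_congr rfl fun j _ => by ring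

def dij (a : Fin n × Fin n) : EE n := fr 1 a.1 + fr 1 a.2

lemma dij_polar {u : EE n → ℝ} (hu : Sm u) (i j : Fin n) (x : EE n) :
    hm 1 u x i j = (dd (dij (i,j)) (dd (dij (i,j)) u) x - dd (dij (i,i)) (dd (dij (i,i)) u) x / 4
      - dd (dij (j,j)) (dd (dij (j,j)) u) x / 4) / 2 := by
  have h1 : ∀ a b : EE n, dd (a + b) (dd (a + b) u) x = dd a (dd a u) x + 2 * dd a (dd b u) x + dd b (dd b u) x := by
    intro a b
    have hc : dd b (dd a u) x = dd a (dd b u) x := by rw [dd_comm hu]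
    rw [dd_dd_eq hu] at hc
    rw [dd_dd_eq hu (a+b)]
    simp only [map_add, ContinuousLinearMap.add_apply, hc]
    simp only [dd_dd_eq hu]
    ring
  simp only [dij, h1, hm]
  ring

/-- The limiting Hessian. -/
def Qm (u : EE n → ℝ) : Matrix (Fin n) (Fin n) ℝ := fun i j =>
  (Mx u (dij (i,j)) - Mx u (dij (i,i)) / 4 - Mx u (dij (j,j)) / 4) / 2

lemma Qm_symm (u : EE n → ℝ) (i j : Fin n) : Qm u i j = Qm u j i := by
  have : dij (i,j) = dij (j,i) := by simp only [dij]; rw [add_comm]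
  simp only [Qm, this]; ring

lemma Qm_props {k : ℕ} {A M : ℝ} {u : EE n → ℝ} (hu : Sol n k A u) (hM : 1 ≤ M)
    (hb : ∀ x (R : Matrix (Fin n) (Fin n) ℝ) (l : Fin n → ℝ), Rᵀ * R = 1 →
      hm R u x = diagonal l → ∀ i, |l i| ≤ M) (e : EE n) :
    NS (k+1) (Qm u) = 1 ∧ Mx u e = qf (Qm u) (fun i => e i) := by
  obtain ⟨z, hz⟩ := simul_seq hu hM hb (fun a : Option (Fin n × Fin n) => a.elim e dij)
  have hent : ∀ i j, Tendsto (fun m => hm 1 u (z m) i j) atTop (𝓝 (Qm u i j)) := by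
    intro i j
    simp only [dij_polar hu.sm i j]
    exact (((hz (some (i,j))).sub ((hz (some (i,i))).div_const 4)).sub ((hz (some (j,j))).div_const 4)).div_const 2
  have hH : Tendsto (fun m => hm 1 u (z m)) atTop (𝓝 (Qm u)) :=
    tendsto_pi_nhds.2 fun i => tendsto_pi_nhds.2 fun j => hent i j
  constructor
  · have h1 := ((NS_cont (k+1)).tendsto (Qm u)).comp hH
    have h2 : (NS (k+1) ∘ fun m => hm 1 u (z m)) = fun _ => (1:ℝ) := by
      funext m; exact hu.eq (z m)
    rw [h2] at h1
    exact tendsto_nhds_unique h1 tendsto_const_nhds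
  · have h1 := hz none
    simp only [Option.elim_none, qf_hm hu.sm] at h1
    refine tendsto_nhds_unique h1 ?_
    simp only [qf]
    exact tendsto_finsetSum _ fun i _ => tendsto_finsetSum _ fun j _ =>
      ((hent i j).mul_const _).mul_const _

lemma hess_const {k : ℕ} {A M : ℝ} {u : EE n → ℝ} (hu : Sol n k A u) (hM : 1 ≤ M)
    (hb : ∀ x (R : Matrix (Fin n) (Fin n) ℝ) (l : Fin n → ℝ), Rᵀ * R = 1 →
      hm R u x = diagonal l → ∀ i, |l i| ≤ M) (x : EE n) : hm 1 u x = Qm u := by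
  have hC : Cn n k (hm 1 u x) := ⟨hm_herm 1 hu.sm x, hu.pos x⟩
  have hQ : (Qm u).IsHermitian := by
    rw [Matrix.IsHermitian, Matrix.conjTranspose_eq_transpose_of_trivial]
    ext i j
    rw [Matrix.transpose_apply, Qm_symm]
  refine hC.rigid hQ (fun ξ => ?_) ?_
  · obtain ⟨e, rfl⟩ : ∃ e : EE n, (fun i => e i) = ξ := ⟨WithLp.toLp 2 ξ, rfl⟩
    have h1 : dd e (dd e u) x ≤ Mx u e := le_csSup
      ⟨M * ‖e‖^2, by rintro _ ⟨x, rfl⟩; exact dd_dd_abs_le hu.sm hb e x⟩ ⟨x, rfl⟩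
    rw [(Qm_props hu hM hb e).2, qf_hm hu.sm] at h1
    have : qf (Qm u - hm 1 u x) (fun i => e i) = qf (Qm u) (fun i => e i) - qf (hm 1 u x) (fun i => e i) := by
      simp only [qf, ← Finset.sum_sub_distrib, Matrix.sub_apply]
      exact Finset.sum_congr rfl fun i _ => Finset.sum_congr rfl fun j _ => by ring
    rw [this]; linarith
  · rw [hu.eq x, (Qm_props hu hM hb 0).1]

lemma quad_of_const {u : EE n → ℝ} (hu : Sm u) {Q : Matrix (Fin n) (Fin n) ℝ} (hQ : ∀ x, hm 1 u x = Q) :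
    IsQuadraticPolynomial u := by
  refine ⟨Q, fun i => dd (fr 1 i) u 0, u 0, ?_, fun x => ?_⟩
  · rw [← hQ 0]; exact hm_symm 1 hu 0
  have hqq : ∀ y, dd x (dd x u) y = qf Q (fun i => x i) := fun y => by rw [qf_hm hu, hQ]
  have h2 : ∀ t : ℝ, dd x u (0 + t • x) = dd x u 0 + t * qf Q (fun i => x i) := by
    intro t
    have hd : ∀ t : ℝ, HasDerivAt (fun t : ℝ => dd x u (0 + t • x) - t * qf Q (fun i => x i)) 0 t := by
      intro t
      refine ((dd_line (hu.dd x) 0 x t).sub ((hasDerivAt_id t).mul_const _)).congr_deriv ?_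
      rw [hqq]; simp
    have := is_const_of_deriv_eq_zero (fun t => (hd t).differentiableAt) (fun t => (hd t).deriv) t 0
    simp at this
    simp only [zero_add]
    linarith
  have h3 : ∀ t : ℝ, HasDerivAt (fun t : ℝ => u (0 + t • x) - t * dd x u 0 - t^2 * (qf Q (fun i => x i) / 2)) 0 t := by
    intro t
    refine (((dd_line hu 0 x t).sub ((hasDerivAt_id t).mul_const _)).sub
      ((hasDerivAt_pow 2 t).mul_const _)).congr_deriv ?_
    rw [h2]; simp; ring
  have h4 := is_const_of_deriv_eq_zero (fun t => (h3 t).differentiableAt) (fun t => (h3 t).deriv) 1 0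
  simp at h4
  have h5 : dd x u 0 = ∑ i, dd (fr 1 i) u 0 * x i := by
    rw [dd_vec]; exact Finset.sum_congr rfl fun i _ => by ring
  have h6 : qf Q (fun i => x i) = ∑ i, ∑ j, Q i j * x i * x j := rfl
  rw [← h5, ← h6]
  linarith

lemma hessianMatrix_eq {u : EE n → ℝ} (hu : Sm u) (x : EE n) : hessianMatrix u x = hm 1 u x := by
  ext i j
  simp only [hessianMatrix, hm]
  rw [iteratedFDeriv_two_apply, dd_dd_eq hu, fr_one, fr_one]
  simp

lemma esymmF_eq (k : ℕ) {u : EE n → ℝ} (hu : Sm u) (x : EE n) :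
    esymmF n k (hessEigen u x) = NS k (hm 1 u x) := by
  have h : (hessianMatrix u x).IsHermitian := by rw [hessianMatrix_eq hu]; exact hm_herm 1 hu x
  rw [hessEigen, dif_pos h, ← hessianMatrix_eq hu, NS_eq_es _ h, es_eq_sum]
  rfl
end
end


/-- **Liouville theorem for the `k`-Hessian equation (weak version of `(k+1)`-convexity).**
A smooth entire `k`-convex solution of `σ_k(D²u) = 1` with quadratic growth satisfying
`σ_{k+1}(D²u) ≥ −A` for a uniform constant `A > 0` is a quadratic polynomial. -/
theorem liouville_k_hessian_lower_bound (n k : ℕ) (hn : 2 ≤ n) (hk1 : 1 ≤ k) (hk2 : k ≤ n - 1)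
    (u : EuclideanSpace ℝ (Fin n) → ℝ) (hu : ContDiff ℝ (⊤ : ℕ∞) u)
    (hadm : ∀ x, hessEigen u x ∈ GammaK n k)
    (heq : ∀ x, esymmF n k (hessEigen u x) = 1)
    (hquad : QuadraticGrowth u)
    (A : ℝ) (hA : 0 < A)
    (hsig : ∀ x, -A ≤ esymmF n (k + 1) (hessEigen u x)) :
    IsQuadraticPolynomial u := by
  obtain ⟨m, rfl⟩ : ∃ m, k = m + 1 := ⟨k - 1, by omega⟩
  have hS : Sol n m A u := by
    refine ⟨hu, fun x j hj => ?_, fun x => ?_, fun x => ?_⟩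
    · rcases j with _ | j
      · rw [NS_zero]; norm_num
      · rw [← esymmF_eq _ hu]
        exact hadm x (j+1) (by omega) hj
    · rw [← esymmF_eq _ hu]; exact heq x
    · rw [← esymmF_eq _ hu]; exact hsig x
  obtain ⟨M, hM, hb⟩ := eig_bound (by omega) hA hS hquad
  exact quad_of_const hu (fun x => hess_const hS hM hb x)
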